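/- Let r₁ = (0¹²; 1, ω²) and r₂ = (0¹²; 1, −ω) in L = Λ ⊕ H, let λ₁,…,λ₂₄ be a ℤ-basis of the complex Leech lattice Λ, and for each j choose z_j so that T_{λ_j, z_j} ∈ 𝕋. Then the ω-reflections in the 50 roots r₁, r₂, T_{λ_j,z_j}(r₁), T_{λ_j,z_j}(r₂) (j = 1,…,24) generate the reflection group R(L). -/

import Mathlib

noncomputable section

open ComplexConjugate

namespace Bimonster

/-- The primitive cube root of unity `ω = e^{2πi/3}`. -/
def ω : ℂ := Complex.exp (2 * (Real.pi : ℂ) * Complex.I / 3)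

/-- `θ = ω - ω̄ = √-3`. -/
def θ : ℂ := ω - conj ω

/-- `ξ = e^{-πi/6}`. -/
def ξ : ℂ := Complex.exp (-((Real.pi : ℂ) * Complex.I) / 6)

/-- Membership in the ring of Eisenstein integers `ℰ = ℤ[ω] ⊆ ℂ`. -/
def EisP (z : ℂ) : Prop := ∃ a b : ℤ, z = (a : ℂ) + (b : ℂ) * ω

/-- The units of the ring of Eisenstein integers. -/
def EisUnit (z : ℂ) : Prop :=
  z = 1 ∨ z = -1 ∨ z = ω ∨ z = -ω ∨ z = ω ^ 2 ∨ z = -ω ^ 2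

/-- A generator matrix of the ternary Golay code `𝒞₁₂ ⊆ 𝔽₃¹²`. -/
def golay : Fin 6 → Fin 12 → ℤ :=
  ![![1, 0, 0, 0, 0, 0, 0, 1, 1, 1, 1, 1],
    ![0, 1, 0, 0, 0, 0, -1, 0, 1, -1, -1, 1],
    ![0, 0, 1, 0, 0, 0, -1, 1, 0, 1, -1, -1],
    ![0, 0, 0, 1, 0, 0, -1, -1, 1, 0, 1, -1],
    ![0, 0, 0, 0, 1, 0, -1, -1, -1, 1, 0, 1],
    ![0, 0, 0, 0, 0, 1, -1, 1, -1, -1, 1, 0]]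

/-- The complex Leech lattice `Λ ⊆ ℰ¹²`: vectors `(m + θc_i + 3z_i)` with
`m ∈ {0, ±1}`, `(c_i)` in the ternary Golay code and `z_i ∈ ℰ` with
`Σ z_i ≡ m mod θ`. -/
def Leech : Set (Fin 12 → ℂ) :=
  {lam | ∃ (m : ℤ) (s : Fin 6 → ℤ) (za zb : Fin 12 → ℤ),
    (m = 0 ∨ m = 1 ∨ m = -1) ∧
    (∀ i, lam i = (m : ℂ) + θ * ((∑ j, golay j i * s j : ℤ) : ℂ) +
        3 * ((za i : ℂ) + (zb i : ℂ) * ω)) ∧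
    ∃ a b : ℤ, (∑ i, ((za i : ℂ) + (zb i : ℂ) * ω)) - (m : ℂ) = θ * ((a : ℂ) + (b : ℂ) * ω)}

/-- The underlying 14-dimensional complex vector space of `L = Λ ⊕ H`. -/
abbrev V : Type := Fin 14 → ℂ

/-- The Hermitian form of `L = Λ ⊕ H`: `⟨u,v⟩ = -(1/3)Σ ū_i v_i` on the twelve Leech
coordinates, and the hyperbolic cell with Gram matrix `[[0, θ̄], [θ, 0]]` on the last
two coordinates.  It is conjugate-linear in the first variable. -/
def herm (u v : V) : ℂ :=
  -(1 / 3) *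
      (∑ i : Fin 12, conj (u (Fin.castLE (by norm_num) i)) * v (Fin.castLE (by norm_num) i)) +
    conj (u 12) * conj θ * v 13 + conj (u 13) * θ * v 12

/-- The norm `⟨λ,λ⟩ = -(1/3)Σ |λ_i|²` of a vector of the complex Leech lattice. -/
def normL (lam : Fin 12 → ℂ) : ℂ := -(1 / 3) * ∑ i, conj (lam i) * lam i

/-- Assemble a vector `(λ; x, y)` of `Λ ⊕ H` from its Leech part and its two
hyperbolic coordinates. -/
def glue (lam : Fin 12 → ℂ) (x y : ℂ) : V := fun i =>
  if h : (i : ℕ) < 12 then lam ⟨(i : ℕ), h⟩ else if (i : ℕ) = 12 then x else y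

/-- The lattice `L = Λ ⊕ H` as a subset of `ℂ¹⁴`. -/
def Lset : Set V :=
  {v | (fun i : Fin 12 => v (Fin.castLE (by norm_num) i)) ∈ Leech ∧
    EisP (v 12) ∧ EisP (v 13)}

/-- A root of `L`: a primitive lattice vector of norm `-3`. -/
def IsRoot (r : V) : Prop :=
  r ∈ Lset ∧ herm r r = -3 ∧
    ∀ α : ℂ, EisP α → ∀ y ∈ Lset, r = α • y → EisUnit α

/-- The `μ`-reflection in a vector `r`: `v ↦ v − (1−μ)·r·⟨r,v⟩/|r|²`. -/
def reflMap (μ : ℂ) (r v : V) : V := v - ((1 - μ) * herm r v / herm r r) • r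

/-- The automorphism group of the lattice `L`. -/
def AutL : Subgroup (V ≃ₗ[ℂ] V) where
  carrier := {g | (∀ v : V, v ∈ Lset ↔ g v ∈ Lset) ∧ ∀ u v : V, herm (g u) (g v) = herm u v}
  one_mem' := ⟨fun _ => Iff.rfl, fun _ _ => rfl⟩
  mul_mem' := by
    rintro f g ⟨hf1, hf2⟩ ⟨hg1, hg2⟩
    refine ⟨fun v => ?_, fun u v => ?_⟩
    · exact (hg1 v).trans (hf1 (g v))
    · exact (hf2 (g u) (g v)).trans (hg2 u v)
  inv_mem' := by
    rintro g ⟨hg1, hg2⟩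
    refine ⟨fun v => ?_, fun u v => ?_⟩
    · have h := hg1 (g.symm v)
      have hv : g (g.symm v) = v := g.apply_symm_apply v
      rw [hv] at h
      exact h.symm
    · have h := hg2 (g.symm u) (g.symm v)
      have hu : g (g.symm u) = u := g.apply_symm_apply u
      have hv : g (g.symm v) = v := g.apply_symm_apply v
      rw [hu, hv] at h
      exact h.symm

/-- The set of elements of `Aut(L)` acting as the `ω`-reflection in some root in `S`. -/
def ReflAutos (S : Set V) : Set (V ≃ₗ[ℂ] V) :=
  {g | g ∈ AutL ∧ ∃ r ∈ S, ∀ v, g v = reflMap ω r v}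

/-- The reflection group `R(L)` of `L`. -/
def RL : Subgroup (V ≃ₗ[ℂ] V) := Subgroup.closure (ReflAutos {r | IsRoot r})

/-- Two roots are adjacent when `|⟨a,b⟩| = √3`. -/
def Adj (a b : V) : Prop := ‖herm a b‖ = Real.sqrt 3

/-- A set of roots is connected if its adjacency graph is connected. -/
def ConnectedSet (Φ : Set V) : Prop :=
  ∀ a ∈ Φ, ∀ b ∈ Φ, Relation.ReflTransGen (fun x y => x ∈ Φ ∧ y ∈ Φ ∧ Adj x y) a b

/-- `Rad Φ` is the radical of a set `Φ` of roots: the closure of `Φ` under reflecting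
members of the set in each other (and identification of unit multiples). -/
inductive Rad (Φ : Set V) : V → Prop
  | base {r : V} : r ∈ Φ → Rad Φ r
  | refl {a b : V} : Rad Φ a → Rad Φ b → Rad Φ (reflMap ω a b)
  | inv {a b : V} : Rad Φ a → Rad Φ b → Rad Φ (reflMap (conj ω) a b)
  | unit {u : ℂ} {r : V} : EisUnit u → Rad Φ r → Rad Φ (u • r)

/-- The translation `T_{λ,z}`, given by the block matrix
`[[I, λ, 0], [0, 1, 0], [θ⁻¹λ*, θ̄⁻¹(z − |λ|²/2), 1]]`, acting on `(μ; α, β)`. -/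
def Tmap (lam : Fin 12 → ℂ) (z : ℂ) (v : V) : V :=
  glue (fun i => v (Fin.castLE (by norm_num) i) + lam i * v 12) (v 12)
    (v 13 +
      θ⁻¹ * (-(1 / 3) *
        ∑ i : Fin 12, conj (lam i) * v (Fin.castLE (by norm_num) i)) +
      (conj θ)⁻¹ * (z - normL lam / 2) * v 12)

/-- Membership of `T_{λ,z}` in the Heisenberg group `𝕋` of translations:
`λ ∈ Λ`, `z = θα/2` with `α ∈ ℤ` and `α ≡ |λ|² (mod 2)`. -/
def memT (lam : Fin 12 → ℂ) (z : ℂ) : Prop :=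
  lam ∈ Leech ∧ ∃ α j t : ℤ, z = θ * (α : ℂ) / 2 ∧ normL lam = (j : ℂ) ∧ α - j = 2 * t

/-- The root `r₁ = (0¹²; 1, ω²)`. -/
def r1 : V := glue 0 1 (ω ^ 2)

/-- The root `r₂ = (0¹²; 1, -ω)`. -/
def r2 : V := glue 0 1 (-ω)

open MeasureTheory

section Poisson
variable {ι : Type*} [Fintype ι]

theorem poisson_box_integral (f : (ι → ℝ) → ℂ) (hf : Integrable f) :
    ∫ x, f x = ∑' m : ι → ℤ, ∫ x in {x : ι → ℝ | ∀ i, x i ∈ Set.Ioc (0:ℝ) 1},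
      f (x + fun i => (m i : ℝ)) := by
  classical
  let b : Module.Basis ι ℝ (ι → ℝ) := Pi.basisFun ℝ ι
  have hfd := ZSpan.isAddFundamentalDomain' b (volume : Measure (ι → ℝ))
  let e : (ι → ℤ) ≃ (Submodule.span ℤ (Set.range b)).toAddSubgroup :=
    (b.restrictScalars ℤ).equivFun.symm.toEquiv
  have : Countable (Submodule.span ℤ (Set.range b)).toAddSubgroup := e.symm.injective.countable
  rw [hfd.integral_eq_tsum'' f hf]
  rw [← e.tsum_eq]
  congr 1; ext m
  have he : ((e m : (Submodule.span ℤ (Set.range b)).toAddSubgroup) : ι → ℝ) = fun i => (m i : ℝ) := by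
    have h1 : e m = ∑ i, m i • (b.restrictScalars ℤ) i := Module.Basis.equivFun_symm_apply _ _
    rw [h1]
    ext i
    simp [b, Module.Basis.restrictScalars_apply, Finset.sum_apply, Pi.single_apply]
  have hs : (ZSpan.fundamentalDomain b : Set (ι → ℝ)) =ᵐ[volume] {x : ι → ℝ | ∀ i, x i ∈ Set.Ioc (0:ℝ) 1} := by
    have h1 := Measure.univ_pi_Ioc_ae_eq_Icc (μ := fun _ : ι => (volume : Measure ℝ)) (f := 0) (g := 1)
    have h2 := Measure.univ_pi_Ico_ae_eq_Icc (μ := fun _ : ι => (volume : Measure ℝ)) (f := 0) (g := 1)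
    have h3 := h2.trans h1.symm
    rw [← volume_pi] at h3
    have e1 : (ZSpan.fundamentalDomain b : Set (ι → ℝ)) =
        Set.univ.pi fun i => Set.Ico ((0 : ι → ℝ) i) ((1 : ι → ℝ) i) := by
      ext x; simp [ZSpan.mem_fundamentalDomain, b]
    have e2 : {x : ι → ℝ | ∀ i, x i ∈ Set.Ioc (0:ℝ) 1} =
        Set.univ.pi fun i => Set.Ioc ((0 : ι → ℝ) i) ((1 : ι → ℝ) i) := by
      ext x; simp
    rw [e1, e2]
    exact h3
  rw [setIntegral_congr_set hs]
  congr 1; ext x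
  rw [← he, add_comm]
  rfl

/-- Multidimensional Poisson summation. -/
theorem poisson (f : (ι → ℝ) → ℂ) (hc : Continuous f) (hi : Integrable f)
    (hu : ∀ R : ℝ, ∃ u : (ι → ℤ) → ℝ, Summable u ∧
      ∀ m (x : ι → ℝ), ‖x‖ ≤ R → ‖f (x + fun i => (m i : ℝ))‖ ≤ u m)
    (hs : Summable fun m : ι → ℤ =>
      ∫ x, Complex.exp (-(2 * Real.pi * Complex.I * ∑ i, (m i : ℂ) * (x i : ℂ))) * f x) :
    ∑' m : ι → ℤ, f (fun i => (m i : ℝ)) = ∑' m : ι → ℤ,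
      ∫ x, Complex.exp (-(2 * Real.pi * Complex.I * ∑ i, (m i : ℂ) * (x i : ℂ))) * f x := by
  classical
  let G : (ι → ℝ) → ℂ := fun x => ∑' m : ι → ℤ, f (x + fun i => (m i : ℝ))
  have hGc : Continuous G := by
    rw [continuous_iff_continuousAt]
    intro x
    obtain ⟨u, hu1, hu2⟩ := hu (‖x‖ + 1)
    have : ContinuousOn G (Metric.closedBall 0 (‖x‖ + 1)) := by
      refine continuousOn_tsum (u := u) (fun m => ?_) hu1 (fun m y hy => hu2 m y (by simpa using hy))
      exact (hc.comp (by fun_prop)).continuousOn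
    refine this.continuousAt ?_
    refine Filter.mem_of_superset (Metric.isOpen_ball.mem_nhds ?_) Metric.ball_subset_closedBall
    simp
  have hGp : ∀ (x : ι → ℝ) (k : ι → ℤ), G (x + fun i => (k i : ℝ)) = G x := by
    intro x k
    change ∑' m : ι → ℤ, f (x + (fun i => (k i : ℝ)) + fun i => (m i : ℝ)) = ∑' m : ι → ℤ, f (x + fun i => (m i : ℝ))
    rw [← (Equiv.addLeft k).tsum_eq (fun m : ι → ℤ => f (x + fun i => (m i : ℝ)))]
    congr 1; ext m; congr 1; ext i; simp [add_assoc]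
  let p : (ι → ℝ) → UnitAddTorus ι := Pi.map (fun _ => ((↑) : ℝ → UnitAddCircle))
  have hp : IsOpenQuotientMap p := IsOpenQuotientMap.piMap (fun _ => QuotientAddGroup.isOpenQuotientMap_mk)
  let s : UnitAddTorus ι → (ι → ℝ) := Function.surjInv hp.surjective
  have hps : ∀ t, p (s t) = t := Function.surjInv_eq hp.surjective
  have hGs : ∀ x, G (s (p x)) = G x := by
    intro x
    have h := hps (p x)
    have : ∀ i, ∃ k : ℤ, s (p x) i = x i + k := by
      intro i
      have h1 := congrFun h i
      have h2 : ((s (p x) i : ℝ) : UnitAddCircle) = (x i : UnitAddCircle) := h1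
      rw [← sub_eq_zero, ← AddCircle.coe_sub, AddCircle.coe_eq_zero_iff] at h2
      obtain ⟨n, hn⟩ := h2
      exact ⟨n, by rw [zsmul_eq_mul, mul_one] at hn; linarith⟩
    choose k hk using this
    rw [← hGp x k]
    congr 1; ext i; exact hk i
  let F : C(UnitAddTorus ι, ℂ) := ⟨fun t => G (s t), by
    rw [hp.isQuotientMap.continuous_iff]
    convert hGc using 1
    ext x; exact hGs x⟩
  have hF : ∀ x, F (p x) = G x := hGs
  have hexp : ∀ (m : ι → ℤ) (x : ι → ℝ), UnitAddTorus.mFourier (-m) (p x) =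
      Complex.exp (-(2 * Real.pi * Complex.I * ∑ i, (m i : ℂ) * (x i : ℂ))) := by
    intro m x
    simp only [UnitAddTorus.mFourier, ContinuousMap.coe_mk, p, Pi.map, fourier_coe_apply,
      ← Complex.exp_sum]
    congr 1
    rw [Finset.mul_sum, ← Finset.sum_neg_distrib]
    refine Finset.sum_congr rfl fun i _ => ?_
    simp; ring
  have hcoef : ∀ m, UnitAddTorus.mFourierCoeff F m =
      ∫ x, Complex.exp (-(2 * Real.pi * Complex.I * ∑ i, (m i : ℂ) * (x i : ℂ))) * f x := by
    intro m
    have hEc : Continuous fun x : ι → ℝ =>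
        Complex.exp (-(2 * Real.pi * Complex.I * ∑ i, (m i : ℂ) * (x i : ℂ))) := by fun_prop
    have hnorm : ∀ x : ι → ℝ, ‖Complex.exp (-(2 * Real.pi * Complex.I * ∑ i, (m i : ℂ) * (x i : ℂ)))‖ = 1 := by
      intro x
      have : -(2 * Real.pi * Complex.I * ∑ i, (m i : ℂ) * (x i : ℂ)) =
        ((-(2 * Real.pi * ∑ i, (m i : ℝ) * (x i : ℝ)) : ℝ) : ℂ) * Complex.I := by
        push_cast; ring
      rw [this, Complex.norm_exp_ofReal_mul_I]
    rw [UnitAddTorus.mFourierCoeff_eq_integral _ m 0,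
      poisson_box_integral _ (hi.bdd_mul (c := 1) hEc.aestronglyMeasurable (by simp [hnorm]))]
    obtain ⟨u, hu1, hu2⟩ := hu 1
    have hbox : {x : ι → ℝ | ∀ i, x i ∈ Set.Ioc ((0 : ι → ℝ) i) ((0 : ι → ℝ) i + 1)} =
        {x : ι → ℝ | ∀ i, x i ∈ Set.Ioc (0:ℝ) 1} := by simp
    rw [hbox]
    have hmeas : MeasurableSet {x : ι → ℝ | ∀ i, x i ∈ Set.Ioc (0:ℝ) 1} := by
      have : {x : ι → ℝ | ∀ i, x i ∈ Set.Ioc (0:ℝ) 1} = Set.univ.pi fun _ => Set.Ioc (0:ℝ) 1 := by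
        ext x; simp
      rw [this]
      exact MeasurableSet.univ_pi fun _ => measurableSet_Ioc
    have hn1 : ∀ x ∈ {x : ι → ℝ | ∀ i, x i ∈ Set.Ioc (0:ℝ) 1}, ‖x‖ ≤ 1 := by
      intro x hx
      rw [pi_norm_le_iff_of_nonneg zero_le_one]
      intro i
      rw [Real.norm_eq_abs, abs_le]
      exact ⟨by linarith [(hx i).1], (hx i).2⟩
    have hfin : volume {x : ι → ℝ | ∀ i, x i ∈ Set.Ioc (0:ℝ) 1} ≠ ⊤ := by
      refine ((Metric.isBounded_closedBall (x := (0 : ι → ℝ)) (r := 1)).subset ?_).measure_lt_top.ne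
      intro x hx; simpa using hn1 x hx
    have hper : ∀ (k : ι → ℤ) (x : ι → ℝ),
        Complex.exp (-(2 * Real.pi * Complex.I * ∑ i, (m i : ℂ) * ((x + fun i => (k i : ℝ)) i : ℂ))) =
        Complex.exp (-(2 * Real.pi * Complex.I * ∑ i, (m i : ℂ) * (x i : ℂ))) := by
      intro k x
      rw [Complex.exp_eq_exp_iff_exists_int]
      refine ⟨-∑ i, m i * k i, ?_⟩
      simp only [Pi.add_apply, Complex.ofReal_add, Complex.ofReal_intCast, mul_add,
        Finset.sum_add_distrib]
      push_cast; ring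
    have hrw : ∀ x : ι → ℝ, (UnitAddTorus.mFourier (-m) fun i => (x i : UnitAddCircle)) •
        F (fun i => (x i : UnitAddCircle)) = ∑' k : ι → ℤ,
        Complex.exp (-(2 * Real.pi * Complex.I * ∑ i, (m i : ℂ) * ((x + fun i => (k i : ℝ)) i : ℂ))) *
          f (x + fun i => (k i : ℝ)) := by
      intro x
      have e1 := hexp m x
      have e2 := hF x
      change UnitAddTorus.mFourier (-m) (p x) • F (p x) = _
      rw [e1, e2, smul_eq_mul, ← tsum_mul_left]
      simp_rw [hper]
    simp_rw [hrw]
    refine (integral_tsum_of_summable_integral_norm (fun k => ?_) ?_).symm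
    · refine Integrable.mono' (g := fun _ => u k) (integrableOn_const hfin) ?_ ?_
      · refine Continuous.aestronglyMeasurable ?_
        exact (hEc.mul hc).comp (by fun_prop)
      · refine (ae_restrict_iff' hmeas).2 (Filter.Eventually.of_forall fun x hx => ?_)
        rw [norm_mul, hnorm, one_mul]
        exact hu2 k x (hn1 x hx)
    · refine Summable.of_nonneg_of_le (fun k => integral_nonneg fun x => norm_nonneg _) (fun k => ?_)
        (hu1.mul_right (volume.real {x : ι → ℝ | ∀ i, x i ∈ Set.Ioc (0:ℝ) 1}))
      have := norm_setIntegral_le_of_norm_le_const (f := fun x => ‖Complex.exp (-(2 * Real.pi * Complex.I * ∑ i, (m i : ℂ) * ((x + fun i => (k i : ℝ)) i : ℂ))) *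
          f (x + fun i => (k i : ℝ))‖) (C := u k) (s := {x : ι → ℝ | ∀ i, x i ∈ Set.Ioc (0:ℝ) 1}) (μ := volume) (lt_top_iff_ne_top.2 hfin) (fun x hx => by
            rw [norm_norm, norm_mul, hnorm, one_mul]
            exact hu2 k x (hn1 x hx))
      exact (le_abs_self _).trans this
  have hsF : Summable (UnitAddTorus.mFourierCoeff F) := by
    convert hs using 1
    ext m; exact hcoef m
  have h0 := (UnitAddTorus.hasSum_mFourier_series_apply_of_summable hsF (p 0)).tsum_eq
  rw [hF 0] at h0
  have : G 0 = ∑' m : ι → ℤ, f (fun i => (m i : ℝ)) := by simp [G]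
  rw [← this, ← h0]
  congr 1; ext m
  have h1 := hexp (-m) 0
  rw [neg_neg] at h1
  rw [h1, hcoef]
  simp

end Poisson

open MeasureTheory

set_option linter.unusedSectionVars false
section EULattice
open scoped RealInnerProductSpace
variable {E : Type*} [NormedAddCommGroup E] [InnerProductSpace ℝ E]

/-- Even unimodular lattices. -/
structure EU (K : Submodule ℤ E) : Prop where
  even : ∀ x ∈ K, ∃ n : ℤ, ‖x‖ ^ 2 = 2 * n
  dual : ∀ x : E, (∀ y ∈ K, ∃ n : ℤ, ⟪x, y⟫ = n) → x ∈ K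

theorem EU.inner {K : Submodule ℤ E} (h : EU K) {x y : E} (hx : x ∈ K) (hy : y ∈ K) :
    ∃ n : ℤ, ⟪x, y⟫ = n := by
  obtain ⟨a, ha⟩ := h.even x hx
  obtain ⟨b, hb⟩ := h.even y hy
  obtain ⟨c, hc⟩ := h.even (x + y) (K.add_mem hx hy)
  have := norm_add_sq_real x y
  exact ⟨c - a - b, by push_cast; linarith⟩

theorem EU.two_le {K : Submodule ℤ E} (h : EU K) {x : E} (hx : x ∈ K) (h0 : x ≠ 0) :
    2 ≤ ‖x‖ ^ 2 := by
  obtain ⟨a, ha⟩ := h.even x hx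
  have h1 : 0 < ‖x‖ ^ 2 := by positivity
  have h2 : (0 : ℝ) < a := by linarith
  have h3 : (1 : ℤ) ≤ a := by exact_mod_cast h2
  have h4 : (1 : ℝ) ≤ a := by exact_mod_cast h3
  linarith

theorem EU.discrete {K : Submodule ℤ E} (h : EU K) : DiscreteTopology K := by
  refine DiscreteTopology.of_forall_le_dist (r := 1) one_pos ?_
  intro x y hxy
  have h1 : ((x : E) - y) ∈ K := K.sub_mem x.2 y.2
  have h2 := h.two_le h1 (by rw [sub_ne_zero]; exact fun h => hxy (Subtype.ext h))
  rw [Subtype.dist_eq, dist_eq_norm]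
  nlinarith [norm_nonneg ((x : E) - y)]

variable [FiniteDimensional ℝ E]

theorem EU.isZLattice {K : Submodule ℤ E} [DiscreteTopology K] (h : EU K) : IsZLattice ℝ K := by
  refine ⟨?_⟩
  by_contra hne
  have h1 : (Submodule.span ℝ (K : Set E))ᗮ ≠ ⊥ := by
    intro h2
    exact hne (Submodule.orthogonal_eq_bot_iff.1 h2)
  obtain ⟨x, hx, hx0⟩ := Submodule.exists_mem_ne_zero_of_ne_bot h1
  have hmem : ∀ t : ℝ, t • x ∈ K := by
    intro t
    refine h.dual _ fun y hy => ⟨0, ?_⟩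
    have := (Submodule.mem_orthogonal _ _).1 hx y (Submodule.subset_span hy)
    rw [real_inner_smul_left, real_inner_comm, this]; simp
  have hn : 0 < ‖x‖ := norm_pos_iff.2 hx0
  have h2 := h.two_le (hmem (1 / ‖x‖)) (by simp [hx0])
  rw [norm_smul] at h2
  simp [hn.ne'] at h2

theorem EU.summable_decay {K : Submodule ℤ E} (h : EU K) :
    Summable fun k : K => ((1 + ‖(k : E)‖) ^ (Module.finrank ℝ E + 1))⁻¹ := by
  have := h.discrete
  have := h.isZLattice
  refine Summable.of_norm_bounded_eventually (ZLattice.summable_norm_pow_inv K (Module.finrank ℝ E + 1)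
    (by rw [ZLattice.rank ℝ K]; exact Nat.lt_succ_self _)) ?_
  have : ∀ᶠ k : K in Filter.cofinite, k ≠ 0 := by
    simp [Filter.eventually_cofinite]
  filter_upwards [this] with k hk
  have hk' : 0 < ‖(k : E)‖ := by simpa using hk
  rw [norm_inv, Real.norm_of_nonneg (by positivity), inv_pow]
  gcongr
  · simp
  
variable [MeasurableSpace E] [BorelSpace E]

/-- The Fourier transform. -/
def FT (f : E → ℂ) (w : E) : ℂ := ∫ v, Complex.exp (-(2 * Real.pi * Complex.I * (⟪w, v⟫ : ℝ))) * f v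

theorem decay_shift (x m : E) (R : ℝ) (hx : ‖x‖ ≤ R) (d : ℕ) :
    ((1 + ‖x + m‖) ^ d)⁻¹ ≤ (1 + R) ^ d * ((1 + ‖m‖) ^ d)⁻¹ := by
  have hR : 0 ≤ R := (norm_nonneg x).trans hx
  rw [inv_le_iff_one_le_mul₀ (by positivity), mul_assoc, mul_comm, mul_assoc]
  rw [inv_mul_eq_div, one_le_div (by positivity), ← mul_pow]
  gcongr
  have h1 : ‖m‖ ≤ ‖x + m‖ + ‖x‖ := by
    have := norm_sub_le (x + m) x
    simpa using this
  nlinarith [norm_nonneg (x + m)]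

theorem EU.poisson {K : Submodule ℤ E} (h : EU K) : ∃ c : ℂ, ∀ f : E → ℂ, Continuous f →
    (∃ C, ∀ v, ‖f v‖ ≤ C * ((1 + ‖v‖) ^ (Module.finrank ℝ E + 1))⁻¹) →
    (∃ C, ∀ v, ‖FT f v‖ ≤ C * ((1 + ‖v‖) ^ (Module.finrank ℝ E + 1))⁻¹) →
    ∑' k : K, f k = c * ∑' k : K, FT f k := by
  have := h.discrete
  have := h.isZLattice
  let b := Module.Free.chooseBasis ℤ K
  let ι := Module.Free.ChooseBasisIndex ℤ K
  let B : Module.Basis ι ℝ E := b.ofZLatticeBasis ℝ K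
  let φ : (ι → ℝ) ≃L[ℝ] E := B.equivFun.symm.toContinuousLinearEquiv
  let e : (ι → ℤ) ≃ K := b.equivFun.symm.toEquiv
  have hφ : ∀ x, φ x = ∑ i, x i • B i := fun x => B.equivFun_symm_apply x
  have hB : ∀ i, B i = b i := fun i => b.ofZLatticeBasis_apply ℝ K i
  have he : ∀ m : ι → ℤ, ((e m : K) : E) = φ (fun i => (m i : ℝ)) := by
    intro m
    have h1 : e m = ∑ i, m i • b i := b.equivFun_symm_apply m
    rw [h1, hφ]
    simp [hB, Int.cast_smul_eq_zsmul]
  -- dual bijection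
  have hd : ∀ m : ι → ℤ, ∃ k : K, ∀ i, ⟪(k : E), B i⟫ = m i := by
    intro m
    let ℓ : E →L[ℝ] ℝ := LinearMap.toContinuousLinearMap (B.constr ℝ (fun i => (m i : ℝ)))
    let w := (InnerProductSpace.toDual ℝ E).symm ℓ
    have hw : ∀ i, ⟪w, B i⟫ = m i := by
      intro i
      rw [InnerProductSpace.toDual_symm_apply]
      simp [ℓ]
    refine ⟨⟨w, h.dual w fun y hy => ?_⟩, hw⟩
    obtain ⟨n, hn⟩ := e.surjective ⟨y, hy⟩
    have : y = φ fun i => (n i : ℝ) := by rw [← he, hn]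
    rw [this, hφ, inner_sum]
    refine ⟨∑ i, n i * m i, ?_⟩
    push_cast
    refine Finset.sum_congr rfl fun i _ => ?_
    rw [real_inner_smul_right, hw]
  choose D hD using hd
  have hDb : Function.Bijective D := by
    constructor
    · intro m n hmn
      ext i
      have h1 := hD m i
      rw [hmn, hD n i] at h1
      exact_mod_cast h1.symm
    · intro k
      have : ∀ i, ∃ n : ℤ, ⟪(k : E), B i⟫ = n := by
        intro i
        rw [hB]
        exact h.inner k.2 (b i).2
      choose m hm using this
      refine ⟨m, ?_⟩
      have h0 : ((D m : E) - k) = 0 := by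
        refine InnerProductSpace.ext_inner_right_basis (𝕜 := ℝ) B fun i => ?_
        rw [inner_sub_left, hD, hm]; simp
      exact Subtype.ext (sub_eq_zero.1 h0)
  -- measure
  obtain ⟨c, hc⟩ : ∃ c : NNReal, Measure.map φ (volume : Measure (ι → ℝ)) = c • (volume : Measure E) := by
    have : (Measure.map φ (volume : Measure (ι → ℝ))).IsAddHaarMeasure :=
      φ.isAddHaarMeasure_map volume
    exact ⟨_, Measure.isAddLeftInvariant_eq_smul _ _⟩
  refine ⟨((c : ℝ) : ℂ), fun f hf hdec hdec' => ?_⟩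
  obtain ⟨C, hC⟩ := hdec
  obtain ⟨C', hC'⟩ := hdec'
  have hfi : Integrable f := by
    have h1 := integrable_one_add_norm (E := E) (μ := volume) (r := (Module.finrank ℝ E + 1 : ℕ)) (by
      push_cast; linarith)
    refine Integrable.mono' (h1.const_mul C) hf.aestronglyMeasurable
      (Filter.Eventually.of_forall fun v => ?_)
    refine (hC v).trans (le_of_eq ?_)
    rw [Real.rpow_neg (by positivity), Real.rpow_natCast]
  have hinteg : ∀ m : ι → ℤ, ∫ x, Complex.exp (-(2 * Real.pi * Complex.I * ∑ i, (m i : ℂ) * (x i : ℂ))) * f (φ x)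
      = c * FT f (D m) := by
    intro m
    have h1 : ∀ x, Complex.exp (-(2 * Real.pi * Complex.I * ∑ i, (m i : ℂ) * (x i : ℂ))) * f (φ x) =
        (fun v => Complex.exp (-(2 * Real.pi * Complex.I * (⟪(D m : E), v⟫ : ℝ))) * f v) (φ x) := by
      intro x
      simp only
      congr 4
      rw [hφ, inner_sum]
      push_cast
      refine Finset.sum_congr rfl fun i _ => ?_
      rw [real_inner_smul_right, hD]; push_cast; ring
    simp_rw [h1]
    have h2 := (φ.toHomeomorph.measurableEmbedding).integral_map (μ := volume)
      (fun v => Complex.exp (-(2 * Real.pi * Complex.I * (⟪(D m : E), v⟫ : ℝ))) * f v)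
    refine h2.symm.trans ?_
    change ∫ v, _ ∂(Measure.map φ (volume : Measure (ι → ℝ))) = _
    rw [hc, integral_smul_nnreal_measure, NNReal.smul_def, Complex.real_smul]
    rfl
  have hP := Bimonster.poisson (fun x => f (φ x)) (hf.comp φ.continuous) ?_ ?_ ?_
  · simp_rw [← he, hinteg] at hP
    rw [e.tsum_eq (fun k : K => f k), tsum_mul_left] at hP
    rw [hP]
    congr 1
    exact (Equiv.ofBijective D hDb).tsum_eq (fun k : K => FT f k)
  · have h2 : Integrable f (Measure.map φ (volume : Measure (ι → ℝ))) := by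
      rw [hc]; exact hfi.smul_measure_nnreal
    exact ((φ.toHomeomorph.measurableEmbedding).integrable_map_iff).1 h2
  · intro R
    obtain ⟨M, hM⟩ : ∃ M : ℝ, ∀ x : ι → ℝ, ‖x‖ ≤ R → ‖φ x‖ ≤ M := by
      refine ⟨‖(φ : (ι → ℝ) →L[ℝ] E)‖ * R, fun x hx => ?_⟩
      exact ((φ : (ι → ℝ) →L[ℝ] E).le_opNorm x).trans (by gcongr)
    have hC0 : 0 ≤ C := by
      have := (norm_nonneg _).trans (hC 0)
      simpa using this
    refine ⟨fun m => C * ((1 + M) ^ (Module.finrank ℝ E + 1) *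
      ((1 + ‖(e m : E)‖) ^ (Module.finrank ℝ E + 1))⁻¹), ?_, ?_⟩
    · refine Summable.mul_left _ (Summable.mul_left _ ?_)
      exact (e.summable_iff (f := fun k : K => ((1 + ‖(k : E)‖) ^ (Module.finrank ℝ E + 1))⁻¹)).2
        h.summable_decay
    · intro m x hx
      rw [map_add, ← he]
      refine (hC _).trans ?_
      refine mul_le_mul_of_nonneg_left ?_ hC0
      exact decay_shift _ _ _ (hM x hx) _
  · simp_rw [hinteg]
    refine Summable.mul_left _ ?_
    refine ((Equiv.ofBijective D hDb).summable_iff (f := fun k : K => FT f k)).2 ?_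
    exact Summable.of_norm_bounded (h.summable_decay.mul_left C') fun k => hC' k
end EULattice

open MeasureTheory
set_option linter.unusedSectionVars false

section Gauss
open scoped RealInnerProductSpace
variable {E : Type*} [NormedAddCommGroup E] [InnerProductSpace ℝ E] [FiniteDimensional ℝ E]
  [MeasurableSpace E] [BorelSpace E]

theorem exp_decay (a : ℝ) (ha : 0 < a) (n : ℕ) :
    ∃ C, 0 ≤ C ∧ ∀ t : ℝ, 0 ≤ t → Real.exp (-a * t ^ 2) ≤ C * ((1 + t) ^ n)⁻¹ := by
  refine ⟨n.factorial * Real.exp (1 + 1 / (4 * a)), by positivity, fun t ht => ?_⟩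
  rw [← div_eq_mul_inv, le_div_iff₀ (by positivity)]
  have h1 : (1 + t) ^ n ≤ n.factorial * Real.exp (1 + t) := by
    have := Real.pow_div_factorial_le_exp (1 + t) (by linarith) n
    rwa [div_le_iff₀ (by positivity), mul_comm] at this
  calc Real.exp (-a * t ^ 2) * (1 + t) ^ n ≤ Real.exp (-a * t ^ 2) * (n.factorial * Real.exp (1 + t)) := by gcongr
    _ = n.factorial * Real.exp (-a * t ^ 2 + (1 + t)) := by rw [Real.exp_add (-a * t ^ 2) (1 + t)]; ring
    _ ≤ _ := by
      refine mul_le_mul_of_nonneg_left (Real.exp_le_exp.2 ?_) (by positivity)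
      have : -a * t ^ 2 + (1 + t) = 1 + 1 / (4 * a) - a * (t - 1 / (2 * a)) ^ 2 := by field_simp; ring
      rw [this]
      have : 0 ≤ a * (t - 1 / (2 * a)) ^ 2 := by positivity
      linarith

/-- The Gaussian. -/
def gs (b : ℂ) (v : E) : ℂ := Complex.exp (-(Real.pi * b * (‖v‖ : ℂ) ^ 2))

theorem norm_gs (b : ℂ) (v : E) : ‖gs b v‖ = Real.exp (-(Real.pi * b.re) * ‖v‖ ^ 2) := by
  rw [gs, Complex.norm_exp]
  congr 1
  have : -(Real.pi * b * (‖v‖ : ℂ) ^ 2) = ((-(Real.pi * ‖v‖ ^ 2) : ℝ) : ℂ) * b := by push_cast; ring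
  rw [this, Complex.re_ofReal_mul]; ring

theorem continuous_gs (b : ℂ) : Continuous (gs b : E → ℂ) := by
  unfold gs; fun_prop

theorem gs_decay (P : E → ℂ) (hM : ∃ M, ∀ v, ‖P v‖ ≤ M * (1 + ‖v‖) ^ 3) (b : ℂ) (hb : 0 < b.re) (n : ℕ) :
    ∃ C, ∀ v, ‖P v * gs b v‖ ≤ C * ((1 + ‖v‖) ^ n)⁻¹ := by
  obtain ⟨M, hM⟩ := hM
  have hM0 : 0 ≤ M := by simpa using (norm_nonneg _).trans (hM 0)
  obtain ⟨C, hC0, hC⟩ := exp_decay (Real.pi * b.re) (by positivity) (n + 3)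
  refine ⟨M * C, fun v => ?_⟩
  rw [norm_mul, norm_gs]
  calc ‖P v‖ * Real.exp (-(Real.pi * b.re) * ‖v‖ ^ 2)
      ≤ (M * (1 + ‖v‖) ^ 3) * (C * ((1 + ‖v‖) ^ (n + 3))⁻¹) := by
        gcongr
        · exact hM v
        · exact hC _ (norm_nonneg _)
    _ = M * C * ((1 + ‖v‖) ^ n)⁻¹ := by
      rw [pow_add]; field_simp

theorem gs_integrable (P : E → ℂ) (hP : Continuous P) (hM : ∃ M, ∀ v, ‖P v‖ ≤ M * (1 + ‖v‖) ^ 3)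
    (b : ℂ) (hb : 0 < b.re) : Integrable fun v => P v * gs b v := by
  obtain ⟨C, hC⟩ := gs_decay P hM b hb (Module.finrank ℝ E + 1)
  have h1 := integrable_one_add_norm (E := E) (μ := volume) (r := (Module.finrank ℝ E + 1 : ℕ)) (by
      push_cast; linarith)
  refine Integrable.mono' (h1.const_mul C) (hP.mul (continuous_gs b)).aestronglyMeasurable
      (Filter.Eventually.of_forall fun v => ?_)
  refine (hC v).trans (le_of_eq ?_)
  rw [Real.rpow_neg (by positivity), Real.rpow_natCast]

theorem FT_hasDerivAt (f : E → ℂ) (hc : Continuous f) (hf : Integrable f)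
    (hf' : Integrable fun v => ‖v‖ * ‖f v‖) (w y : E) :
    HasDerivAt (fun s : ℝ => FT f (w + s • y))
      (-(2 * Real.pi * Complex.I) * FT (fun v => (⟪y, v⟫ : ℝ) * f v) w) 0 := by
  have key := hasDerivAt_integral_of_dominated_loc_of_deriv_le (μ := volume) (𝕜 := ℝ)
    (F := fun (s : ℝ) v => Complex.exp (-(2 * Real.pi * Complex.I * (⟪w + s • y, v⟫ : ℝ))) * f v)
    (F' := fun (s : ℝ) v => Complex.exp (-(2 * Real.pi * Complex.I * (⟪w + s • y, v⟫ : ℝ))) *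
      (-(2 * Real.pi * Complex.I * (⟪y, v⟫ : ℝ))) * f v)
    (x₀ := 0) (s := Set.univ) (bound := fun v => 2 * Real.pi * ‖y‖ * (‖v‖ * ‖f v‖)) Filter.univ_mem ?_ ?_ ?_ ?_ ?_ ?_
  · have h := key.2
    unfold FT
    have e : -(2 * Real.pi * Complex.I) * (∫ v, Complex.exp (-(2 * Real.pi * Complex.I * (⟪w, v⟫ : ℝ))) *
        ((⟪y, v⟫ : ℝ) * f v)) = ∫ v, Complex.exp (-(2 * Real.pi * Complex.I * (⟪w + (0 : ℝ) • y, v⟫ : ℝ))) *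
      (-(2 * Real.pi * Complex.I * (⟪y, v⟫ : ℝ))) * f v := by
      rw [← integral_const_mul]
      congr 1; ext v
      rw [zero_smul, add_zero]; ring
    rw [e]
    exact h
  · refine Filter.Eventually.of_forall fun s => Continuous.aestronglyMeasurable ?_
    fun_prop
  · refine hf.bdd_mul (c := 1) (Continuous.aestronglyMeasurable (by fun_prop)) ?_
    refine Filter.Eventually.of_forall fun v => ?_
    rw [Complex.norm_exp]; simp
  · exact Continuous.aestronglyMeasurable (by fun_prop)
  · refine Filter.Eventually.of_forall fun v s _ => ?_
    have e1 : ‖Complex.exp (-(2 * Real.pi * Complex.I * (⟪w + s • y, v⟫ : ℝ)))‖ = 1 := by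
      rw [Complex.norm_exp]; simp
    rw [norm_mul, norm_mul, e1, one_mul]
    have : ‖-(2 * Real.pi * Complex.I * ((⟪y, v⟫ : ℝ) : ℂ))‖ = 2 * Real.pi * |⟪y, v⟫| := by
      simp [abs_of_pos Real.pi_pos]
    rw [this]
    have := abs_real_inner_le_norm y v
    calc 2 * Real.pi * |⟪y, v⟫| * ‖f v‖ ≤ 2 * Real.pi * (‖y‖ * ‖v‖) * ‖f v‖ := by gcongr
      _ = _ := by ring
  · exact hf'.const_mul _
  · refine Filter.Eventually.of_forall fun v s _ => ?_
    refine HasDerivAt.mul_const ?_ _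
    refine HasDerivAt.cexp ?_
    have h1 : HasDerivAt (fun s : ℝ => ⟪w + s • y, v⟫) ⟪y, v⟫ s := by
      simp_rw [inner_add_left, real_inner_smul_left]
      simpa using ((hasDerivAt_id s).mul_const ⟪y, v⟫).const_add ⟪w, v⟫
    exact (h1.ofReal_comp.const_mul _).neg

/-- theta kernels of weight `w`. -/
def TK (P : E → ℂ) (w : ℕ) : Prop :=
  Continuous P ∧ (∃ M, ∀ v, ‖P v‖ ≤ M * (1 + ‖v‖) ^ 3) ∧ ∀ b : ℂ, 0 < b.re → ∀ x : E,
    FT (fun v => P v * gs b v) x = (Complex.I / b) ^ w * (P x * gs (1 / b) x)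

theorem TK_one (h24 : Module.finrank ℝ E = 24) : TK (fun _ : E => (1 : ℂ)) 12 := by
  refine ⟨continuous_const, ⟨1, fun v => by simp; exact one_le_pow₀ (by simp)⟩, fun b hb x => ?_⟩
  have hb0 : b ≠ 0 := fun h => by simp [h] at hb
  have h := GaussianFourier.integral_cexp_neg_mul_sq_norm_add (V := E) (b := Real.pi * b)
    (by rw [Complex.re_ofReal_mul]; positivity) (-(2 * Real.pi * Complex.I)) x
  rw [h24] at h
  unfold FT gs
  simp only [one_mul]
  have e1 : (Complex.I / b) ^ 12 = ((Real.pi : ℂ) / (Real.pi * b)) ^ (((24 : ℕ) : ℂ) / 2) := by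
    have : (((24 : ℕ) : ℂ) / 2) = ((12 : ℕ) : ℂ) := by norm_num
    rw [this, Complex.cpow_natCast, div_pow]
    have : Complex.I ^ 12 = 1 := by
      rw [show 12 = 4 * 3 from rfl, pow_mul, Complex.I_pow_four, one_pow]
    rw [this]
    have hpi : (Real.pi : ℂ) ≠ 0 := by exact_mod_cast Real.pi_ne_zero
    field_simp
  rw [e1]
  have e2 : (-(Real.pi * (1 / b) * (‖x‖ : ℂ) ^ 2)) =
     (-(2 * Real.pi * Complex.I)) ^ 2 * (‖x‖ : ℂ) ^ 2 / (4 * (Real.pi * b)) := by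
    have hpi : (Real.pi : ℂ) ≠ 0 := by exact_mod_cast Real.pi_ne_zero
    field_simp
    rw [Complex.I_sq]; ring
  rw [e2, ← h]
  congr 1; ext v
  rw [← Complex.exp_add]
  congr 1; ring

theorem hasDerivAt_gs (b : ℂ) (w y : E) : HasDerivAt (fun s : ℝ => gs b (w + s • y))
    (-(2 * Real.pi * b * (⟪w, y⟫ : ℝ)) * gs b w) 0 := by
  unfold gs
  have h1 : HasDerivAt (fun s : ℝ => ‖w + s • y‖ ^ 2) (2 * ⟪w, y⟫) 0 := by
    have : (fun s : ℝ => ‖w + s • y‖ ^ 2) = fun s => ‖w‖ ^ 2 + 2 * ⟪w, y⟫ * s + ‖y‖ ^ 2 * s ^ 2 := by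
      ext s
      rw [norm_add_sq_real, norm_smul, real_inner_smul_right, mul_pow, Real.norm_eq_abs, sq_abs]; ring
    rw [this]
    have h2 := (((hasDerivAt_id (0:ℝ)).const_mul (2 * ⟪w, y⟫)).const_add (‖w‖ ^ 2)).add
      (((hasDerivAt_id (0:ℝ)).pow 2).const_mul (‖y‖ ^ 2))
    have e : 2 * ⟪w, y⟫ = 2 * ⟪w, y⟫ * 1 + ‖y‖ ^ 2 * (((2 : ℕ) : ℝ) * (id 0) ^ (2 - 1) * 1) := by simp
    have h2' := h2.congr_deriv e.symm
    exact h2'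
  have h3 := ((h1.ofReal_comp.const_mul (Real.pi * b)).neg).cexp
  have e : -(2 * Real.pi * b * (⟪w, y⟫ : ℝ)) * Complex.exp (-(Real.pi * b * (‖w‖ : ℂ) ^ 2)) =
      Complex.exp (-(Real.pi * b * ((‖w + (0 : ℝ) • y‖ ^ 2 : ℝ) : ℂ))) * -(Real.pi * b * ((2 * ⟪w, y⟫ : ℝ) : ℂ)) := by
    rw [zero_smul, add_zero]; push_cast; ring
  rw [e]
  have e' : (fun s : ℝ => Complex.exp (-(Real.pi * b * (‖w + s • y‖ : ℂ) ^ 2))) =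
     fun s : ℝ => Complex.exp (-(Real.pi * b * ((‖w + s • y‖ ^ 2 : ℝ) : ℂ))) := by
    ext s; push_cast; rfl
  rw [e']
  exact h3

theorem TK_harm (h24 : Module.finrank ℝ E = 24) (y y' : E) (hy : ⟪y, y'⟫ = 0) :
    TK (fun v : E => ((⟪y, v⟫ * ⟪y', v⟫ : ℝ) : ℂ)) 14 := by
  have g1 : ∃ M, ∀ v : E, ‖((⟪y, v⟫ : ℝ) : ℂ)‖ ≤ M * (1 + ‖v‖) := by
    refine ⟨‖y‖, fun v => ?_⟩
    rw [Complex.norm_real]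
    refine (norm_inner_le_norm y v).trans ?_
    gcongr; linarith
  have g2 : ∀ (a : E) (v : E), ‖((⟪a, v⟫ : ℝ) : ℂ)‖ ≤ ‖a‖ * (1 + ‖v‖) := by
    intro a v
    rw [Complex.norm_real]
    refine (norm_inner_le_norm a v).trans ?_
    gcongr; linarith
  have hM1 : ∃ M, ∀ v : E, ‖((⟪y, v⟫ : ℝ) : ℂ)‖ ≤ M * (1 + ‖v‖) ^ 3 := by
    refine ⟨‖y‖, fun v => (g2 y v).trans ?_⟩
    gcongr
    exact le_self_pow₀ (by simp) (by norm_num)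
  have hM2 : ∃ M, ∀ v : E, ‖((⟪y, v⟫ * ⟪y', v⟫ : ℝ) : ℂ)‖ ≤ M * (1 + ‖v‖) ^ 3 := by
    refine ⟨‖y‖ * ‖y'‖, fun v => ?_⟩
    rw [Complex.ofReal_mul, norm_mul]
    calc _ ≤ (‖y‖ * (1 + ‖v‖)) * (‖y'‖ * (1 + ‖v‖)) := by gcongr <;> apply g2
      _ = (‖y‖ * ‖y'‖) * (1 + ‖v‖) ^ 2 := by ring
      _ ≤ _ := by
        gcongr
        · simp
        · norm_num
  refine ⟨by fun_prop, hM2, fun b hb x => ?_⟩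
  have hb0 : b ≠ 0 := fun h => by simp [h] at hb
  have hpi : (Real.pi : ℂ) ≠ 0 := by exact_mod_cast Real.pi_ne_zero
  have i0 : Integrable fun v : E => gs b v := by
    have := gs_integrable (fun _ : E => (1 : ℂ)) continuous_const ⟨1, fun v => by simp; exact one_le_pow₀ (by simp)⟩ b hb
    simpa using this
  have i1 : Integrable fun v : E => ‖v‖ * ‖gs b v‖ := by
    have := (gs_integrable (fun v : E => ((‖v‖ : ℝ) : ℂ)) (by fun_prop) ⟨1, fun v => by
      simp; exact (by linarith : ‖v‖ ≤ 1 + ‖v‖).trans (le_self_pow₀ (by simp) (by norm_num))⟩ b hb).norm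
    simpa using this
  have i2 : Integrable fun v : E => ((⟪y, v⟫ : ℝ) : ℂ) * gs b v := gs_integrable _ (by fun_prop) hM1 b hb
  have i3 : Integrable fun v : E => ‖v‖ * ‖((⟪y, v⟫ : ℝ) : ℂ) * gs b v‖ := by
    have := (gs_integrable (fun v : E => ((‖v‖ : ℝ) : ℂ) * ((⟪y, v⟫ : ℝ) : ℂ)) (by fun_prop) ⟨‖y‖, fun v => by
      rw [norm_mul]
      calc _ ≤ (1 + ‖v‖) * (‖y‖ * (1 + ‖v‖)) := by
            gcongr
            · simp
            · apply g2
        _ = ‖y‖ * (1 + ‖v‖) ^ 2 := by ring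
        _ ≤ _ := by
          gcongr
          · simp
          · norm_num⟩ b hb).norm
    refine this.congr (Filter.Eventually.of_forall fun v => ?_)
    simp [mul_assoc]
  have hFT0 : ∀ w, FT (fun v : E => gs b v) w = (Complex.I / b) ^ 12 * gs (1 / b) w := by
    intro w
    have := (TK_one h24).2.2 b hb w
    simpa using this
  have hFT1 : ∀ w, FT (fun v : E => ((⟪y, v⟫ : ℝ) : ℂ) * gs b v) w =
      (Complex.I / b) ^ 12 * (-Complex.I / b) * ((⟪w, y⟫ : ℝ) : ℂ) * gs (1 / b) w := by
    intro w
    have h1 := FT_hasDerivAt _ (continuous_gs b) i0 i1 w y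
    simp_rw [hFT0] at h1
    have h2 := h1.unique ((hasDerivAt_gs (1 / b) w y).const_mul ((Complex.I / b) ^ 12))
    have h3 : (-(2 * Real.pi * Complex.I)) ≠ 0 := by simp
    apply mul_left_cancel₀ h3
    rw [h2]
    linear_combination (-2 * Real.pi * (1 / b) * ((⟪w, y⟫ : ℝ) : ℂ) * gs (1 / b) w * (Complex.I / b) ^ 12) * (Complex.I_sq)
  have h1 := FT_hasDerivAt (fun v : E => ((⟪y, v⟫ : ℝ) : ℂ) * gs b v)
    ((by fun_prop : Continuous fun v : E => ((⟪y, v⟫ : ℝ) : ℂ)).mul (continuous_gs b)) i2 i3 x y'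
  simp_rw [hFT1] at h1
  have hin : HasDerivAt (fun s : ℝ => ((⟪x + s • y', y⟫ : ℝ) : ℂ)) 0 0 := by
    have : (fun s : ℝ => ((⟪x + s • y', y⟫ : ℝ) : ℂ)) = fun _ => ((⟪x, y⟫ : ℝ) : ℂ) := by
      ext s
      rw [inner_add_left, real_inner_smul_left, real_inner_comm y y', hy]; simp
    rw [this]
    exact hasDerivAt_const _ _
  have h2 := h1.unique ((hin.const_mul ((Complex.I / b) ^ 12 * (-Complex.I / b))).mul (hasDerivAt_gs (1 / b) x y'))
  have h3 : (-(2 * Real.pi * Complex.I)) ≠ 0 := by simp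
  apply mul_left_cancel₀ h3
  have e : (fun v : E => ((⟪y, v⟫ * ⟪y', v⟫ : ℝ) : ℂ) * gs b v) =
      fun v : E => ((⟪y', v⟫ : ℝ) : ℂ) * (((⟪y, v⟫ : ℝ) : ℂ) * gs b v) := by
    ext v; push_cast; ring
  rw [e, h2]
  simp only [zero_smul, add_zero, mul_zero, zero_mul, zero_add]
  rw [real_inner_comm x y, real_inner_comm x y']
  push_cast
  field_simp
  linear_combination (((⟪x, y⟫ : ℝ) : ℂ) * ((⟪x, y'⟫ : ℝ) : ℂ) * gs (1 / b) x) * Complex.I_sq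
end Gauss

open MeasureTheory
set_option linter.unusedSectionVars false

section MF
open UpperHalfPlane hiding I
open Complex ModularForm MatrixGroups
open scoped Manifold

local notation "𝕢" => Function.Periodic.qParam

theorem mk_holo {f : ℍ → ℂ} {a : ℕ → ℂ}
    (hf : ∀ τ : ℍ, HasSum (fun m ↦ a m • 𝕢 1 τ ^ m) (f τ)) : MDiff f := by
  rw [UpperHalfPlane.mdifferentiable_iff]
  intro z hz
  have hz' : 0 < z.im := hz
  have key : DifferentiableOn ℂ (fun w : ℂ => ∑' m, a m • 𝕢 1 w ^ m) {w : ℂ | z.im / 2 < w.im} := by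
    let τ0 : ℍ := ⟨((z.im / 2 : ℝ) : ℂ) * Complex.I, by simp [hz']⟩
    refine Complex.differentiableOn_tsum_of_summable_norm (u := fun m => ‖a m • 𝕢 1 τ0 ^ m‖)
      (hf τ0).summable.norm ?_ (isOpen_lt continuous_const Complex.continuous_im) ?_
    · intro m
      have : Differentiable ℂ (fun w : ℂ => 𝕢 1 w) := by
        unfold Function.Periodic.qParam
        fun_prop
      exact ((this.pow m).const_smul (a m)).differentiableOn
    · intro m w hw
      simp only [norm_smul, norm_pow, Function.Periodic.norm_qParam]
      simp only [Set.mem_ofPred_eq] at hw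
      have : (τ0 : ℂ).im = z.im / 2 := by simp [τ0]
      rw [this]
      have := Real.pi_pos
      have h3 : Real.exp (-2 * Real.pi * w.im / 1) ≤ Real.exp (-2 * Real.pi * (z.im / 2) / 1) := by
        apply Real.exp_le_exp.2
        nlinarith
      gcongr
  have h1 : DifferentiableAt ℂ (fun w : ℂ => ∑' m, a m • 𝕢 1 w ^ m) z :=
    key.differentiableAt ((isOpen_lt continuous_const Complex.continuous_im).mem_nhds
      (by simp only [Set.mem_ofPred_eq]; linarith))
  refine (h1.congr_of_eventuallyEq ?_).differentiableWithinAt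
  filter_upwards [isOpen_upperHalfPlaneSet.mem_nhds hz] with w hw
  simp only [Function.comp_apply]
  rw [ofComplex_apply_of_im_pos hw]
  exact (hf ⟨w, hw⟩).tsum_eq.symm

/-- A modular form from a q-expansion and S-invariance. -/
theorem mkMF {f : ℍ → ℂ} {a : ℕ → ℂ} (k : ℕ)
    (hf : ∀ τ : ℍ, HasSum (fun m ↦ a m • 𝕢 1 τ ^ m) (f τ))
    (hS : ∀ τ : ℍ, f (ModularGroup.S • τ) = (τ : ℂ) ^ k * f τ) :
    ∃ F : ModularForm 𝒮ℒ (k : ℤ), ∀ m, (qExpansion 1 F).coeff m = a m := by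
  have hT' : f ∣[(k : ℤ)] ModularGroup.T = f := by
    ext z
    rw [SL_slash_apply]
    have h1 : f (ModularGroup.T • z) = f z := by
      refine (hf _).unique ?_
      convert hf z using 3
      rw [UpperHalfPlane.modular_T_smul]
      have := Complex.exp_periodic (2 * Real.pi * Complex.I * (z : ℂ) / (1 : ℝ))
      unfold Function.Periodic.qParam
      rw [← this]
      congr 1
      push_cast [UpperHalfPlane.coe_vadd]
      ring_nf
    have h2 : denom ((ModularGroup.T : SL(2, ℤ)) : GL (Fin 2) ℝ) z = 1 := by
      simp [denom]
    rw [h1, h2]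
    simp
  have hS' : f ∣[(k : ℤ)] ModularGroup.S = f := by
    ext z
    rw [SL_slash_apply, hS]
    have : (z : ℂ) ≠ 0 := z.ne_zero
    have h2 : denom ((ModularGroup.S : SL(2, ℤ)) : GL (Fin 2) ℝ) z = z := by
      simp [ModularGroup.denom_S z]
    rw [h2]
    rw [zpow_neg, zpow_natCast]
    field_simp
  have hγ := SlashInvariantForm.slash_action_generators_SL2Z hS' hT'
  let F : ModularForm 𝒮ℒ (k : ℤ) :=
    { toFun := f
      slash_action_eq' := by
        rintro A ⟨A, rfl⟩
        exact hγ A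
      holo' := mk_holo hf
      bdd_at_cusps' := by
        intro c hc
        rw [Subgroup.IsArithmetic.isCusp_iff_isCusp_SL2Z] at hc
        rw [OnePoint.isBoundedAt_iff_forall_SL2Z hc]
        intro γ _
        rw [hγ γ]
        exact isBoundedAtImInfty_of_hasSum_qExpansion one_pos hf }
  refine ⟨F, fun m => ?_⟩
  exact (ModularFormClass.qExpansion_coeff_unique (f := F) one_pos one_mem_strictPeriods_SL hf m).symm

/-- Weight 14: a form with zero constant term vanishes. -/
theorem wt14 (F : ModularForm 𝒮ℒ ((14 : ℕ) : ℤ)) (h0 : (qExpansion 1 F).coeff 0 = 0) :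
    F = 0 := by
  suffices CuspForm.discriminantEquiv (ModularForm.toCuspForm F h0) = 0 by
    simpa [CuspForm.discriminantEquiv.map_eq_zero_iff, DFunLike.ext_iff]
  exact rank_zero_iff_forall_zero.mp (by exact levelOne_weight_two_rank_zero) _

open EisensteinSeries in
theorem wt12 (F : ModularForm 𝒮ℒ ((12 : ℕ) : ℤ)) (h0 : (qExpansion 1 F).coeff 0 = 1)
    (h1 : (qExpansion 1 F).coeff 1 = 0) :
    (qExpansion 1 F).coeff 2 = 196560 ∧ (qExpansion 1 F).coeff 3 = 16773120 ∧
    (qExpansion 1 F).coeff 4 = 398034000 := by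
  let A : ModularForm 𝒮ℒ ((12 : ℕ) : ℤ) := ModularForm.mcast (by decide) (E₄.pow 3)
  let B : ModularForm 𝒮ℒ ((12 : ℕ) : ℤ) := ModularForm.mcast (by decide) (E₆.pow 2)
  have hA : qExpansion 1 A = qExpansion 1 E₄ * qExpansion 1 E₄ * qExpansion 1 E₄ := by
    simp only [A, coe_mcast, ModularForm.qExpansion_pow one_pos one_mem_strictPeriods_SL]
    ring
  have hB : qExpansion 1 B = qExpansion 1 E₆ * qExpansion 1 E₆ := by
    simp only [B, coe_mcast, ModularForm.qExpansion_pow one_pos one_mem_strictPeriods_SL]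
    ring
  have hD : ∀ c d : ℂ, qExpansion 1 (F - (c • A + d • B) : ModularForm 𝒮ℒ ((12 : ℕ) : ℤ)) =
      qExpansion 1 F - (c • qExpansion 1 A + d • qExpansion 1 B) := by
    intro c d
    have e1 := ModularForm.qExpansion_sub (h := 1) one_pos one_mem_strictPeriods_SL F (c • A + d • B)
    have e2 := ModularForm.qExpansion_add (h := 1) one_pos one_mem_strictPeriods_SL (c • A) (d • B)
    have e3 := ModularForm.qExpansion_smul (h := 1) one_pos one_mem_strictPeriods_SL c A
    have e4 := ModularForm.qExpansion_smul (h := 1) one_pos one_mem_strictPeriods_SL d B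
    simp only [FunLike.coe_add, FunLike.coe_smul, FunLike.coe_sub] at *
    rw [e1, e2, e3, e4]
  have b4 : bernoulli 4 = -1 / 30 := by rw [bernoulli_eq_bernoulli'_of_ne_one (by norm_num)]; norm_num [bernoulli'_four]
  have b6 : bernoulli 6 = 1 / 42 := by decide +kernel
  have e4 : ∀ m, (qExpansion 1 E₄).coeff m = if m = 0 then 1 else 240 * (ArithmeticFunction.sigma 3 m : ℂ) := by
    intro m
    rw [E_qExpansion_coeff _ ⟨2, rfl⟩, b4]
    norm_num
  have e6 : ∀ m, (qExpansion 1 E₆).coeff m = if m = 0 then 1 else -504 * (ArithmeticFunction.sigma 5 m : ℂ) := by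
    intro m
    rw [E_qExpansion_coeff _ ⟨3, rfl⟩, b6]
    norm_num
  have s3 : ArithmeticFunction.sigma 3 1 = 1 ∧ ArithmeticFunction.sigma 3 2 = 9 ∧
    ArithmeticFunction.sigma 3 3 = 28 ∧ ArithmeticFunction.sigma 3 4 = 73 := by decide
  have s5 : ArithmeticFunction.sigma 5 1 = 1 ∧ ArithmeticFunction.sigma 5 2 = 33 ∧
    ArithmeticFunction.sigma 5 3 = 244 ∧ ArithmeticFunction.sigma 5 4 = 1057 := by decide
  obtain ⟨s31, s32, s33, s34⟩ := s3
  obtain ⟨s51, s52, s53, s54⟩ := s5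
  have cA : ∀ m, (qExpansion 1 (F - ((7 / 12 : ℂ) • A + (5 / 12 : ℂ) • B) : ModularForm 𝒮ℒ ((12 : ℕ) : ℤ))).coeff m =
    (qExpansion 1 F).coeff m - (7 / 12 * (qExpansion 1 E₄ * qExpansion 1 E₄ * qExpansion 1 E₄).coeff m
      + 5 / 12 * (qExpansion 1 E₆ * qExpansion 1 E₆).coeff m) := by
    intro m
    rw [hD, hA, hB]
    simp
  have hz : F - ((7 / 12 : ℂ) • A + (5 / 12 : ℂ) • B) = 0 := by
    apply sturm_bound_levelOne_nat
    refine lt_of_lt_of_le (b := ((2 : ℕ) : ℕ∞)) (by norm_num) ?_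
    apply PowerSeries.nat_le_order
    intro i hi
    rw [cA]
    interval_cases i
    · rw [h0]
      norm_num [PowerSeries.coeff_mul, Finset.Nat.antidiagonal_succ, e4, e6,
        -PowerSeries.coeff_zero_eq_constantCoeff]
    · rw [h1]
      norm_num [PowerSeries.coeff_mul, Finset.Nat.antidiagonal_succ, e4, e6, s31, s51,
        -PowerSeries.coeff_zero_eq_constantCoeff]
  have hall : ∀ m, (qExpansion 1 F).coeff m = 7 / 12 * (qExpansion 1 E₄ * qExpansion 1 E₄ * qExpansion 1 E₄).coeff m
      + 5 / 12 * (qExpansion 1 E₆ * qExpansion 1 E₆).coeff m := by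
    intro m
    have := cA m
    rw [hz] at this
    simp only [FunLike.coe_zero, qExpansion_zero, map_zero] at this
    exact (sub_eq_zero.1 this.symm)
  refine ⟨?_, ?_, ?_⟩ <;> rw [hall] <;>
  norm_num [PowerSeries.coeff_mul, Finset.Nat.antidiagonal_succ, e4, e6, s31, s51, s32, s33, s34, s52, s53, s54,
        -PowerSeries.coeff_zero_eq_constantCoeff]
end MF

open MeasureTheory
set_option linter.unusedSectionVars false

section Theta
open scoped RealInnerProductSpace
open UpperHalfPlane hiding I
open Complex ModularForm MatrixGroups
variable {E : Type*} [NormedAddCommGroup E] [InnerProductSpace ℝ E] [FiniteDimensional ℝ E]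
  [MeasurableSpace E] [BorelSpace E] {K : Submodule ℤ E}

theorem EU.exN (hK : EU K) (k : K) : ∃ n : ℕ, ‖(k : E)‖ ^ 2 = 2 * n := by
  obtain ⟨n, hn⟩ := hK.even k k.2
  have : 0 ≤ n := by
    have : (0 : ℝ) ≤ 2 * n := hn ▸ sq_nonneg _
    exact_mod_cast (by linarith : (0 : ℝ) ≤ n)
  lift n to ℕ using this
  exact ⟨n, by exact_mod_cast hn⟩

/-- half the norm -/
def EU.N (hK : EU K) (k : K) : ℕ := (hK.exN k).choose

theorem EU.N_spec (hK : EU K) (k : K) : ‖(k : E)‖ ^ 2 = 2 * hK.N k := (hK.exN k).choose_spec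

theorem EU.N_iff (hK : EU K) (k : K) (n : ℕ) : hK.N k = n ↔ ‖(k : E)‖ ^ 2 = 2 * n := by
  rw [hK.N_spec]
  constructor
  · rintro rfl; rfl
  · intro h
    exact_mod_cast (by linarith : (hK.N k : ℝ) = n)

instance EU.finN (hK : EU K) (n : ℕ) : Finite {k : K // hK.N k = n} := by
  by_contra hinf
  rw [not_finite_iff_infinite] at hinf
  have := hK.discrete
  have hs := hK.summable_decay.comp_injective (Subtype.val_injective (p := fun k : K => hK.N k = n))
  have : (fun k : {k : K // hK.N k = n} => (((1 + ‖((k : K) : E)‖) ^ (Module.finrank ℝ E + 1))⁻¹ : ℝ)) =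
      fun _ => (((1 + Real.sqrt (2 * n)) ^ (Module.finrank ℝ E + 1))⁻¹ : ℝ) := by
    funext k
    have h1 := (hK.N_iff k n).1 k.2
    rw [← h1, Real.sqrt_sq (norm_nonneg _)]
  have hs' : Summable (fun k : {k : K // hK.N k = n} => (((1 + Real.sqrt (2 * n)) ^ (Module.finrank ℝ E + 1))⁻¹ : ℝ)) := by
    rw [← this]; exact hs
  rw [summable_const_iff] at hs'
  have : (0:ℝ) < (((1 + Real.sqrt (2 * n)) ^ (Module.finrank ℝ E + 1))⁻¹ : ℝ) := by positivity
  exact this.ne' hs'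

theorem EU.theta_summable (hK : EU K) {P : E → ℂ} (hM : ∃ M, ∀ v, ‖P v‖ ≤ M * (1 + ‖v‖) ^ 3)
    (b : ℂ) (hb : 0 < b.re) : Summable (fun k : K => P k * gs b (k : E)) := by
  have := hK.discrete
  obtain ⟨C, hC⟩ := gs_decay P hM b hb (Module.finrank ℝ E + 1)
  exact Summable.of_norm_bounded (hK.summable_decay.mul_left C) (fun k => hC k)

theorem EU.theta_S (hK : EU K) (h24 : Module.finrank ℝ E = 24) {P : E → ℂ} {w : ℕ} (hP : TK P w)
    (b : ℂ) (hb : 0 < b.re) : ∑' k : K, P k * gs b (k : E) =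
      (Complex.I / b) ^ w * ∑' k : K, P k * gs (1 / b) (k : E) := by
  have := hK.discrete
  obtain ⟨c, hc⟩ := hK.poisson
  have main : ∀ {P : E → ℂ} {w : ℕ} (_ : TK P w) (b : ℂ) (_ : 0 < b.re), ∑' k : K, P k * gs b (k : E) =
      c * ((Complex.I / b) ^ w * ∑' k : K, P k * gs (1 / b) (k : E)) := by
    intro P w hP b hb
    have hb' : 0 < (1 / b).re := by
      rw [one_div, Complex.inv_re]
      have : b ≠ 0 := by rintro rfl; simp at hb
      exact div_pos hb (Complex.normSq_pos.2 this)
    obtain ⟨C, hC⟩ := gs_decay P hP.2.1 b hb (Module.finrank ℝ E + 1)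
    obtain ⟨C', hC'⟩ := gs_decay P hP.2.1 (1 / b) hb' (Module.finrank ℝ E + 1)
    have := hc (fun v => P v * gs b v) (hP.1.mul (continuous_gs b)) ⟨C, hC⟩
      ⟨‖(Complex.I / b) ^ w‖ * C', fun v => by
        rw [hP.2.2 b hb, norm_mul, mul_assoc]
        exact mul_le_mul_of_nonneg_left (hC' v) (norm_nonneg _)⟩
    rw [this]
    simp_rw [hP.2.2 b hb]
    rw [tsum_mul_left]
  have hc1 : c = 1 := by
    have h1 := main (TK_one h24) 1 (by simp)
    have hI : (Complex.I / 1) ^ 12 = 1 := by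
      rw [div_one, show 12 = 4 * 3 by norm_num, pow_mul, Complex.I_pow_four, one_pow]
    rw [hI] at h1
    simp only [div_one, one_mul] at h1
    have hs : Summable (fun k : K => gs 1 (k : E)) := by
      simpa using hK.theta_summable (P := fun _ => 1) ⟨1, fun v => by
        have : 0 ≤ ‖v‖ := norm_nonneg _
        simp only [norm_one, one_mul]
        exact one_le_pow₀ (by linarith)⟩ 1 (by simp)
    have hg : ∀ v : E, gs 1 v = ((Real.exp (-(Real.pi * ‖v‖ ^ 2)) : ℝ) : ℂ) := by
      intro v
      simp [gs]
    have hne : (∑' k : K, gs 1 (k : E)) ≠ 0 := by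
      simp_rw [hg] at hs ⊢
      rw [← Complex.ofReal_tsum]
      have hs' := Complex.summable_ofReal.1 hs
      have := hs'.tsum_pos (fun k => (Real.exp_pos _).le) 0 (Real.exp_pos _)
      exact_mod_cast this.ne'
    have := mul_right_cancel₀ hne (h1.symm.trans (one_mul _).symm)
    exact this
  rw [main hP b hb, hc1, one_mul]

local notation "𝕢" => Function.Periodic.qParam

theorem gs_eq_q (hK : EU K) (τ : ℍ) (k : K) :
    gs (-Complex.I * τ) (k : E) = 𝕢 1 τ ^ (hK.N k) := by
  unfold gs Function.Periodic.qParam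
  rw [← Complex.exp_nat_mul]
  congr 1
  have : ((‖(k : E)‖ : ℂ)) ^ 2 = 2 * (hK.N k : ℂ) := by exact_mod_cast congrArg (fun x : ℝ => (x : ℂ)) (hK.N_spec k)
  rw [this]
  push_cast
  ring

theorem EU.theta_mf (hK : EU K) (h24 : Module.finrank ℝ E = 24) {P : E → ℂ} {w : ℕ} (hP : TK P w)
    (hw : Even w) :
    ∃ F : ModularForm 𝒮ℒ (w : ℤ), ∀ n, (qExpansion 1 F).coeff n =
      ∑' k : {k : K // hK.N k = n}, P k := by
  have hre : ∀ τ : ℍ, 0 < (-Complex.I * (τ : ℂ)).re := by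
    intro τ
    simpa using τ.im_pos
  refine mkMF (f := fun τ => ∑' k : K, P k * gs (-Complex.I * τ) (k : E)) w ?_ ?_
  · intro τ
    have h1 := (hK.theta_summable hP.2.1 _ (hre τ)).hasSum
    rw [← (Equiv.sigmaFiberEquiv hK.N).hasSum_iff] at h1
    refine h1.sigma (fun n => ?_)
    simp only [Function.comp_def, Equiv.sigmaFiberEquiv_apply, smul_eq_mul]
    let := Fintype.ofFinite {k : K // hK.N k = n}
    rw [tsum_fintype, Finset.sum_mul]
    convert hasSum_fintype _ using 2 with k
    rw [gs_eq_q hK, k.2]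
  · intro τ
    have hτ : (τ : ℂ) ≠ 0 := τ.ne_zero
    have h1 := hK.theta_S h24 hP _ (hre τ)
    have h2 : 1 / (-Complex.I * (τ : ℂ)) = -Complex.I * ((ModularGroup.S • τ : ℍ) : ℂ) := by
      rw [UpperHalfPlane.modular_S_smul]
      simp
      field_simp
    rw [h2] at h1
    rw [h1, ← mul_assoc, ← mul_pow]
    have h3 : (τ : ℂ) * (Complex.I / (-Complex.I * τ)) = -1 := by
      field_simp
    rw [h3, hw.neg_one_pow, one_mul]

theorem EU.tsum_zero (hK : EU K) (P : E → ℂ) : ∑' k : {k : K // hK.N k = 0}, P k = P 0 := by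
  let : Unique {k : K // hK.N k = 0} :=
    { default := ⟨0, by rw [hK.N_iff]; simp⟩
      uniq := fun k => by
        have := (hK.N_iff k 0).1 k.2
        ext
        simpa using this }
  rw [tsum_fintype, Fintype.sum_unique]
  rfl

/-- The norm `2n` shell. -/
def shell (K : Submodule ℤ E) (n : ℕ) : Set E := {x | x ∈ K ∧ ‖x‖ ^ 2 = 2 * n}

def EU.shellEquiv (hK : EU K) (n : ℕ) : {k : K // hK.N k = n} ≃ shell K n where
  toFun k := ⟨k.1, k.1.2, (hK.N_iff k n).1 k.2⟩
  invFun x := ⟨⟨x.1, x.2.1⟩, (hK.N_iff _ n).2 x.2.2⟩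
  left_inv _ := rfl
  right_inv _ := rfl

theorem EU.shell_finite (hK : EU K) (n : ℕ) : (shell K n).Finite := by
  have := Finite.of_equiv _ (hK.shellEquiv n)
  exact Set.toFinite _

theorem EU.tsum_shell (hK : EU K) (n : ℕ) (P : E → ℂ) : ∑' k : {k : K // hK.N k = n}, P k =
    ∑ x ∈ (hK.shell_finite n).toFinset, P x := by
  rw [← (hK.shellEquiv n).symm.tsum_eq]
  have := Finset.tsum_subtype (hK.shell_finite n).toFinset P
  rw [← this]
  have e : ((hK.shell_finite n).toFinset : Set E) = shell K n := by simp
  rw [show (∑' x : { x // x ∈ (hK.shell_finite n).toFinset }, P ↑x) =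
    ∑' x : ↑((hK.shell_finite n).toFinset : Set E), P x from rfl, e]
  rfl

theorem EU.venkov0 (hK : EU K) (h24 : Module.finrank ℝ E = 24) (y y' : E) (h : ⟪y, y'⟫ = 0) (n : ℕ) :
    ∑ x ∈ (hK.shell_finite n).toFinset, ⟪y, x⟫ * ⟪y', x⟫ = 0 := by
  obtain ⟨F, hF⟩ := hK.theta_mf h24 (TK_harm h24 y y' h) (by decide)
  have h0 := wt14 F (by rw [hF, hK.tsum_zero (fun v => ((⟪y,v⟫*⟪y',v⟫ : ℝ):ℂ))]; simp)
  have h1 := hF n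
  rw [h0, hK.tsum_shell n (fun v => ((⟪y,v⟫*⟪y',v⟫ : ℝ):ℂ))] at h1
  simp only [FunLike.coe_zero, qExpansion_zero, map_zero] at h1
  exact_mod_cast h1.symm

theorem EU.counts (hK : EU K) (h24 : Module.finrank ℝ E = 24) (h2 : shell K 1 = ∅) :
    (shell K 2).ncard = 196560 ∧ (shell K 3).ncard = 16773120 ∧ (shell K 4).ncard = 398034000 := by
  obtain ⟨F, hF⟩ := hK.theta_mf h24 (TK_one h24) (by decide)
  have hF' : ∀ n, (qExpansion 1 F).coeff n = ((shell K n).ncard : ℂ) := by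
    intro n
    rw [hF, hK.tsum_shell n (fun _ => 1), Set.ncard_eq_toFinset_card _ (hK.shell_finite n)]
    simp
  have := wt12 F (by rw [hF, hK.tsum_zero (fun _ => 1)]) (by rw [hF', h2]; simp)
  rw [hF', hF', hF'] at this
  exact_mod_cast this

/-- Venkov: the roots form a 2-design. -/
theorem EU.venkov (hK : EU K) (h24 : Module.finrank ℝ E = 24) (n : ℕ) :
    ∃ H : ℝ, ∀ y : E, ∑ x ∈ (hK.shell_finite n).toFinset, ⟪y, x⟫ ^ 2 = H * ⟪y, y⟫ := by
  have hnt : Nontrivial E := Module.nontrivial_of_finrank_pos (R := ℝ) (by omega)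
  obtain ⟨e, he⟩ := exists_norm_eq E zero_le_one
  have key : ∀ u v : E, ‖u‖ = ‖v‖ → ∑ x ∈ (hK.shell_finite n).toFinset, ⟪u, x⟫ ^ 2 =
      ∑ x ∈ (hK.shell_finite n).toFinset, ⟪v, x⟫ ^ 2 := by
    intro u v huv
    have h1 := hK.venkov0 h24 (u + v) (u - v) ((real_inner_add_sub_eq_zero_iff u v).2 huv) n
    rw [← sub_eq_zero, ← Finset.sum_sub_distrib, ← h1]
    refine Finset.sum_congr rfl fun x _ => ?_
    rw [inner_add_left, inner_sub_left]
    ring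
  refine ⟨∑ x ∈ (hK.shell_finite n).toFinset, ⟪e, x⟫ ^ 2, fun y => ?_⟩
  rw [key y (‖y‖ • e) (by rw [norm_smul, he]; simp), real_inner_self_eq_norm_sq, Finset.sum_mul]
  refine Finset.sum_congr rfl fun x _ => ?_
  rw [real_inner_smul_left]
  ring
end Theta

open MeasureTheory
set_option linter.unusedSectionVars false

section Mod2
open scoped RealInnerProductSpace
variable {E : Type*} [NormedAddCommGroup E] [InnerProductSpace ℝ E] [FiniteDimensional ℝ E]
  [MeasurableSpace E] [BorelSpace E] {K : Submodule ℤ E}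

theorem EU.four_le (hK : EU K) (h2 : shell K 1 = ∅) {x : E} (hx : x ∈ K) (h0 : x ≠ 0) :
    4 ≤ ‖x‖ ^ 2 := by
  obtain ⟨n, hn⟩ := hK.even x hx
  have h1 := hK.two_le hx h0
  by_contra h
  push Not at h
  rw [hn] at h h1
  have a1 : n < 2 := by exact_mod_cast (by linarith : (n : ℝ) < 2)
  have a2 : 1 ≤ n := by exact_mod_cast (by linarith : (1 : ℝ) ≤ n)
  have a3 : n = 1 := by omega
  have : x ∈ shell K 1 := ⟨hx, by rw [hn, a3]; simp⟩
  rw [h2] at this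
  exact this

/-- congruent short vectors -/
theorem EU.cong (hK : EU K) (h2 : shell K 1 = ∅) {x y m : E} (hm : m ∈ K)
    (h : x - y = (2 : ℤ) • m) (hyK : y ∈ K) (hx : ‖x‖ ^ 2 ≤ 8) (hy : ‖y‖ ^ 2 ≤ 8) :
    x = y ∨ x = -y ∨ (⟪x, y⟫ = 0 ∧ ‖x‖ ^ 2 = 8 ∧ ‖y‖ ^ 2 = 8) := by
  by_cases h3 : x = y
  · exact Or.inl h3
  by_cases h4 : x = -y
  · exact Or.inr (Or.inl h4)
  right; right
  have key : ∀ m : E, m ∈ K → ((2 : ℤ) • m) ≠ 0 → 16 ≤ ‖(2 : ℤ) • m‖ ^ 2 := by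
    intro m hm h0
    have : m ≠ 0 := by rintro rfl; simp at h0
    have := hK.four_le h2 hm this
    rw [← Int.cast_smul_eq_zsmul ℝ, norm_smul]
    norm_num
    nlinarith
  have e1 := key m hm (by rw [← h]; exact sub_ne_zero.2 h3)
  have h5 : x + y = (2 : ℤ) • (m + y) := by
    rw [smul_add, ← h]
    rw [two_smul]; abel
  have e2 := key (m + y) (K.add_mem hm hyK) (by
    rw [← h5]; intro h6; exact h4 (eq_neg_of_add_eq_zero_left h6))
  rw [← h, norm_sub_sq_real] at e1
  rw [← h5, norm_add_sq_real] at e2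
  refine ⟨?_, ?_, ?_⟩ <;> linarith

theorem frame_card (h24 : Module.finrank ℝ E = 24) (F : Finset E) (h0 : ∀ x ∈ F, x ≠ 0)
    (h : ∀ x ∈ F, ∀ y ∈ F, x = y ∨ x = -y ∨ ⟪x, y⟫ = 0) : F.card ≤ 48 := by
  classical
  obtain ⟨A, hAF, hsp, hli⟩ := exists_linearIndependent ℝ (F : Set E)
  have hfin : A.Finite := F.finite_toSet.subset hAF
  let A' := hfin.toFinset
  have hc : A'.card ≤ 24 := by
    rw [← h24]
    have hli' : LinearIndependent ℝ (fun x : A' => (x : E)) := by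
      have e : (A' : Set E) = A := by simp [A']
      have : LinearIndependent ℝ (fun x : (A' : Set E) => (x : E)) := by rw [e]; exact hli
      exact this
    simpa using hli'.fintype_card_le_finrank
  have hsub : F ⊆ A' ∪ A'.image (fun x => -x) := by
    intro x hx
    by_contra hn
    simp only [Finset.mem_union, Finset.mem_image, not_or, A', Set.Finite.mem_toFinset] at hn
    have h1 : ∀ a ∈ A, ⟪x, a⟫ = 0 := by
      intro a ha
      rcases h x hx a (hAF ha) with h1 | h1 | h1
      · exact absurd (h1 ▸ ha) hn.1
      · exact absurd ⟨a, ha, h1.symm⟩ hn.2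
      · exact h1
    have h2 : x ∈ Submodule.span ℝ A := by rw [hsp]; exact Submodule.subset_span hx
    have h3 : x ∈ (Submodule.span ℝ A)ᗮ := by
      rw [Submodule.mem_orthogonal']
      intro u hu
      induction hu using Submodule.span_induction with
      | mem a ha => exact h1 a ha
      | zero => simp
      | add a b _ _ ha hb => rw [inner_add_right, ha, hb, add_zero]
      | smul c a _ ha => rw [inner_smul_right, ha, mul_zero]
    exact h0 x hx (inner_self_eq_zero (𝕜 := ℝ).1 ((Submodule.mem_orthogonal' _ _).1 h3 x h2))
  calc F.card ≤ _ := Finset.card_le_card hsub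
    _ ≤ A'.card + (A'.image (fun x => -x)).card := Finset.card_union_le _ _
    _ ≤ A'.card + A'.card := Nat.add_le_add_left Finset.card_image_le _
    _ ≤ 48 := by omega

theorem EU.short_rep (hK : EU K) (h24 : Module.finrank ℝ E = 24) (h2 : shell K 1 = ∅)
    {l : E} (hl : l ∈ K) : ∃ l' ∈ K, ‖l'‖ ^ 2 ≤ 8 ∧ ∃ m ∈ K, l - l' = (2 : ℤ) • m := by
  classical
  have := hK.discrete
  have := hK.isZLattice
  let b := Module.Free.chooseBasis ℤ K
  let ι := Module.Free.ChooseBasisIndex ℤ K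
  have hι : Fintype.card ι = 24 := by
    rw [← Module.finrank_eq_card_chooseBasisIndex, ZLattice.rank ℝ K, h24]
  let cl : K → (ι → ZMod 2) := fun k i => (b.repr k i : ZMod 2)
  have hcl : ∀ x y : K, cl x = cl y → ∃ m ∈ K, (x : E) - y = (2 : ℤ) • m := by
    intro x y hxy
    have : ∀ i, ∃ c : ℤ, b.repr x i - b.repr y i = 2 * c := by
      intro i
      have h1 := congrFun hxy i
      simp only [cl] at h1
      have := (ZMod.intCast_eq_intCast_iff_dvd_sub _ _ 2).1 h1.symm
      exact this
    choose c hc using this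
    refine ⟨(∑ i, c i • b i : K), (∑ i, c i • b i : K).2, ?_⟩
    have : x - y = (2 : ℤ) • ∑ i, c i • b i := by
      apply b.repr.injective
      ext i
      simp [hc, Finsupp.single_apply]
    exact_mod_cast congrArg (Subtype.val) this
  have hSf : ∀ n, {k : K | hK.N k = n}.Finite := fun n => (Set.finite_coe_iff (s := {k : K | hK.N k = n})).1 (hK.finN n)
  let S : ℕ → Finset K := fun n => (hSf n).toFinset
  have hS : ∀ n k, k ∈ S n ↔ ‖(k : E)‖ ^ 2 = 2 * n := by
    intro n k
    simp [S, hK.N_iff]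
  have hSc : ∀ n, (S n).card = (shell K n).ncard := by
    intro n
    rw [← Nat.card_coe_set_eq, ← Nat.card_congr (hK.shellEquiv n)]
    simp only [S]
    rw [← Set.ncard_eq_toFinset_card _ (hSf n)]
    rfl
  obtain ⟨c2, c3, c4⟩ := hK.counts h24 h2
  rw [← hSc] at c2 c3 c4
  have hcong : ∀ {n n' : ℕ} {x y : K}, n ≤ 4 → n' ≤ 4 → x ∈ S n → y ∈ S n' → cl x = cl y →
      x = y ∨ x = -y ∨ (⟪(x : E), y⟫ = 0 ∧ n = 4 ∧ n' = 4) := by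
    intro n n' x y hn hn' hx hy hxy
    obtain ⟨m, hm, h⟩ := hcl x y hxy
    rw [hS] at hx hy
    have a1 : (n : ℝ) ≤ 4 := by exact_mod_cast hn
    have a2 : (n' : ℝ) ≤ 4 := by exact_mod_cast hn'
    rcases hK.cong h2 hm h y.2 (by linarith) (by linarith) with h | h | ⟨h3, h4, h5⟩
    · exact Or.inl (Subtype.ext h)
    · exact Or.inr (Or.inl (Subtype.ext h))
    · refine Or.inr (Or.inr ⟨h3, ?_, ?_⟩)
      · exact_mod_cast (by linarith : (n : ℝ) = 4)
      · exact_mod_cast (by linarith : (n' : ℝ) = 4)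
  have hdisj : ∀ n n' : ℕ, n ≤ 4 → n' ≤ 4 → n ≠ n' → Disjoint ((S n).image cl) ((S n').image cl) := by
    intro n n' hn hn' hne
    rw [Finset.disjoint_left]
    intro c hc hc'
    obtain ⟨x, hx, rfl⟩ := Finset.mem_image.1 hc
    obtain ⟨y, hy, hxy⟩ := Finset.mem_image.1 hc'
    have h1 := hcong hn hn' hx hy hxy.symm
    rw [hS] at hx hy
    rcases h1 with rfl | rfl | ⟨_, h, h'⟩
    · apply hne; exact_mod_cast (by linarith : (n : ℝ) = n')
    · apply hne
      rw [Submodule.coe_neg, norm_neg] at hx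
      exact_mod_cast (by linarith : (n : ℝ) = n')
    · omega
  have hsm : ∀ n : ℕ, n < 4 → (S n).card ≤ 2 * ((S n).image cl).card := by
    intro n hn
    refine Finset.card_le_mul_card_image _ _ (fun c hc => ?_)
    obtain ⟨x, hx, rfl⟩ := Finset.mem_image.1 hc
    refine (Finset.card_le_card (t := {x, -x}) ?_).trans Finset.card_le_two
    intro y hy
    rw [Finset.mem_filter] at hy
    rcases hcong hn.le hn.le hy.1 hx hy.2 with h | h | h
    · simp [h]
    · simp [h]
    · omega
  have h4 : (S 4).card ≤ 48 * ((S 4).image cl).card := by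
    refine Finset.card_le_mul_card_image _ _ (fun c hc => ?_)
    rw [← Finset.card_map (Function.Embedding.subtype (fun x => x ∈ K))]
    refine frame_card h24 _ ?_ ?_
    · intro x hx
      obtain ⟨y, hy, rfl⟩ := Finset.mem_map.1 hx
      rw [Finset.mem_filter, hS] at hy
      intro h0
      have h1 := hy.1
      rw [show (y : E) = 0 from h0] at h1
      norm_num at h1
    · intro x hx x' hx'
      obtain ⟨y, hy, rfl⟩ := Finset.mem_map.1 hx
      obtain ⟨y', hy', rfl⟩ := Finset.mem_map.1 hx'
      rw [Finset.mem_filter] at hy hy'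
      rcases hcong le_rfl le_rfl hy.1 hy'.1 (hy.2.trans hy'.2.symm) with h | h | h
      · left; rw [h]
      · right; left; rw [h]; rfl
      · right; right; exact h.1
  have h0 : 1 ≤ ((S 0).image cl).card := by
    refine Finset.card_pos.2 ⟨cl 0, Finset.mem_image_of_mem _ ?_⟩
    rw [hS]; simp
  have hun : ((S 0).image cl ∪ (S 2).image cl ∪ (S 3).image cl ∪ (S 4).image cl) = Finset.univ := by
    apply Finset.eq_univ_of_card
    apply le_antisymm (Finset.card_le_univ _)
    rw [Finset.card_union_of_disjoint, Finset.card_union_of_disjoint, Finset.card_union_of_disjoint]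
    · have := hsm 2 (by norm_num)
      have := hsm 3 (by norm_num)
      have hc : Fintype.card (ι → ZMod 2) = 16777216 := by
        rw [Fintype.card_fun, hι, ZMod.card]; norm_num
      rw [hc]
      omega
    · exact hdisj _ _ (by norm_num) (by norm_num) (by norm_num)
    · rw [Finset.disjoint_union_left]
      exact ⟨hdisj _ _ (by norm_num) (by norm_num) (by norm_num), hdisj _ _ (by norm_num) (by norm_num) (by norm_num)⟩
    · rw [Finset.disjoint_union_left, Finset.disjoint_union_left]
      exact ⟨⟨hdisj _ _ (by norm_num) (by norm_num) (by norm_num), hdisj _ _ (by norm_num) (by norm_num) (by norm_num)⟩, hdisj _ _ (by norm_num) (by norm_num) (by norm_num)⟩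
  have hmem : cl ⟨l, hl⟩ ∈ ((S 0).image cl ∪ (S 2).image cl ∪ (S 3).image cl ∪ (S 4).image cl) := by
    rw [hun]; exact Finset.mem_univ _
  have : ∃ n ≤ 4, ∃ x ∈ S n, cl x = cl ⟨l, hl⟩ := by
    simp only [Finset.mem_union, Finset.mem_image] at hmem
    rcases hmem with ((⟨x, hx, h⟩ | ⟨x, hx, h⟩) | ⟨x, hx, h⟩) | ⟨x, hx, h⟩
    exacts [⟨0, by norm_num, x, hx, h⟩, ⟨2, by norm_num, x, hx, h⟩, ⟨3, by norm_num, x, hx, h⟩, ⟨4, by norm_num, x, hx, h⟩]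
  obtain ⟨n, hn, x, hx, hxl⟩ := this
  refine ⟨x, x.2, ?_, hcl ⟨l, hl⟩ x hxl.symm⟩
  rw [hS] at hx
  have a1 : (n : ℝ) ≤ 4 := by exact_mod_cast hn
  linarith
end Mod2

open MeasureTheory
set_option linter.unusedSectionVars false

section Hole
open scoped RealInnerProductSpace
variable {E : Type*} [NormedAddCommGroup E] [InnerProductSpace ℝ E] [FiniteDimensional ℝ E]
  [MeasurableSpace E] [BorelSpace E] {K : Submodule ℤ E}

/-- Points of the lattice in a ball are finite. -/
theorem EU.ball_finite (hK : EU K) (c : E) (R : ℝ) : {v | v ∈ K ∧ ‖v - c‖ ≤ R}.Finite := by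
  have h1 : (⋃ n ∈ Finset.range (⌈(R + ‖c‖) ^ 2⌉₊ + 1), shell K n).Finite :=
    Set.Finite.biUnion (Finset.finite_toSet _) (fun n _ => hK.shell_finite n)
  refine h1.subset ?_
  rintro v ⟨hv, hvR⟩
  have h2 := hK.N_spec ⟨v, hv⟩
  simp only [Set.mem_iUnion, Finset.mem_range]
  refine ⟨hK.N ⟨v, hv⟩, ?_, hv, h2⟩
  have h3 : ‖v‖ ≤ R + ‖c‖ := by
    have := norm_add_le (v - c) c
    rw [sub_add_cancel] at this
    linarith
  have h4 : ‖v‖ ^ 2 ≤ (R + ‖c‖) ^ 2 := by gcongr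
  simp only at h2
  rw [h2] at h4
  have h5 : ((hK.N ⟨v, hv⟩ : ℕ) : ℝ) ≤ (R + ‖c‖) ^ 2 := by
    have : (0:ℝ) ≤ (hK.N ⟨v, hv⟩ : ℕ) := by positivity
    linarith
  have h6 := h5.trans (Nat.le_ceil _)
  have : hK.N ⟨v, hv⟩ ≤ ⌈(R + ‖c‖) ^ 2⌉₊ := by exact_mod_cast h6
  omega

/-- A deepest hole. -/
theorem EU.deep (hK : EU K) : ∃ c : E, ∀ x : E, Metric.infDist x (K : Set E) ≤ Metric.infDist c (K : Set E) := by
  have := hK.discrete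
  have := hK.isZLattice
  let b := Module.Free.chooseBasis ℤ K
  let B := b.ofZLatticeBasis ℝ K
  have hB : Submodule.span ℤ (Set.range B) = K := b.ofZLatticeBasis_span ℝ K
  have hbd := ZSpan.fundamentalDomain_isBounded B
  have hcomp := hbd.isCompact_closure
  have hne : (closure (ZSpan.fundamentalDomain B)).Nonempty := by
    refine ⟨0, subset_closure ?_⟩
    rw [ZSpan.mem_fundamentalDomain]; simp
  obtain ⟨c, -, hc⟩ := hcomp.exists_isMaxOn hne (Metric.continuous_infDist_pt (K : Set E)).continuousOn
  refine ⟨c, fun x => ?_⟩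
  have hx := ZSpan.fract_mem_fundamentalDomain B x
  have h1 := hc (subset_closure hx)
  have hfl : ((ZSpan.floor B x : Submodule.span ℤ (Set.range B)) : E) ∈ K := by
    exact hB.le (ZSpan.floor B x).2
  refine le_trans ?_ h1
  have h2 : ZSpan.fract B x = x - ZSpan.floor B x := rfl
  have hK0 : (K : Set E).Nonempty := ⟨0, K.zero_mem⟩
  simp only
  rw [Metric.le_infDist hK0]
  intro y hy
  have : dist (ZSpan.fract B x) y = dist x (y + ZSpan.floor B x) := by
    rw [h2, dist_eq_norm, dist_eq_norm]; congr 1; abel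
  rw [this]
  exact Metric.infDist_le_dist_of_mem (K.add_mem hy hfl)

theorem EU.hole (hK : EU K) (x : E) (hx : ∀ v ∈ K, 2 < ‖x - v‖ ^ 2) :
    ∃ (c : E) (R : ℝ), 2 < R ^ 2 ∧ 0 < R ∧ (∀ v ∈ K, R ≤ ‖v - c‖) ∧
      c ∈ convexHull ℝ {v | v ∈ K ∧ ‖v - c‖ = R} := by
  obtain ⟨c, hc⟩ := hK.deep
  have hK0 : (K : Set E).Nonempty := ⟨0, K.zero_mem⟩
  have hatt : ∀ y : E, ∃ v ∈ K, Metric.infDist y (K : Set E) = ‖v - y‖ := by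
    intro y
    have hf := hK.ball_finite y (Metric.infDist y (K : Set E) + 1)
    obtain ⟨w, hw, hw'⟩ := (Metric.infDist_lt_iff hK0 (x := y) (r := Metric.infDist y (K : Set E) + 1)).1 (by linarith)
    rw [dist_comm, dist_eq_norm] at hw'
    obtain ⟨v, hv, hmin⟩ := Set.exists_min_image _ (fun v => ‖v - y‖) hf ⟨w, hw, hw'.le⟩
    refine ⟨v, hv.1, le_antisymm ?_ ?_⟩
    · rw [← dist_eq_norm, dist_comm]; exact Metric.infDist_le_dist_of_mem hv.1
    · rw [Metric.le_infDist hK0]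
      intro u hu
      rw [dist_comm, dist_eq_norm]
      by_cases h : ‖u - y‖ ≤ Metric.infDist y (K : Set E) + 1
      · exact hmin u ⟨hu, h⟩
      · push Not at h
        exact hv.2.trans h.le
  set R := Metric.infDist c (K : Set E) with hR
  have hR0 : 0 ≤ R := Metric.infDist_nonneg
  have hR2 : 2 < R ^ 2 := by
    obtain ⟨v, hv, h⟩ := hatt x
    have h1 := hx v hv
    rw [norm_sub_rev, ← h] at h1
    have := hc x
    have : 0 ≤ Metric.infDist x (K : Set E) := Metric.infDist_nonneg
    nlinarith
  have hle : ∀ v ∈ K, R ≤ ‖v - c‖ := by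
    intro v hv
    rw [← dist_eq_norm, dist_comm]; exact Metric.infDist_le_dist_of_mem hv
  refine ⟨c, R, hR2, lt_of_le_of_ne hR0 (fun h => by rw [← h] at hR2; norm_num at hR2), hle, ?_⟩
  set S := {v | v ∈ K ∧ ‖v - c‖ = R} with hS
  by_contra hnot
  have hSf : S.Finite := (hK.ball_finite c R).subset (fun v hv => ⟨hv.1, hv.2.le⟩)
  have hcl : IsClosed (convexHull ℝ S) := (hSf.isCompact_convexHull (𝕜 := ℝ)).isClosed
  obtain ⟨f, u, hf1, hf2⟩ := geometric_hahn_banach_closed_point (convex_convexHull ℝ S) hcl hnot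
  obtain ⟨d, hd⟩ := (InnerProductSpace.toDual ℝ E).surjective f
  have hdv : ∀ v ∈ S, ⟪d, v - c⟫ < 0 := by
    intro v hv
    have h1 := hf1 v (subset_convexHull ℝ S hv)
    have h2 := h1.trans hf2
    rw [← hd, InnerProductSpace.toDual_apply_apply, InnerProductSpace.toDual_apply_apply] at h2
    rw [inner_sub_right]; linarith
  -- other lattice points near are at distance at least R + δ
  have hδ : ∃ δ > 0, ∀ v ∈ K, v ∉ S → R + δ ≤ ‖v - c‖ := by
    have hT : {v | (v ∈ K ∧ ‖v - c‖ ≤ R + 1) ∧ v ∉ S}.Finite :=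
      (hK.ball_finite c (R + 1)).subset (fun v hv => hv.1)
    rcases Set.eq_empty_or_nonempty {v | (v ∈ K ∧ ‖v - c‖ ≤ R + 1) ∧ v ∉ S} with he | hne
    · refine ⟨1, one_pos, fun v hv hvS => ?_⟩
      by_contra h
      push Not at h
      have : v ∈ {v | (v ∈ K ∧ ‖v - c‖ ≤ R + 1) ∧ v ∉ S} := ⟨⟨hv, h.le⟩, hvS⟩
      rw [he] at this
      exact this
    · obtain ⟨w, hw, hmin⟩ := Set.exists_min_image _ (fun v => ‖v - c‖) hT hne
      have hw1 : R < ‖w - c‖ := lt_of_le_of_ne (hle w hw.1.1) (fun h => hw.2 ⟨hw.1.1, h.symm⟩)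
      refine ⟨‖w - c‖ - R, by linarith, fun v hv hvS => ?_⟩
      by_cases h : ‖v - c‖ ≤ R + 1
      · have := hmin v ⟨⟨hv, h⟩, hvS⟩
        linarith
      · have := hw.1.2
        linarith
  obtain ⟨δ, hδ0, hδ⟩ := hδ
  have hdpos : 0 < ‖d‖ + 1 := by positivity
  set ε := δ / (2 * (‖d‖ + 1)) with hε
  have hε0 : 0 < ε := by positivity
  obtain ⟨v, hv, h⟩ := hatt (c + ε • d)
  have hmax := hc (c + ε • d)
  rw [h] at hmax
  by_cases hvS : v ∈ S
  · have h1 := hdv v hvS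
    have h2 : ‖v - (c + ε • d)‖ ^ 2 = R ^ 2 - 2 * ε * ⟪d, v - c⟫ + ε ^ 2 * ‖d‖ ^ 2 := by
      rw [← sub_sub, norm_sub_sq_real, hvS.2, real_inner_smul_right, norm_smul, real_inner_comm]
      rw [Real.norm_of_nonneg hε0.le]; ring
    have h3 : ‖v - (c + ε • d)‖ ^ 2 ≤ R ^ 2 := by gcongr
    have h4 : 0 ≤ ε ^ 2 * ‖d‖ ^ 2 := by positivity
    have h5 : ε * ⟪d, v - c⟫ < 0 := mul_neg_of_pos_of_neg hε0 h1
    linarith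
  · have h1 := hδ v hv hvS
    have h2 : ‖v - c‖ ≤ ‖v - (c + ε • d)‖ + ε * ‖d‖ := by
      have := norm_add_le (v - (c + ε • d)) (ε • d)
      rw [norm_smul, Real.norm_of_nonneg hε0.le] at this
      have e : v - (c + ε • d) + ε • d = v - c := by abel
      rwa [e] at this
    have h3 : ε * ‖d‖ < δ := by
      rw [hε, div_mul_eq_mul_div, div_lt_iff₀ (by positivity)]
      nlinarith [norm_nonneg d]
    linarith
end Hole

open MeasureTheory
set_option linter.unusedSectionVars false

section HoleZ
open scoped RealInnerProductSpace
variable {E : Type*} [NormedAddCommGroup E] [InnerProductSpace ℝ E] [FiniteDimensional ℝ E]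
  [MeasurableSpace E] [BorelSpace E] {K : Submodule ℤ E}

theorem EU.diam (hK : EU K) (h24 : Module.finrank ℝ E = 24) (h2 : shell K 1 = ∅) {c : E} {R : ℝ}
    (hR : 0 < R) (hle : ∀ v ∈ K, R ≤ ‖v - c‖) {u v : E} (hu : u ∈ K) (hv : v ∈ K)
    (huR : ‖u - c‖ = R) (hvR : ‖v - c‖ = R) : ‖u - v‖ ^ 2 ≤ 8 := by
  obtain ⟨l', hl', h8, w, hw, e⟩ := hK.short_rep h24 h2 (K.sub_mem hu hv)
  have e1 : u - v = l' + (2:ℤ) • w := by rw [← e]; abel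
  have g1 := hle (v + w) (K.add_mem hv hw)
  have g2 := hle (v + w + l') (K.add_mem (K.add_mem hv hw) hl')
  have g1' : R ^ 2 ≤ ‖v + w - c‖ ^ 2 := by gcongr
  have g2' : R ^ 2 ≤ ‖v + w + l' - c‖ ^ 2 := by gcongr
  have k1 : v + w - c = (v - c) + w := by abel
  have k2 : v + w + l' - c = (v - c) + w + l' := by abel
  have k3 : u - c = (v - c) + w + (w + l') := by
    have : u = v + (l' + (2:ℤ) • w) := by rw [← e1]; abel
    rw [this, two_smul]; abel
  have k4 : u - v = w + (w + l') := by rw [e1, two_smul]; abel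
  have hu2 : ‖u - c‖ ^ 2 = R ^ 2 := by rw [huR]
  have hv2 : ‖v - c‖ ^ 2 = R ^ 2 := by rw [hvR]
  rw [k3] at hu2
  rw [k1] at g1'
  rw [k2] at g2'
  rw [k4]
  generalize v - c = a at *
  simp only [← real_inner_self_eq_norm_sq, inner_add_left, inner_add_right] at *
  simp only [real_inner_comm a w, real_inner_comm a l', real_inner_comm w l'] at *
  linarith

/-- The sum of the shifted vectors. -/
def msum (c : E) (m : Multiset E) : E := (m.map (fun v => v - c)).sum
/-- The quadratic form on multisets. -/
def mq (c : E) (R : ℝ) (m : Multiset E) : ℝ := (2 - R ^ 2) * (m.card : ℝ) ^ 2 + ‖msum c m‖ ^ 2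
/-- The bilinear form against a point. -/
def mb (c : E) (R : ℝ) (m : Multiset E) (v : E) : ℝ := (2 - R ^ 2) * (m.card : ℝ) + ⟪msum c m, v - c⟫

theorem msum_cons (c v : E) (m : Multiset E) : msum c (v ::ₘ m) = (v - c) + msum c m := by
  simp [msum]

theorem mb_cons (c u v : E) (R : ℝ) (m : Multiset E) :
    mb c R (u ::ₘ m) v = mb c R m v + (2 - R ^ 2 + ⟪u - c, v - c⟫) := by
  simp only [mb, msum_cons, Multiset.card_cons, inner_add_left]; push_cast; ring

theorem mq_cons (c v : E) (R : ℝ) (m : Multiset E) (hv : ‖v - c‖ = R) :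
    mq c R (v ::ₘ m) = mq c R m + 2 * mb c R m v + 2 := by
  simp only [mb, mq, msum_cons, Multiset.card_cons, norm_add_sq_real, hv, real_inner_comm (msum c m)]
  push_cast; ring

theorem mb_sum (c : E) (R : ℝ) (m t : Multiset E) :
    (t.map (fun v => mb c R m v)).sum = (2 - R ^ 2) * m.card * t.card + ⟪msum c m, msum c t⟫ := by
  induction t using Multiset.induction_on with
  | empty => simp [msum]
  | cons a t ih =>
    rw [Multiset.map_cons, Multiset.sum_cons, ih, msum_cons, inner_add_right, mb, Multiset.card_cons]
    push_cast; ring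

theorem exists_neg {S : Set E} (hSf : S.Finite) {c : E} {R : ℝ} (hR : 0 < R) (hR2 : 2 < R ^ 2)
    (hS : ∀ v ∈ S, ‖v - c‖ = R) (hc : c ∈ convexHull ℝ S) :
    ∃ m : Multiset E, m ≠ 0 ∧ (∀ v ∈ m, v ∈ S) ∧ mq c R m ≤ 0 := by
  classical
  have hc' : c ∈ convexHull ℝ (hSf.toFinset : Set E) := by simpa using hc
  rw [Finset.mem_convexHull'] at hc'
  obtain ⟨p, hp0, hp1, hpc⟩ := hc'
  set T := hSf.toFinset with hT
  have hTS : ∀ v ∈ T, ‖v - c‖ = R := fun v hv => hS v (hSf.mem_toFinset.1 hv)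
  set s : ℝ := (T.card : ℝ) with hs
  obtain ⟨k, hk⟩ := exists_nat_ge (s ^ 2 * R ^ 2 / (R ^ 2 - 2) + 1)
  have hR3 : 0 < R ^ 2 - 2 := by linarith
  have hk1 : (1:ℝ) ≤ k := by
    have : 0 ≤ s ^ 2 * R ^ 2 / (R ^ 2 - 2) := by positivity
    linarith
  have hk2 : s ^ 2 * R ^ 2 ≤ k * (R ^ 2 - 2) := by
    rw [← div_le_iff₀ hR3]; linarith
  set N : ℝ := k + s with hN
  let f : E → ℕ := fun v => ⌊N * p v⌋₊
  let m : Multiset E := ∑ v ∈ T, f v • ({v} : Multiset E)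
  have hN0 : 0 ≤ N := by positivity
  have hfl : ∀ v ∈ T, (f v : ℝ) ≤ N * p v := fun v hv => Nat.floor_le (mul_nonneg hN0 (hp0 v hv))
  have hfu : ∀ v ∈ T, N * p v < f v + 1 := fun v hv => Nat.lt_floor_add_one _
  have hcard : (m.card : ℝ) = ∑ v ∈ T, (f v : ℝ) := by
    simp [m]
  have hms : msum c m = ∑ v ∈ T, (f v : ℝ) • (v - c) := by
    have : msum c m = Multiset.sumAddMonoidHom (Multiset.mapAddMonoidHom (fun v => v - c) m) := rfl
    rw [this, map_sum, map_sum]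
    refine Finset.sum_congr rfl (fun v _ => ?_)
    rw [map_nsmul, map_nsmul, Nat.cast_smul_eq_nsmul]
    simp
  have hc1 : (k:ℝ) ≤ m.card := by
    rw [hcard]
    have : ∑ v ∈ T, (N * p v) ≤ ∑ v ∈ T, ((f v:ℝ) + 1) := Finset.sum_le_sum fun v hv => (hfu v hv).le
    rw [← Finset.mul_sum, hp1, Finset.sum_add_distrib] at this
    simp at this
    linarith
  have hz : ∑ v ∈ T, (N * p v) • (v - c) = 0 := by
    simp only [mul_smul, ← Finset.smul_sum, smul_sub, Finset.sum_sub_distrib, hpc, ← Finset.sum_smul, hp1]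
    simp
  have hms2 : ‖msum c m‖ ≤ s * R := by
    have : msum c m = ∑ v ∈ T, ((f v : ℝ) - N * p v) • (v - c) := by
      simp only [sub_smul, Finset.sum_sub_distrib]
      rw [hz, hms, sub_zero]
    rw [this]
    refine (norm_sum_le _ _).trans ?_
    rw [hs, ← nsmul_eq_mul]
    refine Finset.sum_le_card_nsmul _ _ _ (fun v hv => ?_)
    rw [norm_smul, hTS v hv]
    have : ‖(f v : ℝ) - N * p v‖ ≤ 1 := by
      rw [Real.norm_eq_abs, abs_le]
      constructor <;> linarith [hfl v hv, hfu v hv]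
    nlinarith
  refine ⟨m, ?_, ?_, ?_⟩
  · intro h
    rw [h, Multiset.card_zero, Nat.cast_zero] at hc1
    linarith
  · intro v hv
    simp only [m, Multiset.mem_sum] at hv
    obtain ⟨w, hw, hv⟩ := hv
    have := Multiset.mem_of_mem_nsmul hv
    rw [Multiset.mem_singleton] at this
    rw [this]; exact hSf.mem_toFinset.1 hw
  · rw [mq]
    have h1 : ‖msum c m‖ ^ 2 ≤ (s * R) ^ 2 := by gcongr
    have h2 : (k:ℝ) ^ 2 ≤ (m.card : ℝ) ^ 2 := by gcongr
    have h3 : (k:ℝ) ≤ k ^ 2 := by nlinarith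
    nlinarith

theorem EU.hole_z (hK : EU K) (h24 : Module.finrank ℝ E = 24) (h2 : shell K 1 = ∅) (x : E)
    (hx : ∀ v ∈ K, 2 < ‖x - v‖ ^ 2) :
    ∃ (z d : E) (m : Multiset E), m ≠ 0 ∧ (∀ v ∈ m, v ∈ K ∧ ‖v - z‖ ^ 2 = 2) ∧
      (m.map (fun v => v - z)).sum = 0 ∧ d ≠ 0 ∧ ∀ u ∈ K, ‖u - z‖ ^ 2 = 2 → ⟪u - z, d⟫ ≤ 0 := by
  obtain ⟨c, R, hR2, hR, hle, hc⟩ := hK.hole x hx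
  set S := {v | v ∈ K ∧ ‖v - c‖ = R} with hS
  have hSf : S.Finite := (hK.ball_finite c R).subset (fun v hv => ⟨hv.1, hv.2.le⟩)
  have hB : ∀ u ∈ S, ∀ v ∈ S, ∃ n : ℤ, 2 - R ^ 2 + ⟪u - c, v - c⟫ = n ∧ -2 ≤ n := by
    intro u hu v hv
    obtain ⟨n, hn⟩ := hK.even (u - v) (K.sub_mem hu.1 hv.1)
    have h8 := hK.diam h24 h2 hR hle hu.1 hv.1 hu.2 hv.2
    have e : u - v = (u - c) - (v - c) := by abel
    have h3 : ‖u - v‖ ^ 2 = R ^ 2 - 2 * ⟪u - c, v - c⟫ + R ^ 2 := by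
      rw [e, norm_sub_sq_real, hu.2, hv.2]
    refine ⟨2 - n, by push_cast; linarith, ?_⟩
    have : (n:ℝ) ≤ 4 := by linarith
    have : n ≤ 4 := by exact_mod_cast this
    omega
  have hBi : ∀ m : Multiset E, (∀ u ∈ m, u ∈ S) → ∀ v ∈ S, ∃ n : ℤ, mb c R m v = n := by
    intro m hm v hv
    induction m using Multiset.induction_on with
    | empty => exact ⟨0, by simp [mb, msum]⟩
    | cons a t ih =>
      obtain ⟨n, hn⟩ := ih (fun u hu => hm u (Multiset.mem_cons_of_mem hu))
      obtain ⟨k, hk, -⟩ := hB a (hm a (Multiset.mem_cons_self _ _)) v hv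
      exact ⟨n + k, by rw [mb_cons, hn, hk]; push_cast; ring⟩
  have hQ : ∀ m : Multiset E, (∀ u ∈ m, u ∈ S) → ∃ n : ℤ, mq c R m = 2 * n := by
    intro m hm
    induction m using Multiset.induction_on with
    | empty => exact ⟨0, by simp [mq, msum]⟩
    | cons a t ih =>
      have ha := hm a (Multiset.mem_cons_self _ _)
      have ht := fun u hu => hm u (Multiset.mem_cons_of_mem hu)
      obtain ⟨n, hn⟩ := ih ht
      obtain ⟨k, hk⟩ := hBi t ht a ha
      exact ⟨n + k + 1, by rw [mq_cons _ _ _ _ ha.2, hn, hk]; push_cast; ring⟩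
  have hne := exists_neg hSf hR hR2 (fun v hv => hv.2) hc
  obtain ⟨m, ⟨hm0, hmS, hmq⟩, hmin⟩ := WellFounded.has_min (measure (Multiset.card (α := E))).wf
    {m | m ≠ 0 ∧ (∀ v ∈ m, v ∈ S) ∧ mq c R m ≤ 0} hne
  have hq0 : mq c R 0 = 0 := by simp [mq, msum]
  have hb0 : ∀ v, mb c R 0 v = 0 := by intro v; simp [mb, msum]
  have hq1 : ∀ v ∈ S, mq c R {v} = 2 := by
    intro v hv
    rw [← Multiset.cons_zero, mq_cons _ _ _ _ hv.2, hq0, hb0]; norm_num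
  have hkey : ∀ v ∈ m, 2 * mb c R m v ≤ mq c R m := by
    intro v hv
    obtain ⟨m', e⟩ := Multiset.exists_cons_of_mem hv
    have hvS := hmS v hv
    have hm'S : ∀ u ∈ m', u ∈ S := fun u hu => hmS u (by rw [e]; exact Multiset.mem_cons_of_mem hu)
    have hm'0 : m' ≠ 0 := by
      rintro rfl
      rw [e, Multiset.cons_zero, hq1 v hvS] at hmq
      norm_num at hmq
    have hpos : 0 < mq c R m' := by
      by_contra hcon
      push Not at hcon
      refine hmin m' ⟨hm'0, hm'S, hcon⟩ ?_
      change Multiset.card m' < Multiset.card m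
      rw [e, Multiset.card_cons]; omega
    obtain ⟨n, hn⟩ := hQ m' hm'S
    rw [hn] at hpos
    have hn1 : 1 ≤ n := by
      have : (0:ℝ) < n := by linarith
      exact_mod_cast this
    have hn1' : (1:ℝ) ≤ n := by exact_mod_cast hn1
    have h1 := mq_cons c v R m' hvS.2
    have h2 := mb_cons c v v R m'
    rw [← e] at h1 h2
    rw [real_inner_self_eq_norm_sq, hvS.2] at h2
    linarith
  have hcard0 : 0 < Multiset.card m := Multiset.card_pos.2 hm0
  have hsum : (m.map (fun v => mb c R m v)).sum = mq c R m := by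
    rw [mb_sum, mq, real_inner_self_eq_norm_sq]; ring
  have hq : mq c R m = 0 := by
    by_contra hne
    have hlt : mq c R m < 0 := lt_of_le_of_ne hmq hne
    have h1 : (m.map (fun v => mb c R m v)).sum ≤ Multiset.card m * (mq c R m / 2) := by
      have := Multiset.sum_le_card_nsmul (m.map (fun v => mb c R m v)) (mq c R m / 2) (by
        intro y hy
        obtain ⟨v, hv, rfl⟩ := Multiset.mem_map.1 hy
        linarith [hkey v hv])
      rwa [Multiset.card_map, nsmul_eq_mul] at this
    rw [hsum] at h1
    have h2 : (Multiset.card m : ℝ) ≤ 2 := by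
      by_contra hcon
      push Not at hcon
      nlinarith
    have h3 : Multiset.card m ≤ 2 := by exact_mod_cast h2
    have h4 : Multiset.card m = 1 ∨ Multiset.card m = 2 := by omega
    rcases h4 with h4 | h4
    · obtain ⟨v, rfl⟩ := Multiset.card_eq_one.1 h4
      rw [hq1 v (hmS v (by simp))] at hlt
      norm_num at hlt
    · obtain ⟨u, v, rfl⟩ := Multiset.card_eq_two.1 h4
      have huS := hmS u (by simp)
      have hvS := hmS v (by simp)
      obtain ⟨n, hn, hn2⟩ := hB v hvS u huS
      have : mq c R {u, v} = mq c R {v} + 2 * mb c R {v} u + 2 := mq_cons c u R {v} huS.2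
      rw [this, hq1 v hvS, ← Multiset.cons_zero, mb_cons, hb0, hn] at hlt
      have : (-2:ℝ) ≤ n := by exact_mod_cast hn2
      linarith
  have hb : ∀ v ∈ m, mb c R m v = 0 := by
    intro v hv
    obtain ⟨m', e⟩ := Multiset.exists_cons_of_mem hv
    have h1 := hkey v hv
    have h2 : (m'.map (fun v => mb c R m v)).sum ≤ 0 := by
      have := Multiset.sum_le_card_nsmul (m'.map (fun v => mb c R m v)) 0 (by
        intro y hy
        obtain ⟨w, hw, rfl⟩ := Multiset.mem_map.1 hy
        linarith [hkey w (by rw [e]; exact Multiset.mem_cons_of_mem hw)])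
      simpa using this
    have h3 : mb c R m v + (m'.map (fun v => mb c R m v)).sum = 0 := by
      rw [← hq, ← hsum]
      conv_rhs => rw [e, Multiset.map_cons, Multiset.sum_cons, ← e]
    linarith
  set h : ℝ := (Multiset.card m : ℝ) with hh
  have hh0 : 0 < h := Nat.cast_pos.2 hcard0
  set M := msum c m with hM
  have hMn : ‖M‖ ^ 2 = (R ^ 2 - 2) * h ^ 2 := by
    rw [mq] at hq; linarith
  set d : E := -(h⁻¹ • M) with hd
  have hdn : ‖d‖ ^ 2 = R ^ 2 - 2 := by
    rw [hd, norm_neg, norm_smul, mul_pow, hMn, Real.norm_of_nonneg (by positivity)]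
    field_simp
  have hdi : ∀ v ∈ m, ⟪v - c, d⟫ = - (R ^ 2 - 2) := by
    intro v hv
    have := hb v hv
    rw [mb] at this
    rw [hd, inner_neg_right, real_inner_smul_right, real_inner_comm]
    have e : ⟪M, v - c⟫ = (R ^ 2 - 2) * h := by rw [hM, hh]; linarith
    rw [e]
    field_simp
  refine ⟨c - d, d, m, hm0, ?_, ?_, ?_, ?_⟩
  · intro v hv
    refine ⟨(hmS v hv).1, ?_⟩
    have e : v - (c - d) = (v - c) + d := by abel
    rw [e, norm_add_sq_real, (hmS v hv).2, hdi v hv, hdn]; ring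
  · have e : (fun v => v - (c - d)) = fun v => (v - c) + d := by funext v; abel
    rw [e, Multiset.sum_map_add]
    change M + _ = 0
    rw [Multiset.map_const', Multiset.sum_replicate, ← Nat.cast_smul_eq_nsmul ℝ, hd, smul_neg, smul_smul,
      ← hh, mul_inv_cancel₀ hh0.ne', one_smul, add_neg_cancel]
  · rintro h0
    rw [h0] at hdn
    simp at hdn
    linarith
  · intro u hu hun
    have h1 := hle u hu
    have h2 : R ^ 2 ≤ ‖u - c‖ ^ 2 := by gcongr
    have e : u - c = (u - (c - d)) - d := by abel
    rw [e, norm_sub_sq_real, hun, hdn] at h2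
    linarith
end HoleZ

open MeasureTheory
set_option linter.unusedSectionVars false

section Roots
open scoped RealInnerProductSpace
variable {E : Type*} [NormedAddCommGroup E] [InnerProductSpace ℝ E] [FiniteDimensional ℝ E]
  [MeasurableSpace E] [BorelSpace E] {K : Submodule ℤ E}

theorem shell_neg {n : ℕ} {r : E} (hr : r ∈ shell K n) : -r ∈ shell K n :=
  ⟨K.neg_mem hr.1, by rw [norm_neg]; exact hr.2⟩

theorem shell1_norm {r : E} (hr : r ∈ shell K 1) : ‖r‖ ^ 2 = 2 := by
  have := hr.2; simpa using this

theorem EU.inner_root (hK : EU K) {r s : E} (hr : r ∈ shell K 1) (hs : s ∈ shell K 1)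
    (hpos : 0 < ⟪r, s⟫) : r = s ∨ ⟪r, s⟫ = 1 := by
  obtain ⟨n, hn⟩ := hK.inner hr.1 hs.1
  have h1 := norm_sub_sq_real r s
  rw [shell1_norm hr, shell1_norm hs] at h1
  have h2 : 0 ≤ ‖r - s‖ ^ 2 := by positivity
  rw [hn] at hpos h1
  have h3 : (n:ℝ) ≤ 2 := by linarith
  have h3' : n ≤ 2 := by exact_mod_cast h3
  have h4 : 0 < n := by exact_mod_cast hpos
  have h5 : n = 1 ∨ n = 2 := by omega
  rcases h5 with h5 | h5
  · right; rw [hn, h5]; norm_num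
  · left
    rw [h5] at h1
    have : ‖r - s‖ ^ 2 = 0 := by rw [h1]; norm_num
    have : ‖r - s‖ = 0 := by simpa using this
    exact sub_eq_zero.1 (norm_eq_zero.1 this)

open Classical in
theorem EU.sum_split (hK : EU K) {r0 : E} (h0 : r0 ∈ shell K 1) (F : E → ℝ)
    (hF : ∀ r ∈ shell K 1, F (-r) = F r) (hF0 : ∀ r ∈ shell K 1, ⟪r, r0⟫ = 0 → F r = 0) :
    ∑ r ∈ (hK.shell_finite 1).toFinset, F r =
      2 * F r0 + 2 * ∑ r ∈ (hK.shell_finite 1).toFinset with ⟪r, r0⟫ = 1, F r := by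
  set Φ := (hK.shell_finite 1).toFinset with hΦ
  have hm : ∀ r, r ∈ Φ ↔ r ∈ shell K 1 := fun r => Set.Finite.mem_toFinset _
  have h00 : ⟪r0, r0⟫ = 2 := by rw [real_inner_self_eq_norm_sq, shell1_norm h0]
  have e1 : ∑ r ∈ Φ, F r = ∑ r ∈ Φ with 0 < ⟪r, r0⟫, F r + ∑ r ∈ Φ with ¬ 0 < ⟪r, r0⟫, F r :=
    (Finset.sum_filter_add_sum_filter_not _ _ _).symm
  have e2 : ∑ r ∈ Φ with ¬ 0 < ⟪r, r0⟫, F r = ∑ r ∈ Φ with ⟪r, r0⟫ < 0, F r := by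
    symm
    apply Finset.sum_subset
    · intro r hr
      rw [Finset.mem_filter] at hr ⊢
      exact ⟨hr.1, not_lt.2 hr.2.le⟩
    · intro r hr hr'
      rw [Finset.mem_filter] at hr hr'
      refine hF0 r ((hm r).1 hr.1) ?_
      by_contra hne
      exact hr' ⟨hr.1, lt_of_le_of_ne (not_lt.1 hr.2) hne⟩
  have e3 : ∑ r ∈ Φ with ⟪r, r0⟫ < 0, F r = ∑ r ∈ Φ with 0 < ⟪r, r0⟫, F r := by
    refine Finset.sum_nbij' (fun r => -r) (fun r => -r) ?_ ?_ ?_ ?_ ?_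
    · intro r hr
      rw [Finset.mem_filter] at hr ⊢
      refine ⟨(hm _).2 (shell_neg ((hm r).1 hr.1)), ?_⟩
      rw [inner_neg_left]; linarith [hr.2]
    · intro r hr
      rw [Finset.mem_filter] at hr ⊢
      refine ⟨(hm _).2 (shell_neg ((hm r).1 hr.1)), ?_⟩
      rw [inner_neg_left]; linarith [hr.2]
    · intro r _; simp
    · intro r _; simp
    · intro r hr
      rw [Finset.mem_filter] at hr
      exact (hF r ((hm r).1 hr.1)).symm
  have e4 : (Φ.filter (fun r => 0 < ⟪r, r0⟫)) = insert r0 (Φ.filter (fun r => ⟪r, r0⟫ = 1)) := by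
    ext r
    rw [Finset.mem_insert, Finset.mem_filter, Finset.mem_filter]
    constructor
    · rintro ⟨h1, h2⟩
      rcases hK.inner_root ((hm r).1 h1) h0 h2 with h | h
      · exact Or.inl h
      · exact Or.inr ⟨h1, h⟩
    · rintro (rfl | ⟨h1, h2⟩)
      · exact ⟨(hm _).2 h0, by rw [h00]; norm_num⟩
      · exact ⟨h1, by rw [h2]; norm_num⟩
  rw [e1, e2, e3, e4, Finset.sum_insert]
  · ring
  · rw [Finset.mem_filter, h00]; norm_num

open Classical in
theorem EU.roots_gen (hK : EU K) (h24 : Module.finrank ℝ E = 24) (ht : E → ℤ) (h : ℤ)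
    (hpos : ∀ r ∈ shell K 1, 1 ≤ ht r ∧ ht r ≤ h - 1)
    (hneg : ∀ r ∈ shell K 1, ht (-r) = h - ht r)
    (hadd : ∀ r ∈ shell K 1, ∀ s ∈ shell K 1, r + s ∈ shell K 1 →
      ht (r + s) = ht r + ht s ∨ ht (r + s) + h = ht r + ht s)
    (m : Multiset E) (hm0 : m ≠ 0) (hm : ∀ r ∈ m, r ∈ shell K 1 ∧ ht r = 1) (hms : m.sum = 0) :
    ∀ r ∈ shell K 1, r ∈ AddSubmonoid.closure {s | s ∈ shell K 1 ∧ ht s = 1} := by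
  set Φ := (hK.shell_finite 1).toFinset with hΦ
  have hmem : ∀ r, r ∈ Φ ↔ r ∈ shell K 1 := fun r => Set.Finite.mem_toFinset _
  set P : E := ∑ r ∈ Φ, (ht r : ℝ) • r with hP
  obtain ⟨H, hH⟩ := hK.venkov h24 1
  -- inner product of a root with P
  have key : ∀ r0 ∈ shell K 1, ⟪P, r0⟫ = H * ht r0 - 2 * h -
      h * ((Φ.filter (fun r => ⟪r, r0⟫ = 1)).filter (fun r => ht r + ht (r0 - r) = ht r0)).card := by
    intro r0 h0
    have h00 : ⟪r0, r0⟫ = 2 := by rw [real_inner_self_eq_norm_sq, shell1_norm h0]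
    set N1 := Φ.filter (fun r => ⟪r, r0⟫ = 1) with hN1
    have hN : (N1.card : ℝ) = H - 4 := by
      have h1 := hH r0
      have h2 := hK.sum_split h0 (fun r => ⟪r0, r⟫ ^ 2) (fun r _ => by simp [inner_neg_right])
        (fun r _ hr => by rw [real_inner_comm, hr]; norm_num)
      rw [h1] at h2
      have h3 : ∑ r ∈ N1, ⟪r0, r⟫ ^ 2 = N1.card := by
        rw [Finset.sum_congr rfl (g := fun _ => (1:ℝ))]
        · simp
        · intro r hr
          rw [hN1, Finset.mem_filter] at hr
          rw [real_inner_comm, hr.2]; norm_num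
      rw [← hΦ, ← hN1, h3, h00] at h2
      linarith
    have hsub : ∀ r ∈ N1, r0 - r ∈ N1 := by
      intro r hr
      rw [hN1, Finset.mem_filter, hmem] at hr ⊢
      refine ⟨⟨K.sub_mem h0.1 hr.1.1, ?_⟩, ?_⟩
      · rw [norm_sub_sq_real, shell1_norm h0, shell1_norm hr.1, real_inner_comm, hr.2]; norm_num
      · rw [inner_sub_left, h00, hr.2]; norm_num
    have hsumN : 2 * ∑ r ∈ N1, (ht r : ℝ) = ∑ r ∈ N1, ((ht r : ℝ) + ht (r0 - r)) := by
      rw [Finset.sum_add_distrib, two_mul]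
      congr 1
      refine Finset.sum_nbij' (fun r => r0 - r) (fun r => r0 - r) hsub hsub ?_ ?_ ?_
      · intro r _; simp
      · intro r _; simp
      · intro r _; simp
    have hsumN2 : ∑ r ∈ N1, ((ht r : ℝ) + ht (r0 - r)) =
        N1.card * (ht r0 + h) - h * (N1.filter (fun r => ht r + ht (r0 - r) = ht r0)).card := by
      have : ∀ r ∈ N1, ((ht r : ℝ) + ht (r0 - r)) =
          (ht r0 + h) - h * (if ht r + ht (r0 - r) = ht r0 then 1 else 0) := by
        intro r hr
        have hr' := hsub r hr
        rw [hN1, Finset.mem_filter, hmem] at hr hr'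
        have := hadd r hr.1 (r0 - r) hr'.1 (by rw [add_sub_cancel]; exact h0)
        rw [add_sub_cancel] at this
        split_ifs with hc
        · have : ((ht r + ht (r0 - r) : ℤ) : ℝ) = ht r0 := by rw [hc]
          push_cast at this
          linarith
        · rcases this with h1 | h1
          · exact absurd h1.symm hc
          · have : ((ht r0 + h : ℤ) : ℝ) = ((ht r + ht (r0 - r) : ℤ) : ℝ) := by rw [h1]
            push_cast at this
            linarith
      rw [Finset.sum_congr rfl this, Finset.sum_sub_distrib, ← Finset.mul_sum, Finset.sum_boole]
      simp
      ring
    have hPr : ⟪P, r0⟫ = ∑ r ∈ Φ, (ht r : ℝ) * ⟪r, r0⟫ := by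
      rw [hP, sum_inner]
      exact Finset.sum_congr rfl (fun r _ => by rw [real_inner_smul_left])
    have hsym : ∑ r ∈ Φ, (ht r : ℝ) * ⟪r, r0⟫ = ∑ r ∈ Φ, ((h:ℝ) - ht r) * (-⟪r, r0⟫) := by
      refine Finset.sum_nbij' (fun r => -r) (fun r => -r) ?_ ?_ ?_ ?_ ?_
      · intro r hr; exact (hmem _).2 (shell_neg ((hmem r).1 hr))
      · intro r hr; exact (hmem _).2 (shell_neg ((hmem r).1 hr))
      · intro r _; simp
      · intro r _; simp
      · intro r hr
        rw [hneg r ((hmem r).1 hr), inner_neg_left]; push_cast; ring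
    have h2P : 2 * ⟪P, r0⟫ = ∑ r ∈ Φ, (2 * (ht r : ℝ) - h) * ⟪r, r0⟫ := by
      rw [two_mul, hPr]
      nth_rewrite 2 [hsym]
      rw [← Finset.sum_add_distrib]
      exact Finset.sum_congr rfl (fun r _ => by ring)
    have hsplit := hK.sum_split h0 (fun r => (2 * (ht r : ℝ) - h) * ⟪r, r0⟫)
      (fun r hr => by simp only [hneg r hr, inner_neg_left]; push_cast; ring)
      (fun r _ hr => by simp only [hr, mul_zero])
    have h5 : ∑ r ∈ N1, (2 * (ht r : ℝ) - h) * ⟪r, r0⟫ = 2 * ∑ r ∈ N1, (ht r : ℝ) - N1.card * h := by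
      rw [Finset.mul_sum, ← nsmul_eq_mul, ← Finset.sum_const, ← Finset.sum_sub_distrib]
      refine Finset.sum_congr rfl (fun r hr => ?_)
      rw [hN1, Finset.mem_filter] at hr
      rw [hr.2]; ring
    rw [← hΦ, ← h2P, ← hN1, h5, hsumN, hsumN2, h00, hN] at hsplit
    linarith
  have hh0 : 0 < h := by
    obtain ⟨r, hr⟩ := Multiset.exists_mem_of_ne_zero hm0
    have := hpos r (hm r hr).1
    omega
  have hD1 : ∀ r0 ∈ shell K 1, ht r0 = 1 → ⟪P, r0⟫ = H - 2 * h := by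
    intro r0 h0 h1
    rw [key r0 h0, h1]
    have : ((Φ.filter (fun r => ⟪r, r0⟫ = 1)).filter (fun r => ht r + ht (r0 - r) = 1)) = ∅ := by
      rw [Finset.filter_eq_empty_iff]
      intro r hr hc
      rw [Finset.mem_filter, hmem] at hr
      have hs : r0 - r ∈ shell K 1 := by
        refine ⟨K.sub_mem h0.1 hr.1.1, ?_⟩
        rw [norm_sub_sq_real, shell1_norm h0, shell1_norm hr.1, real_inner_comm, hr.2]; norm_num
      have g1 := hpos r hr.1
      have g2 := hpos _ hs
      omega
    rw [this]; simp
  have hHh : H = 2 * h := by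
    have h1 : ∀ t : Multiset E, (∀ r ∈ t, r ∈ shell K 1 ∧ ht r = 1) →
        ⟪P, t.sum⟫ = t.card * (H - 2 * h) := by
      intro t
      induction t using Multiset.induction_on with
      | empty => intro _; simp
      | cons a t ih =>
        intro hh
        have ha := hh a (Multiset.mem_cons_self _ _)
        rw [Multiset.sum_cons, inner_add_right, ih (fun r hr => hh r (Multiset.mem_cons_of_mem hr)),
          hD1 a ha.1 ha.2, Multiset.card_cons]
        push_cast; ring
    have h2 := h1 m hm
    rw [hms, inner_zero_right] at h2
    have h3 : (0:ℝ) < m.card := Nat.cast_pos.2 (Multiset.card_pos.2 hm0)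
    rcases mul_eq_zero.1 h2.symm with h4 | h4
    · exact absurd h4 h3.ne'
    · linarith
  have hhR : (0:ℝ) < h := by exact_mod_cast hh0
  have hQ : ∀ n : ℕ, ∀ r ∈ shell K 1, ht r ≤ n → 0 ≤ ⟪P, r⟫ ∧
      (⟪P, r⟫ = 0 → r ∈ AddSubmonoid.closure {s | s ∈ shell K 1 ∧ ht s = 1}) := by
    intro n
    induction n with
    | zero =>
      intro r hr h0
      have := hpos r hr
      push_cast at h0
      omega
    | succ n ih =>
      intro r0 h0 hle
      have hk := key r0 h0
      rcases Finset.eq_empty_or_nonempty ((Φ.filter (fun r => ⟪r, r0⟫ = 1)).filter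
        (fun r => ht r + ht (r0 - r) = ht r0)) with he | ⟨s, hs⟩
      · rw [he, hHh] at hk
        simp only [Finset.card_empty, Nat.cast_zero, mul_zero, sub_zero] at hk
        have hk' : ⟪P, r0⟫ = 2 * h * (ht r0 - 1) := by linarith
        have g := (hpos r0 h0).1
        have g' : (1:ℝ) ≤ ht r0 := by exact_mod_cast g
        refine ⟨?_, fun hz => ?_⟩
        · rw [hk']
          have : (0:ℝ) ≤ ht r0 - 1 := by linarith
          positivity
        · rw [hk'] at hz
          have : (ht r0 : ℝ) = 1 := by
            rcases mul_eq_zero.1 hz with h1 | h1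
            · linarith
            · linarith
          exact AddSubmonoid.subset_closure ⟨h0, by exact_mod_cast this⟩
      · rw [Finset.mem_filter, Finset.mem_filter, hmem] at hs
        obtain ⟨⟨hs1, hs2⟩, hs3⟩ := hs
        have ht' : r0 - s ∈ shell K 1 := by
          refine ⟨K.sub_mem h0.1 hs1.1, ?_⟩
          rw [norm_sub_sq_real, shell1_norm h0, shell1_norm hs1, real_inner_comm, hs2]; norm_num
        have g1 := hpos s hs1
        have g2 := hpos _ ht'
        push_cast at hle
        obtain ⟨p1, p2⟩ := ih s hs1 (by omega)
        obtain ⟨q1, q2⟩ := ih _ ht' (by omega)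
        have e : s + (r0 - s) = r0 := by abel
        have e' : ⟪P, r0⟫ = ⟪P, s⟫ + ⟪P, r0 - s⟫ := by rw [← inner_add_right, e]
        refine ⟨by linarith, fun hz => ?_⟩
        rw [← e]
        exact AddSubmonoid.add_mem _ (p2 (by linarith)) (q2 (by linarith))
  intro r hr
  have g1 := hQ (ht r).toNat r hr (by have := hpos r hr; omega)
  have g2 := hQ (ht (-r)).toNat (-r) (shell_neg hr) (by have := hpos _ (shell_neg hr); omega)
  rw [inner_neg_right] at g2
  exact g1.2 (by linarith [g1.1, g2.1])

end Roots

open MeasureTheory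
set_option linter.unusedSectionVars false

section Nb
open scoped RealInnerProductSpace
variable {E : Type*} [NormedAddCommGroup E] [InnerProductSpace ℝ E] [FiniteDimensional ℝ E]
  [MeasurableSpace E] [BorelSpace E] {K : Submodule ℤ E}

/-- `x` lies in the neighbour lattice, with height `a`. -/
def NbRep (K : Submodule ℤ E) (z x : E) (a : ℤ) : Prop :=
  x + (a : ℝ) • z ∈ K ∧ ∃ n : ℤ, ⟪x, z⟫ + a * ‖z‖ ^ 2 / 2 = n

theorem NbRep.add {z x y : E} {a b : ℤ} (h1 : NbRep K z x a) (h2 : NbRep K z y b) :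
    NbRep K z (x + y) (a + b) := by
  obtain ⟨h1, n, hn⟩ := h1
  obtain ⟨h2, k, hk⟩ := h2
  refine ⟨?_, n + k, ?_⟩
  · have : x + y + ((a + b : ℤ) : ℝ) • z = (x + (a : ℝ) • z) + (y + (b : ℝ) • z) := by
      push_cast; module
    rw [this]; exact K.add_mem h1 h2
  · rw [inner_add_left]; push_cast; linarith

theorem NbRep.neg {z x : E} {a : ℤ} (h1 : NbRep K z x a) : NbRep K z (-x) (-a) := by
  obtain ⟨h1, n, hn⟩ := h1
  refine ⟨?_, -n, ?_⟩
  · have : -x + ((-a : ℤ) : ℝ) • z = -(x + (a : ℝ) • z) := by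
      push_cast; module
    rw [this]; exact K.neg_mem h1
  · rw [inner_neg_left]; push_cast; linarith

theorem NbRep.zero {z : E} : NbRep K z 0 0 := ⟨by simp, 0, by simp⟩

/-- The neighbour lattice. -/
def Nb (K : Submodule ℤ E) (z : E) : Submodule ℤ E :=
  AddSubgroup.toIntSubmodule
    { carrier := {x | ∃ a, NbRep K z x a}
      zero_mem' := ⟨0, NbRep.zero⟩
      add_mem' := fun ⟨a, ha⟩ ⟨b, hb⟩ => ⟨a + b, ha.add hb⟩
      neg_mem' := fun ⟨a, ha⟩ => ⟨-a, ha.neg⟩ }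

theorem mem_Nb {z x : E} : x ∈ Nb K z ↔ ∃ a, NbRep K z x a := Iff.rfl

/-- the heights of zero -/
def Nb0 (K : Submodule ℤ E) (z : E) : AddSubgroup ℤ where
  carrier := {a | NbRep K z 0 a}
  zero_mem' := NbRep.zero
  add_mem' := fun {a b} ha hb => by
    have := NbRep.add ha hb; rwa [add_zero] at this
  neg_mem' := fun {a} ha => by
    have := NbRep.neg ha; rwa [neg_zero] at this

theorem EU.nb_vertex (hK : EU K) {z v : E} (hv : v ∈ K) (hn : ‖v - z‖ ^ 2 = 2) :
    NbRep K z (v - z) 1 := by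
  obtain ⟨n, hn'⟩ := hK.even v hv
  refine ⟨by simpa using hv, n - 1, ?_⟩
  rw [norm_sub_sq_real] at hn
  rw [inner_sub_left, real_inner_self_eq_norm_sq]
  push_cast
  linarith

theorem sum_rep {z : E} (m : Multiset E) (hm : ∀ v ∈ m, NbRep K z (v - z) 1) :
    NbRep K z (m.map (fun v => v - z)).sum m.card := by
  induction m using Multiset.induction_on with
  | empty => simpa using NbRep.zero
  | cons a t ih =>
    have h1 := hm a (Multiset.mem_cons_self _ _)
    have h2 := ih (fun v hv => hm v (Multiset.mem_cons_of_mem hv))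
    rw [Multiset.map_cons, Multiset.sum_cons, Multiset.card_cons]
    have := h1.add h2
    rw [add_comm (1:ℤ)] at this
    exact_mod_cast this

theorem EU.cyc (hK : EU K) {z : E} {h : ℤ} (hh : h ≠ 0) (hz : (h : ℝ) • z ∈ K) :
    ∃ l0 ∈ K, ∃ k0 : ℤ, ∃ e' : ℤ, e' ≠ 0 ∧ e' * (⟪l0, z⟫ + k0) = 1 ∧
      ∀ l ∈ K, ∃ t : ℤ, ⟪l, z⟫ = t * (⟪l0, z⟫ + k0) := by
  have hhR : (h:ℝ) ≠ 0 := by exact_mod_cast hh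
  let J : AddSubgroup ℤ :=
    { carrier := {n | ∃ l ∈ K, ∃ k : ℤ, (n : ℝ) = h * (⟪l, z⟫ + k)}
      zero_mem' := ⟨0, K.zero_mem, 0, by simp⟩
      add_mem' := by
        rintro a b ⟨l, hl, k, e⟩ ⟨l', hl', k', e'⟩
        refine ⟨l + l', K.add_mem hl hl', k + k', ?_⟩
        rw [inner_add_left]; push_cast; rw [e, e']; ring
      neg_mem' := by
        rintro a ⟨l, hl, k, e⟩
        refine ⟨-l, K.neg_mem hl, -k, ?_⟩
        rw [inner_neg_left]; push_cast; rw [e]; ring }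
  obtain ⟨e, he⟩ := Int.subgroup_cyclic J
  have heJ : e ∈ J := by rw [he]; exact AddSubgroup.mem_closure_singleton.2 ⟨1, by simp⟩
  have hhJ : h ∈ J := ⟨0, K.zero_mem, 1, by simp⟩
  have hJ : ∀ n ∈ J, ∃ t : ℤ, n = t * e := by
    intro n hn
    rw [he] at hn
    obtain ⟨t, ht⟩ := AddSubgroup.mem_closure_singleton.1 hn
    exact ⟨t, by rw [← ht, smul_eq_mul]⟩
  obtain ⟨l0, hl0, k0, e0⟩ := heJ
  obtain ⟨e', h'⟩ := hJ h hhJ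
  refine ⟨l0, hl0, k0, e', ?_, ?_, ?_⟩
  · rintro rfl; simp at h'; exact hh h'
  · have : (h:ℝ) = e' * e := by exact_mod_cast h'
    rw [e0] at this
    have h2 : (h:ℝ) * (e' * (⟪l0, z⟫ + k0)) = h * 1 := by linarith
    exact mul_left_cancel₀ hhR h2
  · intro l hl
    obtain ⟨n, hn⟩ := hK.inner hl hz
    rw [real_inner_smul_right] at hn
    obtain ⟨t, ht⟩ := hJ n ⟨l, hl, 0, by simp [hn]⟩
    refine ⟨t, ?_⟩
    have : (n:ℝ) = t * e := by exact_mod_cast ht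
    rw [← hn, e0] at this
    have h2 : (h:ℝ) * ⟪l, z⟫ = h * (t * (⟪l0, z⟫ + k0)) := by linarith
    exact mul_left_cancel₀ hhR h2

theorem EU.nb_eu (hK : EU K) {z v : E} {h : ℤ} (hh : h ≠ 0) (hz : (h : ℝ) • z ∈ K)
    (hv : v ∈ K) (hvn : ‖v - z‖ ^ 2 = 2) : EU (Nb K z) := by
  constructor
  · rintro x ⟨a, hx, n, hn⟩
    obtain ⟨k, hk⟩ := hK.even _ hx
    refine ⟨k - a * n, ?_⟩
    rw [norm_add_sq_real, real_inner_smul_right, norm_smul, mul_pow, Real.norm_eq_abs, sq_abs] at hk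
    push_cast
    rw [← hn]
    linarith
  · intro y hy
    obtain ⟨l0, hl0, k0, e', he', he1, hcyc⟩ := hK.cyc hh hz
    have hz0 : ∀ l ∈ K, ∀ n : ℤ, ⟪l, z⟫ = n → ∃ k : ℤ, ⟪y, l⟫ = k := by
      intro l hl n hn
      exact hy l ⟨0, by simpa using hl, n, by simpa using hn⟩
    have hb : ∃ b : ℤ, ⟪y, l0⟫ = b * (⟪l0, z⟫ + k0) := by
      obtain ⟨b, hb⟩ := hz0 ((e':ℤ) • l0) (K.smul_mem _ hl0) (1 - e' * k0) (by
        rw [← Int.cast_smul_eq_zsmul ℝ, real_inner_smul_left]; push_cast; linarith)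
      rw [← Int.cast_smul_eq_zsmul ℝ, real_inner_smul_right] at hb
      refine ⟨b, ?_⟩
      rw [← hb]
      calc ⟪y, l0⟫ = (e' * (⟪l0, z⟫ + k0)) * ⟪y, l0⟫ := by rw [he1, one_mul]
        _ = _ := by ring
    obtain ⟨b, hb⟩ := hb
    have hyb : y + ((-b : ℤ) : ℝ) • z ∈ K := by
      apply hK.dual
      intro l hl
      obtain ⟨t, ht⟩ := hcyc l hl
      obtain ⟨k, hk⟩ := hz0 (l - (t:ℤ) • l0) (K.sub_mem hl (K.smul_mem _ hl0)) (t * k0) (by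
        rw [inner_sub_left, ← Int.cast_smul_eq_zsmul ℝ, real_inner_smul_left, ht]; push_cast; ring)
      rw [inner_sub_right, ← Int.cast_smul_eq_zsmul ℝ, real_inner_smul_right, hb] at hk
      refine ⟨k, ?_⟩
      rw [inner_add_left, real_inner_smul_left, real_inner_comm l z, ht]
      push_cast
      linarith
    obtain ⟨k, hk⟩ := hy (v - z) ⟨1, hK.nb_vertex hv hvn⟩
    obtain ⟨hv1, n, hn⟩ := hK.nb_vertex hv hvn
    obtain ⟨j, hj⟩ := hK.inner hyb hv
    refine ⟨-b, hyb, j - k + b * n + b * 0, ?_⟩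
    rw [inner_sub_right] at hk
    rw [inner_sub_left, real_inner_self_eq_norm_sq] at hn
    rw [inner_add_left, real_inner_smul_left, real_inner_comm v z] at hj
    push_cast at *
    rw [← hj, ← hk, ← hn]
    ring

theorem EU.covering (hK : EU K) (h24 : Module.finrank ℝ E = 24) (h2 : shell K 1 = ∅) (x : E) :
    ∃ v ∈ K, ‖x - v‖ ^ 2 ≤ 2 := by
  by_contra hcon
  push Not at hcon
  obtain ⟨z, d, m, hm0, hmv, hms, hd0, hd⟩ := hK.hole_z h24 h2 x hcon
  have hrep : ∀ v ∈ m, NbRep K z (v - z) 1 := fun v hv => hK.nb_vertex (hmv v hv).1 (hmv v hv).2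
  have hcard : (m.card : ℤ) ∈ Nb0 K z := by
    have := sum_rep m hrep
    rwa [hms] at this
  have hc0 : (m.card : ℤ) ≠ 0 := by
    have := Multiset.card_pos.2 hm0
    omega
  obtain ⟨v0, hv0⟩ := Multiset.exists_mem_of_ne_zero hm0
  have hN : EU (Nb K z) := hK.nb_eu hc0 (by simpa using hcard.1) (hmv v0 hv0).1 (hmv v0 hv0).2
  obtain ⟨g, hg⟩ := Int.subgroup_cyclic (Nb0 K z)
  have hg0 : g ≠ 0 := by
    rintro rfl
    rw [hg] at hcard
    obtain ⟨t, ht⟩ := AddSubgroup.mem_closure_singleton.1 hcard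
    rw [smul_zero] at ht
    exact hc0 ht.symm
  set h : ℤ := |g| with hh
  have hpos : 0 < h := abs_pos.2 hg0
  have hmem0 : ∀ a, NbRep K z 0 a ↔ h ∣ a := by
    intro a
    have : NbRep K z 0 a ↔ a ∈ Nb0 K z := Iff.rfl
    rw [this, hg, AddSubgroup.mem_closure_singleton, hh, abs_dvd]
    constructor
    · rintro ⟨t, rfl⟩; exact ⟨t, by rw [smul_eq_mul, mul_comm]⟩
    · rintro ⟨t, rfl⟩; exact ⟨t, by rw [smul_eq_mul, mul_comm]⟩
  classical
  let ht : E → ℤ := fun x => if hx : x ∈ Nb K z then (Classical.choose hx) % h else 0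
  have hht : ∀ x a, NbRep K z x a → h ∣ ht x - a := by
    intro x a ha
    have hx : x ∈ Nb K z := ⟨a, ha⟩
    have h1 := Classical.choose_spec hx
    simp only [ht, dif_pos hx]
    have h3 := h1.add ha.neg
    rw [add_neg_cancel, hmem0] at h3
    have h4 : h ∣ (Classical.choose hx) % h - Classical.choose hx := by
      refine ⟨- (Classical.choose hx / h), ?_⟩
      have := Int.mul_ediv_add_emod (Classical.choose hx) h
      rw [mul_neg]; linarith
    have := dvd_add h4 h3
    have e : (Classical.choose hx) % h - Classical.choose hx + (Classical.choose hx + -a) =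
      (Classical.choose hx) % h - a := by ring
    rwa [e] at this
  have hrange : ∀ x, 0 ≤ ht x ∧ ht x < h := by
    intro x
    simp only [ht]
    split_ifs
    · exact ⟨Int.emod_nonneg _ hpos.ne', Int.emod_lt_of_pos _ hpos⟩
    · exact ⟨le_rfl, hpos⟩
  have hrepht : ∀ x ∈ Nb K z, NbRep K z x (ht x) := by
    rintro x ⟨a, ha⟩
    have h1 := hht x a ha
    rw [← hmem0] at h1
    have := h1.add ha
    rwa [zero_add, sub_add_cancel] at this
  have hroot : ∀ r ∈ shell (Nb K z) 1, ht r ≠ 0 := by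
    intro r hr h0
    have h1 := hrepht r hr.1
    rw [h0] at h1
    have h3 : r ∈ shell K 1 := ⟨by simpa using h1.1, hr.2⟩
    rw [h2] at h3
    exact h3
  have hvr : ∀ u ∈ K, ‖u - z‖ ^ 2 = 2 → u - z ∈ shell (Nb K z) 1 := by
    intro u hu hun
    exact ⟨⟨1, hK.nb_vertex hu hun⟩, by rw [hun]; norm_num⟩
  have hh1 : 1 < h := by
    have := hroot _ (hvr v0 (hmv v0 hv0).1 (hmv v0 hv0).2)
    have := hrange (v0 - z)
    omega
  have huniq : ∀ a b : ℤ, h ∣ a - b → -h < a - b → a - b < h → a = b := by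
    intro a b h1 h3 h4
    have := Int.eq_zero_of_abs_lt_dvd h1 (abs_lt.2 ⟨h3, h4⟩)
    omega
  have hgen := hN.roots_gen h24 ht h
    (fun r hr => by have := hroot r hr; have := hrange r; omega)
    (fun r hr => by
      have h1 := hht _ _ (hrepht r hr.1).neg
      have h3 := hroot r hr
      have h4 := hroot _ (shell_neg hr)
      have h5 := hrange r
      have h6 := hrange (-r)
      refine huniq _ _ ?_ (by omega) (by omega)
      have := dvd_sub h1 (dvd_refl h)
      have e : ht (-r) - (h - ht r) = ht (-r) - -ht r - h := by ring
      rwa [e])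
    (fun r hr s hs hrs => by
      have h1 := hht _ _ ((hrepht r hr.1).add (hrepht s hs.1))
      have h5 := hrange r
      have h6 := hrange s
      have h7 := hrange (r + s)
      by_cases hc : ht r + ht s < h
      · left
        exact huniq _ _ h1 (by omega) (by omega)
      · right
        refine huniq _ _ ?_ (by omega) (by omega)
        have := dvd_add h1 (dvd_refl h)
        have e : ht (r + s) + h - (ht r + ht s) = ht (r + s) - (ht r + ht s) + h := by ring
        rwa [e])
    (m.map (fun v => v - z)) (by simpa using hm0)
    (by
      intro r hr
      obtain ⟨v, hv, rfl⟩ := Multiset.mem_map.1 hr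
      refine ⟨hvr v (hmv v hv).1 (hmv v hv).2, ?_⟩
      have h1 := hht _ _ (hrep v hv)
      have := hrange (v - z)
      exact huniq _ _ h1 (by omega) (by omega))
    hms
  have hle : ∀ r ∈ shell (Nb K z) 1, ⟪r, d⟫ ≤ 0 := by
    suffices hcl : ∀ x ∈ AddSubmonoid.closure {s | s ∈ shell (Nb K z) 1 ∧ ht s = 1}, ⟪x, d⟫ ≤ 0 from
      fun r hr => hcl r (hgen r hr)
    intro r hr
    induction hr using AddSubmonoid.closure_induction with
    | mem x hx =>
      obtain ⟨hx1, hx2⟩ := hx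
      have h1 := hrepht x hx1.1
      rw [hx2] at h1
      have h3 := h1.1
      have e : x = (x + ((1:ℤ):ℝ) • z) - z := by push_cast; module
      have := hd _ h3 (by rw [← e]; exact shell1_norm hx1)
      rwa [← e] at this
    | zero => simp
    | add x y _ _ hx hy =>
      rw [inner_add_left]
      linarith
  have hzero : ∀ r ∈ shell (Nb K z) 1, ⟪d, r⟫ = 0 := by
    intro r hr
    have h1 := hle r hr
    have h3 := hle _ (shell_neg hr)
    rw [inner_neg_left] at h3
    rw [real_inner_comm]; linarith
  obtain ⟨H, hH⟩ := hN.venkov h24 1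
  have h1 := hH d
  rw [Finset.sum_eq_zero (fun r hr => by
    rw [hzero r ((Set.Finite.mem_toFinset _).1 hr)]; norm_num)] at h1
  have hdd : ⟪d, d⟫ ≠ 0 := inner_self_ne_zero.2 hd0
  have hH0 : H = 0 := by
    rcases mul_eq_zero.1 h1.symm with h | h
    · exact h
    · exact absurd h hdd
  have hr0 := hvr v0 (hmv v0 hv0).1 (hmv v0 hv0).2
  have h3 := hH (v0 - z)
  rw [hH0, zero_mul, Finset.sum_eq_zero_iff_of_nonneg (fun _ _ => by positivity)] at h3
  have h4 := h3 (v0 - z) ((Set.Finite.mem_toFinset _).2 hr0)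
  rw [real_inner_self_eq_norm_sq, shell1_norm hr0] at h4
  norm_num at h4

end Nb

open MeasureTheory
set_option linter.unusedSectionVars false

section Concrete

theorem ω_eq : ω = ((-1/2 : ℝ) : ℂ) + ((Real.sqrt 3 / 2 : ℝ) : ℂ) * Complex.I := by
  have h : (2 * (Real.pi : ℂ) * Complex.I / 3) = ((2 * Real.pi / 3 : ℝ) : ℂ) * Complex.I := by
    push_cast; ring
  have e : 2 * Real.pi / 3 = Real.pi - Real.pi / 3 := by ring
  rw [ω, h, Complex.exp_mul_I, ← Complex.ofReal_cos, ← Complex.ofReal_sin, e, Real.cos_pi_sub,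
    Real.sin_pi_sub, Real.cos_pi_div_three, Real.sin_pi_div_three]
  push_cast; ring

theorem ω_re : ω.re = -1/2 := by rw [ω_eq]; simp
theorem ω_im : ω.im = Real.sqrt 3 / 2 := by rw [ω_eq]; simp

theorem ω_sq : ω ^ 2 = -1 - ω := by
  have h3 : Real.sqrt 3 * Real.sqrt 3 = 3 := Real.mul_self_sqrt (by norm_num)
  apply Complex.ext
  · simp only [pow_two, Complex.mul_re, Complex.sub_re, Complex.neg_re, Complex.one_re, ω_re, ω_im]
    linarith
  · simp only [pow_two, Complex.mul_im, Complex.sub_im, Complex.neg_im, Complex.one_im, ω_re, ω_im]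
    ring

theorem ω_conj : conj ω = -1 - ω := by
  apply Complex.ext
  · simp only [Complex.conj_re, Complex.sub_re, Complex.neg_re, Complex.one_re, ω_re]; norm_num
  · simp [ω_im]

theorem θ_eq : θ = 1 + 2 * ω := by rw [θ, ω_conj]; ring

theorem ω_ne : ω ≠ 0 := by
  intro h; have := ω_re; rw [h] at this; norm_num at this

theorem ω_cube : ω ^ 3 = 1 := by
  linear_combination (ω - 1) * ω_sq

theorem eis_ext {p q p' q' : ℝ} (h : (p : ℂ) + q * ω = p' + q' * ω) : p = p' ∧ q = q' := by
  have h1 := congrArg Complex.im h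
  have h2 := congrArg Complex.re h
  simp [ω_re, ω_im] at h1 h2
  have hq : q = q' := h1
  rw [hq] at h2
  exact ⟨by linarith, hq⟩

theorem eis_ext_int {p q p' q' : ℤ} (h : (p : ℂ) + q * ω = p' + q' * ω) : p = p' ∧ q = q' := by
  have := eis_ext (p := p) (q := q) (p' := p') (q' := q') (by exact_mod_cast h)
  exact_mod_cast this

/-- `Re (x̄ y)` in Eisenstein coordinates. -/
theorem eis_normSq (p q : ℝ) : Complex.normSq ((p : ℂ) + q * ω) = p ^ 2 - p * q + q ^ 2 := by
  have h3 : Real.sqrt 3 * Real.sqrt 3 = 3 := Real.mul_self_sqrt (by norm_num)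
  rw [Complex.normSq_apply]
  simp [ω_re, ω_im]
  linear_combination (q ^ 2 / 4) * h3

theorem exists_eis (y : ℂ) : ∃ p q : ℝ, y = (p : ℂ) + q * ω := by
  have h3 : Real.sqrt 3 ≠ 0 := by positivity
  refine ⟨y.re + y.im / Real.sqrt 3, 2 * y.im / Real.sqrt 3, ?_⟩
  apply Complex.ext
  · simp [ω_re, ω_im]; field_simp; ring
  · simp [ω_re, ω_im]; field_simp

/-- Integer description of the Leech lattice. -/
structure ILeech (p q : Fin 12 → ℤ) : Prop where
  c1 : ∀ i, (3:ℤ) ∣ (p i + q i) - (p 0 + q 0)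
  c2 : ∀ j, (3:ℤ) ∣ ∑ i, golay j i * q i
  c3 : (9:ℤ) ∣ ∑ i, (p i + q i) + 3 * (p 0 + q 0)

theorem golay_orth (j k : Fin 6) : (3:ℤ) ∣ ∑ i, golay j i * golay k i := by
  revert j k; decide

theorem golay_one (j : Fin 6) : (3:ℤ) ∣ ∑ i, golay j i := by
  revert j; decide

/-- First six coordinates. -/
def lft (j : Fin 6) : Fin 12 := Fin.castLE (by norm_num) j

theorem golay_sys (q : Fin 12 → ℤ) (h : ∀ j, (3:ℤ) ∣ ∑ i, golay j i * q i) (i : Fin 12) :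
    (3:ℤ) ∣ q i - ∑ j, golay j i * q (lft j) := by
  have h0 := h 0
  have h1 := h 1
  have h2 := h 2
  have h3 := h 3
  have h4 := h 4
  have h5 := h 5
  simp [Fin.sum_univ_succ, golay, Fin.succ] at h0 h1 h2 h3 h4 h5
  fin_cases i <;> simp [Fin.sum_univ_succ, golay, lft, Fin.succ, Fin.castLE] <;> omega

end Concrete

open MeasureTheory
set_option linter.unusedSectionVars false

section Concrete2

theorem mem_leech {lam : Fin 12 → ℂ} :
    lam ∈ Leech ↔ ∃ p q : Fin 12 → ℤ, ILeech p q ∧ ∀ i, lam i = (p i : ℂ) + q i * ω := by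
  constructor
  · rintro ⟨m, s, za, zb, -, hlam, a, b, hab⟩
    have hsum : ∑ i, za i - m = a - 2 * b ∧ ∑ i, zb i = 2 * a - b := by
      apply eis_ext_int
      rw [θ_eq] at hab
      rw [Finset.sum_add_distrib, ← Finset.sum_mul] at hab
      push_cast
      linear_combination hab + 2 * (b:ℂ) * ω_sq
    have hg : ∃ k : ℤ, ∑ i, ∑ j, golay j i * s j = 3 * k := by
      rw [Finset.sum_comm]
      have : ∀ j, (3:ℤ) ∣ ∑ i, golay j i * s j := by
        intro j; rw [← Finset.sum_mul]; exact Dvd.dvd.mul_right (golay_one j) _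
      exact Finset.dvd_sum (fun j _ => this j)
    obtain ⟨k, hk⟩ := hg
    have hself : ∀ j, (3:ℤ) ∣ ∑ i, golay j i * ∑ l, golay l i * s l := by
      intro j
      have : ∑ i, golay j i * ∑ l, golay l i * s l = ∑ l, s l * ∑ i, golay j i * golay l i := by
        simp only [Finset.mul_sum]
        rw [Finset.sum_comm]
        exact Finset.sum_congr rfl fun l _ => Finset.sum_congr rfl fun i _ => by ring
      rw [this]
      exact Finset.dvd_sum fun l _ => Dvd.dvd.mul_left (golay_orth j l) _
    refine ⟨fun i => m + (∑ j, golay j i * s j) + 3 * za i,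
      fun i => 2 * (∑ j, golay j i * s j) + 3 * zb i, ⟨?_, ?_, ?_⟩, ?_⟩
    · intro i
      generalize (∑ j, golay j i * s j) = c
      generalize (∑ j, golay j 0 * s j) = c'
      omega
    · intro j
      have e : ∑ i, golay j i * (2 * (∑ j, golay j i * s j) + 3 * zb i) =
          2 * (∑ i, golay j i * ∑ l, golay l i * s l) + 3 * ∑ i, golay j i * zb i := by
        rw [Finset.mul_sum, Finset.mul_sum, ← Finset.sum_add_distrib]
        exact Finset.sum_congr rfl fun i _ => by ring
      rw [e]
      exact dvd_add (Dvd.dvd.mul_left (hself j) _) (Dvd.intro _ rfl)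
    · have e : ∑ i : Fin 12, (m + (∑ j, golay j i * s j) + 3 * za i +
          (2 * (∑ j, golay j i * s j) + 3 * zb i)) =
          12 * m + 3 * (∑ i, ∑ j, golay j i * s j) + 3 * ∑ i, za i + 3 * ∑ i, zb i := by
        simp only [Finset.sum_add_distrib, ← Finset.mul_sum]
        simp
        ring
      rw [e, hk]
      generalize (∑ j, golay j 0 * s j) = c'
      obtain ⟨h1, h2⟩ := hsum
      omega
    · intro i
      rw [hlam i, θ_eq]
      push_cast
      ring
  · rintro ⟨p, q, ⟨c1, c2, c3⟩, hlam⟩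
    have hsys := golay_sys q c2
    -- choose the residue
    obtain ⟨m, hm, n, hn⟩ : ∃ m : ℤ, (m = 0 ∨ m = 1 ∨ m = -1) ∧ ∃ n : ℤ, p 0 + q 0 = m + 3 * n := by
      have : (p 0 + q 0) % 3 = 0 ∨ (p 0 + q 0) % 3 = 1 ∨ (p 0 + q 0) % 3 = 2 := by omega
      rcases this with h | h | h
      · exact ⟨0, by simp, (p 0 + q 0) / 3, by omega⟩
      · exact ⟨1, by simp, (p 0 + q 0) / 3, by omega⟩
      · exact ⟨-1, by simp, (p 0 + q 0) / 3 + 1, by omega⟩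
    let s : Fin 6 → ℤ := fun j => - q (lft j)
    have hc : ∀ i, ∑ j, golay j i * s j = - ∑ j, golay j i * q (lft j) := by
      intro i; simp [s]
    have hzb : ∀ i, ∃ b : ℤ, q i = 2 * (∑ j, golay j i * s j) + 3 * b := by
      intro i
      obtain ⟨k, hk⟩ := hsys i
      refine ⟨k + ∑ j, golay j i * q (lft j), ?_⟩
      rw [hc]; linarith
    choose zb hzb using hzb
    have hza : ∀ i, ∃ a : ℤ, p i = m + (∑ j, golay j i * s j) + 3 * a := by
      intro i
      obtain ⟨k, hk⟩ := c1 i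
      refine ⟨k + n - zb i - ∑ j, golay j i * s j, ?_⟩
      have := hzb i
      linarith
    choose za hza using hza
    have hg : ∃ k : ℤ, ∑ i, ∑ j, golay j i * s j = 3 * k := by
      rw [Finset.sum_comm]
      have : ∀ j, (3:ℤ) ∣ ∑ i, golay j i * s j := by
        intro j; rw [← Finset.sum_mul]; exact Dvd.dvd.mul_right (golay_one j) _
      exact Finset.dvd_sum (fun j _ => this j)
    obtain ⟨k, hk⟩ := hg
    have hS : ∑ i, (p i + q i) = 12 * m + 3 * (∑ i, ∑ j, golay j i * s j) + 3 * ∑ i, za i + 3 * ∑ i, zb i := by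
      have : ∀ i, p i + q i = m + (∑ j, golay j i * s j) + 3 * za i +
          (2 * (∑ j, golay j i * s j) + 3 * zb i) := fun i => by rw [← hza, ← hzb]
      rw [Finset.sum_congr rfl (fun i _ => this i)]
      simp only [Finset.sum_add_distrib, ← Finset.mul_sum]
      simp
      ring
    refine ⟨m, s, za, zb, hm, ?_, ?_⟩
    · intro i
      rw [hlam i, θ_eq]
      have h1 : (p i : ℂ) = ((m + (∑ j, golay j i * s j) + 3 * za i : ℤ) : ℂ) := by rw [← hza]
      have h2 : (q i : ℂ) = ((2 * (∑ j, golay j i * s j) + 3 * zb i : ℤ) : ℂ) := by rw [← hzb]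
      rw [h1, h2]
      push_cast
      ring
    · rw [hS, hk] at c3
      have hd : (3:ℤ) ∣ ∑ i, za i + ∑ i, zb i - m := by omega
      obtain ⟨t, ht⟩ := hd
      refine ⟨∑ i, zb i - t, ∑ i, zb i - 2 * t, ?_⟩
      rw [Finset.sum_add_distrib, ← Finset.sum_mul, θ_eq]
      have : ((∑ i, za i : ℤ) : ℂ) = ((3 * t + m - ∑ i, zb i : ℤ) : ℂ) := by
        congr 1; linarith
      push_cast at this ⊢
      linear_combination this - 2 * (∑ i, (zb i : ℂ) - 2 * t) * ω_sq

theorem ILeech.sumq {p q : Fin 12 → ℤ} (h : ILeech p q) : (3:ℤ) ∣ ∑ i, q i := by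
  have hs := golay_sys q h.c2
  have h1 : (3:ℤ) ∣ ∑ i, (q i - ∑ j, golay j i * q (lft j)) := Finset.dvd_sum fun i _ => hs i
  rw [Finset.sum_sub_distrib, Finset.sum_comm] at h1
  have h2 : (3:ℤ) ∣ ∑ j, ∑ i, golay j i * q (lft j) := Finset.dvd_sum fun j _ => by
    rw [← Finset.sum_mul]; exact Dvd.dvd.mul_right (golay_one j) _
  omega

theorem ILeech.sumq2 {p q : Fin 12 → ℤ} (h : ILeech p q) : (3:ℤ) ∣ ∑ i, q i ^ 2 := by
  have hs := golay_sys q h.c2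
  have h1 : (3:ℤ) ∣ ∑ i, q i * (q i - ∑ j, golay j i * q (lft j)) :=
    Finset.dvd_sum fun i _ => Dvd.dvd.mul_left (hs i) _
  have e : ∑ i, q i * (q i - ∑ j, golay j i * q (lft j)) =
      ∑ i, q i ^ 2 - ∑ j, q (lft j) * ∑ i, golay j i * q i := by
    simp only [mul_sub, Finset.sum_sub_distrib, Finset.mul_sum]
    congr 1
    · exact Finset.sum_congr rfl fun i _ => by ring
    · rw [Finset.sum_comm]
      exact Finset.sum_congr rfl fun l _ => Finset.sum_congr rfl fun i _ => by ring
  rw [e] at h1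
  have h2 : (3:ℤ) ∣ ∑ j, q (lft j) * ∑ i, golay j i * q i := Finset.dvd_sum fun j _ =>
    Dvd.dvd.mul_left (h.c2 j) _
  omega

/-- The integral norm. -/
def iN (p q : Fin 12 → ℤ) : ℤ := ∑ i, (p i ^ 2 - p i * q i + q i ^ 2)

theorem ILeech.norm9 {p q : Fin 12 → ℤ} (h : ILeech p q) : (9:ℤ) ∣ iN p q := by
  choose k hk using h.c1
  set m := p 0 + q 0 with hm
  have hp : ∀ i, p i = m + 3 * k i - q i := fun i => by have := hk i; linarith
  have e : iN p q = 12 * m ^ 2 + 6 * m * (∑ i, k i) + 9 * (∑ i, k i ^ 2) -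
      3 * (m * ∑ i, q i) - 9 * ∑ i, k i * q i + 3 * ∑ i, q i ^ 2 := by
    have : ∀ i, p i ^ 2 - p i * q i + q i ^ 2 = m ^ 2 + 6 * m * k i + 9 * k i ^ 2 - 3 * (m * q i)
        - 9 * (k i * q i) + 3 * q i ^ 2 := by
      intro i; rw [hp i]; ring
    rw [iN, Finset.sum_congr rfl (fun i _ => this i)]
    simp only [Finset.sum_add_distrib, Finset.sum_sub_distrib, ← Finset.mul_sum]
    simp
  have hS : ∑ i, (p i + q i) = 12 * m + 3 * ∑ i, k i := by
    have : ∀ i, p i + q i = m + 3 * k i := fun i => by have := hk i; linarith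
    rw [Finset.sum_congr rfl (fun i _ => this i)]
    simp only [Finset.sum_add_distrib, ← Finset.mul_sum]
    simp
  have h3 := h.c3
  rw [hS] at h3
  obtain ⟨a, ha⟩ := h.sumq
  obtain ⟨b, hb⟩ := h.sumq2
  obtain ⟨c, hc⟩ := h3
  rw [e, ha, hb]
  have hk' : ∑ i, k i = 3 * c - 5 * m := by linarith
  rw [hk']
  exact ⟨-2 * m ^ 2 + 2 * m * c + ∑ i, k i ^ 2 - m * a - ∑ i, k i * q i + b, by ring⟩

theorem ILeech.add {p q p' q' : Fin 12 → ℤ} (h : ILeech p q) (h' : ILeech p' q') :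
    ILeech (p + p') (q + q') := by
  refine ⟨fun i => ?_, fun j => ?_, ?_⟩
  · obtain ⟨a, ha⟩ := h.c1 i
    obtain ⟨b, hb⟩ := h'.c1 i
    exact ⟨a + b, by simp only [Pi.add_apply]; linarith⟩
  · have := dvd_add (h.c2 j) (h'.c2 j)
    simp only [Pi.add_apply, mul_add, Finset.sum_add_distrib]
    exact this
  · obtain ⟨a, ha⟩ := h.c3
    obtain ⟨b, hb⟩ := h'.c3
    simp only [Finset.sum_add_distrib] at ha hb
    exact ⟨a + b, by simp only [Pi.add_apply, Finset.sum_add_distrib]; linarith⟩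

theorem ILeech.neg {p q : Fin 12 → ℤ} (h : ILeech p q) : ILeech (-p) (-q) := by
  refine ⟨fun i => ?_, fun j => ?_, ?_⟩
  · obtain ⟨a, ha⟩ := h.c1 i
    exact ⟨-a, by simp only [Pi.neg_apply]; linarith⟩
  · have := (h.c2 j).neg_right
    simp only [Pi.neg_apply, mul_neg, Finset.sum_neg_distrib]
    exact this
  · obtain ⟨a, ha⟩ := h.c3
    simp only [Finset.sum_add_distrib] at ha
    exact ⟨-a, by simp only [Pi.neg_apply, Finset.sum_add_distrib, Finset.sum_neg_distrib]; linarith⟩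

theorem ILeech.omega {p q : Fin 12 → ℤ} (h : ILeech p q) : ILeech (-q) (p - q) := by
  have hq := h.sumq
  choose k hk using h.c1
  refine ⟨fun i => ?_, fun j => ?_, ?_⟩
  · simp only [Pi.neg_apply, Pi.sub_apply]
    have := hk i
    omega
  · simp only [Pi.sub_apply]
    have e : ∑ i, golay j i * (p i - q i) =
        (p 0 + q 0) * ∑ i, golay j i + 3 * ∑ i, golay j i * k i - 2 * ∑ i, golay j i * q i := by
      simp only [Finset.mul_sum, ← Finset.sum_add_distrib, ← Finset.sum_sub_distrib]
      exact Finset.sum_congr rfl fun i _ => by linear_combination golay j i * hk i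
    rw [e]
    exact dvd_sub (dvd_add (Dvd.dvd.mul_left (golay_one j) _) (Dvd.intro _ rfl))
      (Dvd.dvd.mul_left (h.c2 j) _)
  · have h3 := h.c3
    simp only [Pi.neg_apply, Pi.sub_apply, Finset.sum_add_distrib, Finset.sum_sub_distrib,
      Finset.sum_neg_distrib] at h3 ⊢
    omega

end Concrete2

open MeasureTheory
set_option linter.unusedSectionVars false

section Concrete3

/-- Indicator of a nonzero residue mod 3. -/
def w3 (n : ℕ) : ℕ := if n % 3 = 0 then 0 else 1

set_option maxRecDepth 100000 in
set_option synthInstance.maxSize 10000 in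
set_option synthInstance.maxHeartbeats 1000000 in
theorem golay_wt : ∀ a : ℕ, a < 3 → ∀ b : ℕ, b < 3 → ∀ c : ℕ, c < 3 → ∀ d : ℕ, d < 3 →
    ∀ e : ℕ, e < 3 → ∀ f : ℕ, f < 3 →
    (4 ≤ w3 a + w3 b + w3 c + w3 d + w3 e + w3 f + w3 (2 * (b + c + d + e + f)) +
      w3 (a + c + 2 * d + 2 * e + f) + w3 (a + b + d + 2 * e + 2 * f) +
      w3 (a + 2 * b + c + e + 2 * f) + w3 (a + 2 * b + 2 * c + d + f) +
      w3 (a + b + 2 * c + 2 * d + e)) ∨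
    (a = 0 ∧ b = 0 ∧ c = 0 ∧ d = 0 ∧ e = 0 ∧ f = 0) := by
  decide +kernel

/-- Integer indicator. -/
def i3 (n : ℤ) : ℤ := if (3:ℤ) ∣ n then 0 else 1

theorem i3_eq {x : ℤ} {n : ℕ} (h : (3:ℤ) ∣ x - n) : i3 x = w3 n := by
  unfold i3 w3
  have : ((3:ℤ) ∣ x) ↔ n % 3 = 0 := by omega
  by_cases hx : (3:ℤ) ∣ x
  · rw [if_pos hx, if_pos (this.1 hx)]; rfl
  · rw [if_neg hx, if_neg (fun h => hx (this.2 h))]; rfl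

theorem ILeech.weight {p q : Fin 12 → ℤ} (h : ILeech p q) :
    4 ≤ ∑ i, i3 (q i) ∨ ∀ i, (3:ℤ) ∣ q i := by
  have hs := golay_sys q h.c2
  have key : ∀ x : ℤ, ∃ n : ℕ, n < 3 ∧ (3:ℤ) ∣ x - n := by
    intro x
    exact ⟨(x % 3).toNat, by omega, by omega⟩
  obtain ⟨a, ha, ha'⟩ := key (q 0)
  obtain ⟨b, hb, hb'⟩ := key (q 1)
  obtain ⟨c, hc, hc'⟩ := key (q 2)
  obtain ⟨d, hd, hd'⟩ := key (q 3)
  obtain ⟨e, he, he'⟩ := key (q 4)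
  obtain ⟨f, hf, hf'⟩ := key (q 5)
  have h6 := hs 6
  have h7 := hs 7
  have h8 := hs 8
  have h9 := hs 9
  have h10 := hs 10
  have h11 := hs 11
  simp [Fin.sum_univ_succ, golay, lft, Fin.succ, Fin.castLE] at h6 h7 h8 h9 h10 h11
  rcases golay_wt a ha b hb c hc d hd e he f hf with hw | ⟨rfl, rfl, rfl, rfl, rfl, rfl⟩
  · left
    have hsum : ∑ i, i3 (q i) = i3 (q 0) + i3 (q 1) + i3 (q 2) + i3 (q 3) + i3 (q 4) + i3 (q 5) +
        i3 (q 6) + i3 (q 7) + i3 (q 8) + i3 (q 9) + i3 (q 10) + i3 (q 11) := by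
      simp [Fin.sum_univ_succ, Fin.succ]; ring
    rw [hsum, i3_eq ha', i3_eq hb', i3_eq hc', i3_eq hd', i3_eq he', i3_eq hf',
      i3_eq (x := q 6) (n := 2 * (b + c + d + e + f)) (by push_cast; omega),
      i3_eq (x := q 7) (n := a + c + 2 * d + 2 * e + f) (by push_cast; omega),
      i3_eq (x := q 8) (n := a + b + d + 2 * e + 2 * f) (by push_cast; omega),
      i3_eq (x := q 9) (n := a + 2 * b + c + e + 2 * f) (by push_cast; omega),
      i3_eq (x := q 10) (n := a + 2 * b + 2 * c + d + f) (by push_cast; omega),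
      i3_eq (x := q 11) (n := a + b + 2 * c + 2 * d + e) (by push_cast; omega)]
    exact_mod_cast hw
  · right
    intro i
    fin_cases i <;> simp <;> omega

theorem eis_nonneg (p q : ℤ) : 0 ≤ p ^ 2 - p * q + q ^ 2 := by nlinarith [sq_nonneg (p - q), sq_nonneg p, sq_nonneg q, sq_nonneg (p+q)]

theorem eis_zero {p q : ℤ} (h : p ^ 2 - p * q + q ^ 2 ≤ 0) : p = 0 ∧ q = 0 := by
  constructor
  · have : p ^ 2 ≤ 0 := by nlinarith [sq_nonneg (p - 2 * q)]
    nlinarith [pow_eq_zero_iff (two_ne_zero) |>.1 (le_antisymm this (sq_nonneg p))]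
  · have : q ^ 2 ≤ 0 := by nlinarith [sq_nonneg (2 * p - q)]
    nlinarith [pow_eq_zero_iff (two_ne_zero) |>.1 (le_antisymm this (sq_nonneg q))]

theorem ILeech.ne9 {p q : Fin 12 → ℤ} (h : ILeech p q) : iN p q ≠ 9 := by
  intro hN
  rw [iN] at hN
  by_cases hm : (3:ℤ) ∣ p 0 + q 0
  · have hm' : ∀ i, (3:ℤ) ∣ p i + q i := fun i => by have := h.c1 i; omega
    have h3 : ∀ i, (3:ℤ) ∣ p i ^ 2 - p i * q i + q i ^ 2 := by
      intro i
      obtain ⟨k, hk⟩ := hm' i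
      refine ⟨k * (p i + q i) - p i * q i, ?_⟩
      linear_combination (p i + q i) * hk
    rcases h.weight with hw | hw
    · have : ∀ i, 3 * i3 (q i) ≤ p i ^ 2 - p i * q i + q i ^ 2 := by
        intro i
        unfold i3
        split_ifs with hq
        · simpa using eis_nonneg _ _
        · have h0 := eis_nonneg (p i) (q i)
          have h1 : p i ^ 2 - p i * q i + q i ^ 2 ≠ 0 := by
            intro h0
            have := (eis_zero h0.le).2
            rw [this] at hq
            exact hq (dvd_zero _)
          have := h3 i
          omega
      have h4 := Finset.sum_le_sum (s := Finset.univ) (fun i _ => this i)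
      rw [hN, ← Finset.mul_sum] at h4
      linarith
    · have hpd : ∀ i, (3:ℤ) ∣ p i := fun i => by have := hw i; have := hm' i; omega
      choose a ha using hpd
      choose b hb using hw
      have h1 : ∑ i, (a i ^ 2 - a i * b i + b i ^ 2) = 1 := by
        have : ∀ i, p i ^ 2 - p i * q i + q i ^ 2 = 9 * (a i ^ 2 - a i * b i + b i ^ 2) := by
          intro i; rw [ha, hb]; ring
        rw [Finset.sum_congr rfl (fun i _ => this i), ← Finset.mul_sum] at hN
        linarith
      have h2 : (3:ℤ) ∣ ∑ i, (a i + b i) := by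
        have h3 := h.c3
        have : ∀ i, p i + q i = 3 * (a i + b i) := by intro i; rw [ha, hb]; ring
        rw [Finset.sum_congr rfl (fun i _ => this i), ← Finset.mul_sum, this 0] at h3
        omega
      obtain ⟨i, hi⟩ : ∃ i, a i ^ 2 - a i * b i + b i ^ 2 ≠ 0 := by
        by_contra hcon
        push Not at hcon
        rw [Finset.sum_eq_zero (fun i _ => hcon i)] at h1
        norm_num at h1
      have hi1 : 1 ≤ a i ^ 2 - a i * b i + b i ^ 2 := by
        have := eis_nonneg (a i) (b i); omega
      rw [← Finset.add_sum_erase _ _ (Finset.mem_univ i)] at h1 h2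
      have hr : 0 ≤ ∑ j ∈ Finset.univ.erase i, (a j ^ 2 - a j * b j + b j ^ 2) :=
        Finset.sum_nonneg fun j _ => eis_nonneg _ _
      have hr0 : ∑ j ∈ Finset.univ.erase i, (a j ^ 2 - a j * b j + b j ^ 2) = 0 := by linarith
      rw [Finset.sum_eq_zero_iff_of_nonneg (fun j _ => eis_nonneg _ _)] at hr0
      rw [Finset.sum_eq_zero (s := Finset.univ.erase i) (f := fun j => a j + b j) (fun j hj => by
        have := eis_zero (hr0 j hj).le
        rw [this.1, this.2]; rfl), add_zero] at h2
      obtain ⟨k, hk⟩ := h2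
      have : a i ^ 2 - a i * b i + b i ^ 2 = 1 := by linarith
      have e : a i ^ 2 - a i * b i + b i ^ 2 = 3 * (k * (a i + b i) - a i * b i) := by
        linear_combination (a i + b i) * hk
      omega
  · have hge : ∀ i, 1 ≤ p i ^ 2 - p i * q i + q i ^ 2 := by
      intro i
      have h0 := eis_nonneg (p i) (q i)
      have h1 : p i ^ 2 - p i * q i + q i ^ 2 ≠ 0 := by
        intro h0
        have := eis_zero h0.le
        have h2 := h.c1 i
        rw [this.1, this.2] at h2
        omega
      omega
    have := Finset.sum_le_sum (s := Finset.univ) (fun i _ => hge i)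
    rw [hN] at this
    simp at this

end Concrete3

open MeasureTheory
set_option linter.unusedSectionVars false

section Concrete4
open scoped RealInnerProductSpace

/-- The real 24-dimensional Euclidean space. -/
abbrev E24 : Type := EuclideanSpace ℝ (Fin 12 × Fin 2)

/-- The scaling factor. -/
def sc : ℝ := 3 / Real.sqrt 2

theorem sc_sq : sc ^ 2 = 9 / 2 := by
  rw [sc, div_pow, Real.sq_sqrt (by norm_num)]; norm_num

theorem sc_pos : 0 < sc := by unfold sc; positivity

/-- Scaled identification with complex space. -/
def cx (x : E24) : Fin 12 → ℂ := fun i => ⟨sc * x (i, 0), sc * x (i, 1)⟩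

theorem cx_add (x y : E24) : cx (x + y) = cx x + cx y := by
  funext i
  apply Complex.ext <;> simp [cx] <;> ring

theorem cx_sub (x y : E24) : cx (x - y) = cx x - cx y := by
  funext i
  apply Complex.ext <;> simp [cx] <;> ring

theorem cx_neg (x : E24) : cx (-x) = -cx x := by
  funext i
  apply Complex.ext <;> simp [cx]

theorem cx_surj (y : Fin 12 → ℂ) : ∃ x, cx x = y := by
  refine ⟨WithLp.toLp 2 (fun ij => if ij.2 = 0 then (y ij.1).re / sc else (y ij.1).im / sc), ?_⟩
  have := sc_pos.ne'
  funext i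
  apply Complex.ext <;> simp [cx] <;> field_simp

theorem cx_norm (x : E24) : ‖x‖ ^ 2 = 2 / 9 * ∑ i, Complex.normSq (cx x i) := by
  rw [EuclideanSpace.norm_sq_eq, Fintype.sum_prod_type, Finset.mul_sum]
  refine Finset.sum_congr rfl fun i _ => ?_
  simp only [Fin.sum_univ_two, Complex.normSq_apply, cx, Real.norm_eq_abs, sq_abs]
  linear_combination -(2 / 9 * (x (i, 0) ^ 2 + x (i, 1) ^ 2)) * sc_sq

theorem leech_add {x y : Fin 12 → ℂ} (hx : x ∈ Leech) (hy : y ∈ Leech) : x + y ∈ Leech := by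
  rw [mem_leech] at *
  obtain ⟨p, q, h, e⟩ := hx
  obtain ⟨p', q', h', e'⟩ := hy
  refine ⟨p + p', q + q', h.add h', fun i => ?_⟩
  simp only [Pi.add_apply, e, e']; push_cast; ring

theorem leech_neg {x : Fin 12 → ℂ} (hx : x ∈ Leech) : -x ∈ Leech := by
  rw [mem_leech] at *
  obtain ⟨p, q, h, e⟩ := hx
  refine ⟨-p, -q, h.neg, fun i => ?_⟩
  simp only [Pi.neg_apply, e]; push_cast; ring

theorem leech_zero : (0 : Fin 12 → ℂ) ∈ Leech := by
  rw [mem_leech]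
  exact ⟨0, 0, ⟨by simp, by simp, by simp⟩, by simp⟩

theorem leech_omega {x : Fin 12 → ℂ} (hx : x ∈ Leech) : ω • x ∈ Leech := by
  rw [mem_leech] at *
  obtain ⟨p, q, h, e⟩ := hx
  refine ⟨-q, p - q, h.omega, fun i => ?_⟩
  simp only [Pi.neg_apply, Pi.sub_apply, Pi.smul_apply, smul_eq_mul, e]; push_cast
  linear_combination (q i : ℂ) * ω_sq

/-- The Leech lattice in Euclidean space. -/
def LL : Submodule ℤ E24 :=
  AddSubgroup.toIntSubmodule
    { carrier := {x | cx x ∈ Leech}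
      zero_mem' := by
        have : cx 0 = 0 := by funext i; apply Complex.ext <;> simp [cx]
        change cx 0 ∈ Leech
        rw [this]; exact leech_zero
      add_mem' := fun {a b} ha hb => by
        change cx (a + b) ∈ Leech
        rw [cx_add]; exact leech_add ha hb
      neg_mem' := fun {a} ha => by
        change cx (-a) ∈ Leech
        rw [cx_neg]; exact leech_neg ha }

theorem mem_LL {x : E24} : x ∈ LL ↔ cx x ∈ Leech := Iff.rfl

theorem cx_norm_eis {x : E24} {P Q : Fin 12 → ℝ} (h : ∀ i, cx x i = (P i : ℂ) + Q i * ω) :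
    ‖x‖ ^ 2 = 2 / 9 * ∑ i, (P i ^ 2 - P i * Q i + Q i ^ 2) := by
  rw [cx_norm]
  congr 1
  exact Finset.sum_congr rfl fun i _ => by rw [h, eis_normSq]

theorem cx_inner_eis {x y : E24} {P Q P' Q' : Fin 12 → ℝ} (h : ∀ i, cx x i = (P i : ℂ) + Q i * ω)
    (h' : ∀ i, cx y i = (P' i : ℂ) + Q' i * ω) :
    9 * ⟪x, y⟫ = ∑ i, ((2 * P i - Q i) * P' i + (2 * Q i - P i) * Q' i) := by
  have h1 := cx_norm_eis h
  have h2 := cx_norm_eis h'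
  have h3 := cx_norm_eis (x := x + y) (P := P + P') (Q := Q + Q') (fun i => by
    rw [cx_add, Pi.add_apply, h, h']; simp; ring)
  rw [norm_add_sq_real, h1, h2] at h3
  have e : ∑ i, ((2 * P i - Q i) * P' i + (2 * Q i - P i) * Q' i) =
      ∑ i, ((P + P') i ^ 2 - (P + P') i * (Q + Q') i + (Q + Q') i ^ 2) -
      ∑ i, (P i ^ 2 - P i * Q i + Q i ^ 2) - ∑ i, (P' i ^ 2 - P' i * Q' i + Q' i ^ 2) := by
    rw [← Finset.sum_sub_distrib, ← Finset.sum_sub_distrib]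
    exact Finset.sum_congr rfl fun i _ => by simp only [Pi.add_apply]; ring
  rw [e]
  linarith

theorem LL_norm {x : E24} (hx : x ∈ LL) : ∃ p q, ILeech p q ∧ ‖x‖ ^ 2 = 2 / 9 * (iN p q : ℤ) := by
  obtain ⟨p, q, h, e⟩ := mem_leech.1 (mem_LL.1 hx)
  refine ⟨p, q, h, ?_⟩
  rw [cx_norm_eis (P := fun i => p i) (Q := fun i => q i) (fun i => by rw [e]; push_cast; rfl), iN]
  push_cast; rfl

theorem LL_shell : shell LL 1 = ∅ := by
  rw [Set.eq_empty_iff_forall_notMem]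
  intro x hx
  obtain ⟨p, q, h, e⟩ := LL_norm hx.1
  rw [shell1_norm hx] at e
  refine h.ne9 ?_
  have : (iN p q : ℝ) = 9 := by linarith
  exact_mod_cast this

theorem LL_EU : EU LL := by
  constructor
  · intro x hx
    obtain ⟨p, q, h, e⟩ := LL_norm hx
    obtain ⟨n, hn⟩ := h.norm9
    refine ⟨n, ?_⟩
    rw [e, hn]; push_cast; ring
  · intro x hx
    rw [mem_LL, mem_leech]
    choose P Q hPQ using fun i => exists_eis (cx x i)
    have key : ∀ p q : Fin 12 → ℤ, ILeech p q →
        ∃ n : ℤ, ∑ i, ((2 * P i - Q i) * p i + (2 * Q i - P i) * q i) = 9 * n := by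
      intro p q h
      obtain ⟨y, hy⟩ := cx_surj (fun i => (p i : ℂ) + q i * ω)
      have hyL : y ∈ LL := mem_LL.2 (mem_leech.2 ⟨p, q, h, fun i => by rw [hy]⟩)
      obtain ⟨n, hn⟩ := hx y hyL
      refine ⟨n, ?_⟩
      rw [← hn, cx_inner_eis (P' := fun i => p i) (Q' := fun i => q i) hPQ (fun i => by
        rw [hy]; push_cast; rfl)]
    have t1 : ∀ i, ∃ n : ℤ, P i - Q i = n := by
      intro i
      obtain ⟨n, hn⟩ := key (Pi.single i 3) (Pi.single i (-3)) ⟨fun k => by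
          by_cases hk : k = i <;> by_cases h0 : (0 : Fin 12) = i <;> simp [Pi.single_apply, hk, h0], fun j => by
          simp [Pi.single_apply], by
          simp only [Finset.sum_add_distrib, Finset.sum_pi_single', Pi.single_apply]; simp; split_ifs <;> norm_num⟩
      refine ⟨n, ?_⟩
      simp [Pi.single_apply, Finset.sum_add_distrib] at hn
      linarith
    have t2 : ∀ i, ∃ n : ℤ, 2 * P i - Q i = n := by
      intro i
      obtain ⟨n, hn⟩ := key (Pi.single i 9) 0 ⟨fun k => by
          by_cases hk : k = i <;> by_cases h0 : (0 : Fin 12) = i <;> simp [Pi.single_apply, hk, h0] <;> norm_num, fun j => by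
          simp, by simp [Pi.single_apply]; split_ifs <;> norm_num⟩
      refine ⟨n, ?_⟩
      simp [Pi.single_apply] at hn
      linarith
    have hP : ∀ i, ∃ n : ℤ, P i = n := by
      intro i
      obtain ⟨a, ha⟩ := t1 i
      obtain ⟨b, hb⟩ := t2 i
      exact ⟨b - a, by push_cast; linarith⟩
    have hQ : ∀ i, ∃ n : ℤ, Q i = n := by
      intro i
      obtain ⟨a, ha⟩ := t1 i
      obtain ⟨b, hb⟩ := t2 i
      exact ⟨b - 2 * a, by push_cast; linarith⟩
    choose p hp using hP
    choose q hq using hQ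
    have key' : ∀ p' q' : Fin 12 → ℤ, ILeech p' q' →
        (9:ℤ) ∣ ∑ i, ((2 * p i - q i) * p' i + (2 * q i - p i) * q' i) := by
      intro p' q' h
      obtain ⟨n, hn⟩ := key p' q' h
      refine ⟨n, ?_⟩
      simp only [hp, hq] at hn
      exact_mod_cast hn
    have c1 : ∀ i, (3:ℤ) ∣ (p i + q i) - (p 0 + q 0) := by
      intro i
      have := key' (Pi.single i 3 - Pi.single 0 3) 0 ⟨fun k => by
          have h3 : ∀ k, (3:ℤ) ∣ (Pi.single i 3 - Pi.single 0 3 : Fin 12 → ℤ) k := by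
            intro k
            simp only [Pi.sub_apply, Pi.single_apply]; split_ifs <;> norm_num
          simp only [Pi.zero_apply, add_zero]
          exact dvd_sub (h3 _) (h3 _), fun j => by
          simp, by
          simp [Pi.single_apply, Finset.sum_sub_distrib]
          split_ifs <;> norm_num⟩
      simp [Pi.single_apply, mul_sub, Finset.sum_sub_distrib] at this
      omega
    have c2 : ∀ j, (3:ℤ) ∣ ∑ i, golay j i * q i := by
      intro j
      have := key' (golay j) (fun i => 2 * golay j i) ⟨fun k => by
          omega, fun k => by
          have e : ∑ i, golay k i * (2 * golay j i) = 2 * ∑ i, golay k i * golay j i := by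
            rw [Finset.mul_sum]; exact Finset.sum_congr rfl fun i _ => by ring
          rw [e]; exact Dvd.dvd.mul_left (golay_orth k j) _, by
          have := golay_one j
          simp only [Finset.sum_add_distrib, ← Finset.mul_sum]
          omega⟩
      have e : ∑ i, ((2 * p i - q i) * golay j i + (2 * q i - p i) * (2 * golay j i)) =
          3 * ∑ i, golay j i * q i := by
        rw [Finset.mul_sum]; exact Finset.sum_congr rfl fun i _ => by ring
      rw [e] at this
      omega
    refine ⟨p, q, ⟨c1, c2, ?_⟩, fun i => by rw [hPQ, hp, hq]; push_cast; rfl⟩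
    have hsq : (3:ℤ) ∣ ∑ i, q i := by
      have hs := golay_sys q c2
      have h1 : (3:ℤ) ∣ ∑ i, (q i - ∑ j, golay j i * q (lft j)) := Finset.dvd_sum fun i _ => hs i
      rw [Finset.sum_sub_distrib, Finset.sum_comm] at h1
      have h2 : (3:ℤ) ∣ ∑ j, ∑ i, golay j i * q (lft j) := Finset.dvd_sum fun j _ => by
        rw [← Finset.sum_mul]; exact Dvd.dvd.mul_right (golay_one j) _
      omega
    have := key' (fun i => 1 + Pi.single (M := fun _ => ℤ) 0 3 i) 0 ⟨fun k => by
        simp only [Pi.zero_apply, add_zero, Pi.single_apply]; split_ifs <;> norm_num, fun j => by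
        simp, by
        simp [Pi.single_apply, Finset.sum_add_distrib]⟩
    have e : ∑ i, ((2 * p i - q i) * (1 + Pi.single (M := fun _ => ℤ) 0 3 i) + (2 * q i - p i) * (0 : Fin 12 → ℤ) i) =
        2 * ∑ i, (p i + q i) - 3 * ∑ i, q i + 3 * (2 * p 0 - q 0) := by
      simp only [mul_add, Finset.sum_add_distrib, Finset.mul_sum]
      simp [Pi.single_apply, Finset.sum_sub_distrib, ← Finset.mul_sum]
      ring
    rw [e] at this
    omega

theorem leech_cover (y : Fin 12 → ℂ) : ∃ l ∈ Leech, ∑ i, Complex.normSq (y i - l i) ≤ 9 := by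
  obtain ⟨x, hx⟩ := cx_surj y
  obtain ⟨v, hv, h⟩ := LL_EU.covering (by simp) LL_shell x
  refine ⟨cx v, hv, ?_⟩
  rw [cx_norm, cx_sub, hx] at h
  simp only [Pi.sub_apply] at h
  linarith

/-- Norms of Leech vectors are multiples of 9 (unscaled). -/
theorem leech_norm {l : Fin 12 → ℂ} (hl : l ∈ Leech) :
    ∃ n : ℤ, ∑ i, Complex.normSq (l i) = 9 * n ∧ n ≠ 1 := by
  obtain ⟨p, q, h, e⟩ := mem_leech.1 hl
  obtain ⟨n, hn⟩ := h.norm9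
  refine ⟨n, ?_, ?_⟩
  · have : (iN p q : ℝ) = 9 * n := by exact_mod_cast hn
    rw [← this, iN]
    push_cast
    refine Finset.sum_congr rfl fun i _ => ?_
    rw [e]
    have := eis_normSq (p i) (q i)
    push_cast at this
    exact this
  · rintro rfl
    exact h.ne9 (by rw [hn]; norm_num)

end Concrete4

open MeasureTheory
set_option linter.unusedSectionVars false

section Refl

/-- The Leech part of a vector. -/
def lp (v : V) : Fin 12 → ℂ := fun i => v (Fin.castLE (by norm_num) i)

/-- The standard Hermitian product. -/
def ip (x y : Fin 12 → ℂ) : ℂ := ∑ i, conj (x i) * y i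

theorem herm_eq (u v : V) : herm u v =
    -(1 / 3) * ip (lp u) (lp v) + conj (u 12) * conj θ * v 13 + conj (u 13) * θ * v 12 := rfl

theorem normL_eq (l : Fin 12 → ℂ) : normL l = -(1 / 3) * ip l l := rfl

@[simp] theorem lp_glue (l : Fin 12 → ℂ) (x y : ℂ) : lp (glue l x y) = l := by
  funext i
  have : ((Fin.castLE (by norm_num : 12 ≤ 14) i : Fin 14) : ℕ) < 12 := i.2
  simp [lp, glue]

@[simp] theorem glue_12 (l : Fin 12 → ℂ) (x y : ℂ) : glue l x y 12 = x := by
  have h : ¬ (((12 : Fin 14) : ℕ) < 12) := by decide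
  simp [glue]

@[simp] theorem glue_13 (l : Fin 12 → ℂ) (x y : ℂ) : glue l x y 13 = y := by
  have h : ¬ (((13 : Fin 14) : ℕ) < 12) := by decide
  simp [glue]

theorem V_ext {u v : V} (h : lp u = lp v) (h12 : u 12 = v 12) (h13 : u 13 = v 13) : u = v := by
  funext i
  by_cases hi : (i : ℕ) < 12
  · exact congrFun h ⟨i, hi⟩
  · have : i = 12 ∨ i = 13 := by
      rcases i with ⟨i, h'⟩
      have : i = 12 ∨ i = 13 := by simp at hi; omega
      rcases this with rfl | rfl
      · left; rfl
      · right; rfl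
    rcases this with rfl | rfl <;> assumption

@[simp] theorem lp_add (u v : V) : lp (u + v) = lp u + lp v := rfl
@[simp] theorem lp_sub (u v : V) : lp (u - v) = lp u - lp v := rfl
@[simp] theorem lp_smul (c : ℂ) (v : V) : lp (c • v) = c • lp v := rfl

theorem ip_add_right (x y z : Fin 12 → ℂ) : ip x (y + z) = ip x y + ip x z := by
  simp [ip, mul_add, Finset.sum_add_distrib]

theorem ip_smul_right (x y : Fin 12 → ℂ) (c : ℂ) : ip x (c • y) = c * ip x y := by
  simp only [ip, Pi.smul_apply, smul_eq_mul, Finset.mul_sum]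
  exact Finset.sum_congr rfl fun i _ => by ring

theorem ip_conj (x y : Fin 12 → ℂ) : conj (ip x y) = ip y x := by
  simp only [ip, map_sum, map_mul, Complex.conj_conj]
  exact Finset.sum_congr rfl fun i _ => by ring

theorem ip_add_left (x y z : Fin 12 → ℂ) : ip (x + y) z = ip x z + ip y z := by
  rw [← ip_conj, ip_add_right, map_add, ip_conj, ip_conj]

theorem ip_smul_left (x y : Fin 12 → ℂ) (c : ℂ) : ip (c • x) y = conj c * ip x y := by
  rw [← ip_conj, ip_smul_right, map_mul, ip_conj]

theorem ip_self (x : Fin 12 → ℂ) : ip x x = ((∑ i, Complex.normSq (x i) : ℝ) : ℂ) := by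
  simp only [ip, Complex.ofReal_sum]
  exact Finset.sum_congr rfl fun i _ => by rw [Complex.normSq_eq_conj_mul_self]

theorem ip_neg_right (x y : Fin 12 → ℂ) : ip x (-y) = - ip x y := by
  have := ip_smul_right x y (-1); simpa using this

theorem ip_neg_left (x y : Fin 12 → ℂ) : ip (-x) y = - ip x y := by
  have := ip_smul_left x y (-1); simpa using this

theorem ip_sub_left (x y z : Fin 12 → ℂ) : ip (x - y) z = ip x z - ip y z := by
  rw [sub_eq_add_neg, ip_add_left, ip_neg_left]; ring

theorem ip_sub_right (x y z : Fin 12 → ℂ) : ip x (y - z) = ip x y - ip x z := by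
  rw [sub_eq_add_neg, ip_add_right, ip_neg_right]; ring

theorem ip_zero_left (x : Fin 12 → ℂ) : ip 0 x = 0 := by simp [ip]
theorem ip_zero_right (x : Fin 12 → ℂ) : ip x 0 = 0 := by simp [ip]

theorem θ_conj : conj θ = -θ := by
  rw [θ_eq]; simp only [map_add, map_mul, map_one, ω_conj, map_ofNat]; ring

theorem θ_sq : θ ^ 2 = -3 := by rw [θ_eq]; linear_combination 4 * ω_sq

theorem θ_ne : θ ≠ 0 := by
  intro h; have := θ_sq; rw [h] at this; norm_num at this

theorem herm_add_right (u v w : V) : herm u (v + w) = herm u v + herm u w := by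
  simp only [herm_eq, lp_add, ip_add_right, Pi.add_apply]; ring

theorem herm_smul_right (u v : V) (c : ℂ) : herm u (c • v) = c * herm u v := by
  simp only [herm_eq, lp_smul, ip_smul_right, Pi.smul_apply, smul_eq_mul]; ring

theorem herm_conj (u v : V) : conj (herm u v) = herm v u := by
  simp only [herm_eq, map_add, map_mul, map_neg, ip_conj, map_div₀, map_one, map_ofNat,
    Complex.conj_conj]; ring

theorem herm_smul_left (u v : V) (c : ℂ) : herm (c • u) v = conj c * herm u v := by
  rw [← herm_conj, herm_smul_right, map_mul, herm_conj]

theorem herm_add_left (u v w : V) : herm (u + v) w = herm u w + herm v w := by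
  rw [← herm_conj, herm_add_right, map_add, herm_conj, herm_conj]

theorem herm_sub_right (u v w : V) : herm u (v - w) = herm u v - herm u w := by
  have := herm_add_right u v ((-1 : ℂ) • w)
  rw [herm_smul_right] at this
  rw [show v - w = v + (-1 : ℂ) • w by simp [sub_eq_add_neg], this]; ring

theorem herm_sub_left (u v w : V) : herm (u - v) w = herm u w - herm v w := by
  rw [← herm_conj, herm_sub_right, map_sub, herm_conj, herm_conj]

theorem EisP.add {x y : ℂ} (hx : EisP x) (hy : EisP y) : EisP (x + y) := by
  obtain ⟨a, b, rfl⟩ := hx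
  obtain ⟨c, d, rfl⟩ := hy
  exact ⟨a + c, b + d, by push_cast; ring⟩

theorem EisP.neg {x : ℂ} (hx : EisP x) : EisP (-x) := by
  obtain ⟨a, b, rfl⟩ := hx
  exact ⟨-a, -b, by push_cast; ring⟩

theorem EisP.mul {x y : ℂ} (hx : EisP x) (hy : EisP y) : EisP (x * y) := by
  obtain ⟨a, b, rfl⟩ := hx
  obtain ⟨c, d, rfl⟩ := hy
  exact ⟨a * c - b * d, a * d + b * c - b * d, by push_cast; linear_combination (b * d : ℂ) * ω_sq⟩

theorem EisP.conj {x : ℂ} (hx : EisP x) : EisP (conj x) := by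
  obtain ⟨a, b, rfl⟩ := hx
  exact ⟨a - b, -b, by simp only [map_add, map_mul, ω_conj, map_intCast]; push_cast; ring⟩

theorem eisP_int (n : ℤ) : EisP n := ⟨n, 0, by simp⟩
theorem eisP_omega : EisP ω := ⟨0, 1, by simp⟩

theorem leech_int {x : Fin 12 → ℂ} (hx : x ∈ Leech) (n : ℤ) : (n : ℂ) • x ∈ Leech := by
  rw [mem_leech] at *
  obtain ⟨p, q, h, e⟩ := hx
  refine ⟨fun i => n * p i, fun i => n * q i, ⟨fun i => ?_, fun j => ?_, ?_⟩, fun i => ?_⟩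
  · obtain ⟨a, ha⟩ := h.c1 i
    exact ⟨n * a, by linear_combination n * ha⟩
  · have := (h.c2 j).mul_left n
    rw [Finset.mul_sum] at this
    have e : ∑ i, golay j i * (n * q i) = ∑ i, n * (golay j i * q i) :=
      Finset.sum_congr rfl fun i _ => by ring
    rw [e]; exact this
  · have := h.c3.mul_left n
    have e : ∑ i, (n * p i + n * q i) + 3 * (n * p 0 + n * q 0) =
        n * (∑ i, (p i + q i) + 3 * (p 0 + q 0)) := by
      rw [mul_add n, Finset.mul_sum]; simp only [mul_add]; ring
    rw [e]; exact this
  · simp only [Pi.smul_apply, smul_eq_mul, e]; push_cast; ring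

theorem leech_smul {x : Fin 12 → ℂ} (hx : x ∈ Leech) {c : ℂ} (hc : EisP c) : c • x ∈ Leech := by
  obtain ⟨a, b, rfl⟩ := hc
  rw [add_smul, mul_smul]
  exact leech_add (leech_int hx a) (leech_int (leech_omega hx) b)

theorem ip_leech_self {x : Fin 12 → ℂ} (hx : x ∈ Leech) : ∃ n : ℤ, ip x x = 9 * n ∧ n ≠ 1 := by
  obtain ⟨n, hn, h⟩ := leech_norm hx
  exact ⟨n, by rw [ip_self, hn]; push_cast; rfl, h⟩

theorem ip_leech_re {x y : Fin 12 → ℂ} (hx : x ∈ Leech) (hy : y ∈ Leech) :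
    ∃ a : ℤ, ip x y + conj (ip x y) = 9 * a := by
  obtain ⟨n, hn, -⟩ := ip_leech_self hx
  obtain ⟨m, hm, -⟩ := ip_leech_self hy
  obtain ⟨k, hk, -⟩ := ip_leech_self (leech_add hx hy)
  refine ⟨k - n - m, ?_⟩
  rw [ip_conj]
  simp only [ip_add_left, ip_add_right] at hk
  push_cast
  linear_combination hk - hn - hm

theorem ip_leech {x y : Fin 12 → ℂ} (hx : x ∈ Leech) (hy : y ∈ Leech) :
    ∃ e, EisP e ∧ ip x y = 3 * θ * e := by
  obtain ⟨a, ha⟩ := ip_leech_re hx hy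
  obtain ⟨b, hb⟩ := ip_leech_re hx (leech_omega hy)
  rw [ip_smul_right, map_mul, ω_conj] at hb
  refine ⟨-((a + b : ℤ) + a * ω), ⟨-(a + b), -a, by push_cast; ring⟩, ?_⟩
  have h : θ * ip x y = 9 * (b + a + ω * a) := by
    rw [θ_eq]; linear_combination hb + (1 + ω) * ha
  push_cast
  linear_combination (-θ / 3) * h + ip x y / 3 * θ_sq

theorem Lset_iff (v : V) : v ∈ Lset ↔ lp v ∈ Leech ∧ EisP (v 12) ∧ EisP (v 13) := Iff.rfl

theorem Lset_add {u v : V} (hu : u ∈ Lset) (hv : v ∈ Lset) : u + v ∈ Lset :=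
  ⟨leech_add hu.1 hv.1, hu.2.1.add hv.2.1, hu.2.2.add hv.2.2⟩

theorem Lset_smul {v : V} (hv : v ∈ Lset) {c : ℂ} (hc : EisP c) : c • v ∈ Lset :=
  ⟨leech_smul hv.1 hc, hc.mul hv.2.1, hc.mul hv.2.2⟩

theorem herm_Lset {u v : V} (hu : u ∈ Lset) (hv : v ∈ Lset) :
    ∃ e, EisP e ∧ herm u v = θ * e := by
  obtain ⟨e, he, h⟩ := ip_leech hu.1 hv.1
  refine ⟨-e + (-(conj (u 12) * v 13) + conj (u 13) * v 12),
    he.neg.add ((hu.2.1.conj.mul hv.2.2).neg.add (hu.2.2.conj.mul hv.2.1)), ?_⟩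
  rw [herm_eq, θ_conj]
  change ip (lp u) (lp v) = _ at h
  rw [h]; ring

theorem herm_self_int {v : V} (hv : v ∈ Lset) : ∃ n : ℤ, herm v v = 3 * n := by
  obtain ⟨e, ⟨c, d, rfl⟩, h⟩ := herm_Lset hv hv
  have h2 := herm_conj v v
  rw [h, map_mul, θ_conj] at h2
  simp only [map_add, map_mul, ω_conj, map_intCast] at h2
  have h3 : (((2 * c : ℤ) : ℂ) + (0 : ℤ) * ω) = (d : ℤ) + (0 : ℤ) * ω := by
    apply mul_left_cancel₀ θ_ne
    push_cast
    linear_combination -h2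
  have h4 := (eis_ext_int h3).1
  refine ⟨-c, ?_⟩
  rw [h, θ_eq, ← h4]
  push_cast
  linear_combination 4 * c * ω_sq

theorem eisUnit_of_normSq {x : ℂ} (hx : EisP x) (h : Complex.normSq x = 1) : EisUnit x := by
  obtain ⟨a, b, rfl⟩ := hx
  have h1 := eis_normSq a b
  push_cast at h1
  rw [h] at h1
  have h2 : a ^ 2 - a * b + b ^ 2 = 1 := by exact_mod_cast h1.symm
  have ha : a ^ 2 ≤ 1 := by nlinarith [sq_nonneg (a - 2 * b)]
  have hb : b ^ 2 ≤ 1 := by nlinarith [sq_nonneg (2 * a - b)]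
  have ha1 : a ≤ 1 := by nlinarith
  have ha2 : -1 ≤ a := by nlinarith
  have hb1 : b ≤ 1 := by nlinarith
  have hb2 : -1 ≤ b := by nlinarith
  unfold EisUnit
  rw [ω_sq]
  interval_cases a <;> interval_cases b <;> simp at h2 ⊢ <;> try (ring_nf; simp)

theorem isRoot_of {r : V} (hr : r ∈ Lset) (h : herm r r = -3) : IsRoot r := by
  refine ⟨hr, h, fun c hc y hy e => eisUnit_of_normSq hc ?_⟩
  obtain ⟨n, hn⟩ := herm_self_int hy
  obtain ⟨a, b, rfl⟩ := hc
  have h1 := eis_normSq a b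
  push_cast at h1
  rw [e, herm_smul_left, herm_smul_right, hn, ← mul_assoc, ← Complex.normSq_eq_conj_mul_self, h1] at h
  have h2 : (a ^ 2 - a * b + b ^ 2) * n = -1 := by
    have : (((a ^ 2 - a * b + b ^ 2) * n : ℤ) : ℂ) = (-1 : ℤ) := by
      push_cast; push_cast at h; linear_combination h / 3
    exact_mod_cast this
  have h3 : IsUnit (a ^ 2 - a * b + b ^ 2) := IsUnit.of_mul_eq_one (-n) (by linarith)
  have h4 := eis_nonneg a b
  rcases Int.isUnit_iff.1 h3 with h5 | h5
  · rw [h1]; exact_mod_cast h5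
  · omega

theorem reflMap_add (μ : ℂ) (r u v : V) : reflMap μ r (u + v) = reflMap μ r u + reflMap μ r v := by
  simp only [reflMap, herm_add_right]; module

theorem reflMap_smul (μ : ℂ) (r v : V) (c : ℂ) : reflMap μ r (c • v) = c • reflMap μ r v := by
  simp only [reflMap, herm_smul_right]; module

theorem reflMap_comp {μ ν : ℂ} (h : μ * ν = 1) {r : V} (hr : herm r r ≠ 0) (v : V) :
    reflMap μ r (reflMap ν r v) = v := by
  simp only [reflMap, herm_sub_right, herm_smul_right]
  rw [sub_sub, ← add_smul]
  have : (1 - ν) * herm r v / herm r r +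
      (1 - μ) * (herm r v - (1 - ν) * herm r v / herm r r * herm r r) / herm r r = 0 := by
    field_simp
    linear_combination -herm r v * h
  rw [this]; simp

theorem ω_conj_mul : ω * conj ω = 1 := by rw [ω_conj]; linear_combination -ω_sq

/-- The reflection as a linear automorphism. -/
def phi (r : V) (hr : herm r r ≠ 0) : V ≃ₗ[ℂ] V where
  toFun := reflMap ω r
  map_add' := reflMap_add ω r
  map_smul' := fun c v => reflMap_smul ω r v c
  invFun := reflMap (conj ω) r
  left_inv := reflMap_comp (by rw [mul_comm]; exact ω_conj_mul) hr
  right_inv := reflMap_comp ω_conj_mul hr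

theorem reflMap_herm {μ : ℂ} (hμ : μ * conj μ = 1) {r : V} (hr : herm r r ≠ 0) (u v : V) :
    herm (reflMap μ r u) (reflMap μ r v) = herm u v := by
  simp only [reflMap, herm_sub_right, herm_smul_right, herm_sub_left, herm_smul_left, map_div₀,
    map_mul, map_sub, map_one, herm_conj]
  field_simp
  linear_combination herm r v * herm u r * hμ

theorem reflMap_Lset {μ : ℂ} (hμ : μ = ω ∨ μ = conj ω) {r : V} (h : r ∈ Lset) (hr : herm r r = -3)
    {v : V} (hv : v ∈ Lset) : reflMap μ r v ∈ Lset := by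
  obtain ⟨e, he, hh⟩ := herm_Lset h hv
  obtain ⟨f, hf, hh2⟩ : ∃ f, EisP f ∧ -((1 - μ) * herm r v / herm r r) = f := by
    rcases hμ with rfl | rfl
    · refine ⟨(1 + ω) * e, EisP.mul ⟨1, 1, by simp⟩ he, ?_⟩
      rw [hh, hr, θ_eq]; linear_combination (-2/3 * e) * ω_sq
    · refine ⟨ω * e, eisP_omega.mul he, ?_⟩
      rw [hh, hr, θ_eq, ω_conj]; linear_combination (2/3 * e) * ω_sq
  have : reflMap μ r v = v + f • r := by
    rw [← hh2, reflMap, neg_smul, sub_eq_add_neg]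
  rw [this]
  exact Lset_add hv (Lset_smul h hf)

theorem phi_mem {r : V} (h : r ∈ Lset) (hr : herm r r = -3) :
    phi r (by rw [hr]; norm_num) ∈ AutL := by
  have hr0 : herm r r ≠ 0 := by rw [hr]; norm_num
  refine ⟨fun v => ⟨fun hv => reflMap_Lset (Or.inl rfl) h hr hv, fun hv => ?_⟩,
    fun u v => reflMap_herm ω_conj_mul hr0 u v⟩
  have := reflMap_Lset (Or.inr rfl) h hr hv
  change reflMap (conj ω) r (reflMap ω r v) ∈ Lset at this
  rwa [reflMap_comp (by rw [mul_comm]; exact ω_conj_mul) hr0] at this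

/-- A subgroup contains the reflection in `r`. -/
def HasR (G : Subgroup (V ≃ₗ[ℂ] V)) (r : V) : Prop := ∃ g ∈ G, ∀ v, g v = reflMap ω r v

theorem HasR.conj {G : Subgroup (V ≃ₗ[ℂ] V)} (hG : G ≤ AutL) {r : V} (hr : HasR G r)
    {h : V ≃ₗ[ℂ] V} (hh : h ∈ G) : HasR G (h r) := by
  obtain ⟨g, hg, e⟩ := hr
  refine ⟨h * g * h⁻¹, G.mul_mem (G.mul_mem hh hg) (G.inv_mem hh), fun v => ?_⟩
  change h (g (h.symm v)) = _
  have iso := (hG hh).2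
  have e1 : herm (h r) v = herm r (h.symm v) := by
    rw [← iso r (h.symm v), h.apply_symm_apply]
  rw [e, reflMap, reflMap, map_sub, h.apply_symm_apply, map_smul, e1, iso]

theorem HasR.of_conj {G : Subgroup (V ≃ₗ[ℂ] V)} (hG : G ≤ AutL) {r : V}
    {h : V ≃ₗ[ℂ] V} (hh : h ∈ G) (hr : HasR G (h r)) : HasR G r := by
  have := hr.conj hG (G.inv_mem hh)
  change HasR G (h.symm (h r)) at this
  rwa [h.symm_apply_apply] at this

theorem HasR.unit {G : Subgroup (V ≃ₗ[ℂ] V)} {r : V} (hr : HasR G r) {u : ℂ}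
    (hu : Complex.normSq u = 1) : HasR G (u • r) := by
  obtain ⟨g, hg, e⟩ := hr
  refine ⟨g, hg, fun v => ?_⟩
  have h1 : conj u * u = 1 := by rw [← Complex.normSq_eq_conj_mul_self, hu]; simp
  rw [e, reflMap, reflMap, herm_smul_left, herm_smul_left, herm_smul_right, smul_smul]
  congr 2
  rw [← mul_assoc (conj u), h1, one_mul]
  linear_combination -((1 - ω) * herm r v / herm r r) * h1

theorem HasR.mem {G : Subgroup (V ≃ₗ[ℂ] V)} {r : V} (hr : HasR G r) {g : V ≃ₗ[ℂ] V}
    (hg : ∀ v, g v = reflMap ω r v) : g ∈ G := by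
  obtain ⟨g', hg', e⟩ := hr
  have : g = g' := LinearEquiv.ext fun v => by rw [hg, e]
  rwa [this]

end Refl

open MeasureTheory
set_option linter.unusedSectionVars false

section Transl

/-- A general translation map. -/
def Amap (l : Fin 12 → ℂ) (c : ℂ) (v : V) : V :=
  glue (lp v + v 12 • l) (v 12) (v 13 + θ / 9 * ip l (lp v) + c * v 12)

theorem θ_inv : θ⁻¹ = -θ / 3 := by
  have := θ_ne
  field_simp
  linear_combination θ_sq

theorem Tmap_eq (l : Fin 12 → ℂ) (z : ℂ) (v : V) :
    Tmap l z v = Amap l ((conj θ)⁻¹ * (z - normL l / 2)) v := by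
  apply V_ext
  · simp only [Tmap, Amap, lp_glue]
    funext i
    simp only [Pi.add_apply, Pi.smul_apply, smul_eq_mul, lp]; ring
  · simp [Tmap, Amap]
  · simp only [Tmap, Amap, glue_13, θ_inv, ip, lp]; ring

theorem Amap_comp (l l' : Fin 12 → ℂ) (c c' : ℂ) (v : V) :
    Amap l c (Amap l' c' v) = Amap (l + l') (c + c' + θ / 9 * ip l l') v := by
  apply V_ext
  · simp only [Amap, lp_glue, glue_12]; module
  · simp [Amap]
  · simp only [Amap, lp_glue, glue_12, glue_13, ip_add_left, ip_add_right, ip_smul_right]; ring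

theorem Amap_zero (v : V) : Amap 0 0 v = v := by
  apply V_ext <;> simp [Amap, ip_zero_left]

theorem Amap_neg (l : Fin 12 → ℂ) (c : ℂ) (v : V) :
    Amap l c (Amap (-l) (θ / 9 * ip l l - c) v) = v := by
  rw [Amap_comp, ip_neg_right]
  have e : c + (θ / 9 * ip l l - c) + θ / 9 * -ip l l = 0 := by ring
  rw [e, add_neg_cancel, Amap_zero]

theorem Amap_sub_smul (l : Fin 12 → ℂ) (c k : ℂ) (u v : V) :
    Amap l c (u - k • v) = Amap l c u - k • Amap l c v := by
  apply V_ext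
  · simp only [Amap, lp_glue, lp_sub, lp_smul, Pi.sub_apply, Pi.smul_apply, smul_eq_mul]; module
  · simp [Amap]
  · simp only [Amap, Pi.sub_apply, Pi.smul_apply, smul_eq_mul, glue_13, lp_sub, lp_smul,
      ip_sub_right, ip_smul_right]; ring

theorem Amap_herm {l : Fin 12 → ℂ} {c : ℂ} (h : θ * (conj c - c) = ip l l / 3) (u v : V) :
    herm (Amap l c u) (Amap l c v) = herm u v := by
  simp only [herm_eq, Amap, lp_glue, glue_12, glue_13, ip_add_left, ip_add_right, ip_smul_left,
    ip_smul_right, map_add, map_mul, map_div₀, θ_conj, ip_conj, map_ofNat]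
  linear_combination (conj (u 12) * v 12) * h +
    (-(1/9) * (conj (u 12) * ip l (lp v) + ip (lp u) l * v 12)) * θ_sq

theorem Amap_refl {l : Fin 12 → ℂ} {c : ℂ} (h : θ * (conj c - c) = ip l l / 3) (r v : V) :
    reflMap ω (Amap l c r) (Amap l c v) = Amap l c (reflMap ω r v) := by
  rw [reflMap, reflMap, Amap_herm h, Amap_herm h, Amap_sub_smul]

theorem Amap_Lset {l : Fin 12 → ℂ} {c : ℂ} (hl : l ∈ Leech) (hc : EisP c) {v : V} (hv : v ∈ Lset) :
    Amap l c v ∈ Lset := by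
  rw [Lset_iff]
  simp only [Amap, lp_glue, glue_12, glue_13]
  refine ⟨leech_add hv.1 (leech_smul hl hv.2.1), hv.2.1, (hv.2.2.add ?_).add (hc.mul hv.2.1)⟩
  obtain ⟨e, he, h⟩ := ip_leech hl hv.1
  change ip l (lp v) = _ at h
  have : θ / 9 * ip l (lp v) = -e := by
    rw [h]; linear_combination e / 3 * θ_sq
  rw [this]; exact he.neg

theorem memT_Amap {l : Fin 12 → ℂ} {z : ℂ} (h : memT l z) :
    ∃ c, EisP c ∧ (∀ v, Tmap l z v = Amap l c v) ∧ θ * (conj c - c) = ip l l / 3 := by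
  obtain ⟨hl, a, j, t, hz, hj, ht⟩ := h
  obtain ⟨n, hn, -⟩ := ip_leech_self hl
  have hjn : j = -3 * n := by
    have : (j : ℂ) = ((-3 * n : ℤ) : ℂ) := by
      rw [← hj, normL_eq, hn]; push_cast; ring
    exact_mod_cast this
  have ha : a = 2 * t - 3 * n := by omega
  refine ⟨(2 * n - t : ℤ) + n * ω, ⟨_, _, rfl⟩, fun v => ?_, ?_⟩
  · rw [Tmap_eq]
    congr 1
    rw [hz, hj, θ_conj, inv_neg, θ_inv, ha, hjn]
    push_cast
    have h2 := θ_sq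
    have h3 : ω = (θ - 1) / 2 := by rw [θ_eq]; ring
    rw [h3]
    linear_combination (t / 3 - n / 2 : ℂ) * h2
  · rw [hn]
    simp only [map_add, map_mul, map_intCast, ω_conj]
    have h2 := θ_sq
    have h3 : ω = (θ - 1) / 2 := by rw [θ_eq]; ring
    rw [h3]
    linear_combination (-n : ℂ) * h2

/-- The product of the two basic reflections. -/
def gm (v : V) : V := glue (lp v) (-ω * v 12) (-ω * (v 13 - 2 * v 12))

theorem herm_r1 : herm r1 r1 = -3 := by
  simp only [herm_eq, r1, lp_glue, glue_12, glue_13, ip_zero_left, θ_conj, map_pow, ω_conj, map_one]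
  rw [θ_eq]
  linear_combination 4 * ω_sq

theorem herm_r2 : herm r2 r2 = -3 := by
  simp only [herm_eq, r2, lp_glue, glue_12, glue_13, ip_zero_left, θ_conj, map_neg, ω_conj, map_one]
  rw [θ_eq]
  linear_combination 4 * ω_sq

theorem eisP_one : EisP 1 := ⟨1, 0, by simp⟩

theorem r1_mem : r1 ∈ Lset := by
  rw [Lset_iff]
  simp only [r1, lp_glue, glue_12, glue_13]
  exact ⟨leech_zero, eisP_one, ⟨-1, -1, by rw [ω_sq]; push_cast; ring⟩⟩

theorem r2_mem : r2 ∈ Lset := by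
  rw [Lset_iff]
  simp only [r2, lp_glue, glue_12, glue_13]
  exact ⟨leech_zero, eisP_one, eisP_omega.neg⟩

theorem refl_r1 (v : V) : reflMap ω r1 v =
    glue (lp v) (ω ^ 2 * v 13) (-ω ^ 2 * v 13 - ω ^ 2 * v 12) := by
  rw [reflMap, herm_r1]
  apply V_ext
  · simp only [lp_sub, lp_smul, r1, lp_glue]; simp
  · simp only [Pi.sub_apply, Pi.smul_apply, smul_eq_mul, herm_eq, r1, lp_glue, glue_12, glue_13,
      ip_zero_left, θ_conj, map_pow, ω_conj, map_one]
    rw [θ_eq]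
    grind [ω_sq]
  · simp only [Pi.sub_apply, Pi.smul_apply, smul_eq_mul, herm_eq, r1, lp_glue, glue_12, glue_13,
      ip_zero_left, θ_conj, map_pow, ω_conj, map_one]
    rw [θ_eq]
    grind [ω_sq]

theorem refl_r2 (v : V) : reflMap ω r2 v =
    glue (lp v) (-ω ^ 2 * v 12 + ω ^ 2 * v 13) (-ω ^ 2 * v 12) := by
  rw [reflMap, herm_r2]
  apply V_ext
  · simp only [lp_sub, lp_smul, r2, lp_glue]; simp
  · simp only [Pi.sub_apply, Pi.smul_apply, smul_eq_mul, herm_eq, r2, lp_glue, glue_12, glue_13,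
      ip_zero_left, θ_conj, map_neg, ω_conj, map_one]
    rw [θ_eq]
    grind [ω_sq]
  · simp only [Pi.sub_apply, Pi.smul_apply, smul_eq_mul, herm_eq, r2, lp_glue, glue_12, glue_13,
      ip_zero_left, θ_conj, map_neg, ω_conj, map_one]
    rw [θ_eq]
    grind [ω_sq]

theorem refl_r12 (v : V) : reflMap ω r1 (reflMap ω r2 v) = gm v := by
  rw [refl_r2, refl_r1, gm]
  apply V_ext <;> simp only [lp_glue, glue_12, glue_13]
  · linear_combination (-ω * v 12) * ω_cube
  · linear_combination (2 * ω * v 12 - ω * v 13) * ω_cube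

theorem gm_Amap (l : Fin 12 → ℂ) (c : ℂ) (v : V) :
    gm (Amap l c v) = Amap ((-ω ^ 2) • l) c (gm v) := by
  apply V_ext
  · simp only [gm, Amap, lp_glue, glue_12, smul_smul]
    rw [show -ω * v 12 * -ω ^ 2 = v 12 by linear_combination v 12 * ω_cube]
  · simp [gm, Amap]
  · simp only [gm, Amap, lp_glue, glue_12, glue_13, ip_smul_left, map_neg, map_pow, ω_conj]
    linear_combination (θ / 9 * ip l (lp v)) * ω_sq

/-- The group contains some translation by `l`. -/
def TrG (G : Subgroup (V ≃ₗ[ℂ] V)) : AddSubgroup (Fin 12 → ℂ) where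
  carrier := {l | ∃ g ∈ G, ∃ c, ∀ v, g v = Amap l c v}
  zero_mem' := ⟨1, G.one_mem, 0, fun v => (Amap_zero v).symm⟩
  add_mem' := by
    rintro l l' ⟨g, hg, c, h⟩ ⟨g', hg', c', h'⟩
    exact ⟨g * g', G.mul_mem hg hg', _, fun v => by
      change g (g' v) = _
      rw [h', h, Amap_comp]⟩
  neg_mem' := by
    rintro l ⟨g, hg, c, h⟩
    refine ⟨g⁻¹, G.inv_mem hg, θ / 9 * ip l l - c, fun v => ?_⟩
    change g.symm v = _
    rw [LinearEquiv.symm_apply_eq, h, Amap_neg]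

theorem leech_trans {G : Subgroup (V ≃ₗ[ℂ] V)} (bas : Fin 24 → Fin 12 → ℂ)
    (hspan : (Submodule.span ℤ (Set.range bas) : Set (Fin 12 → ℂ)) = Leech)
    (z : Fin 24 → ℂ) (hz : ∀ j, memT (bas j) (z j)) (h1 : HasR G r1) (h2 : HasR G r2)
    (h3 : ∀ j, HasR G (Tmap (bas j) (z j) r1)) (h4 : ∀ j, HasR G (Tmap (bas j) (z j) r2))
    {l : Fin 12 → ℂ} (hl : l ∈ Leech) : l ∈ TrG G := by
  obtain ⟨p1, hp1, e1⟩ := h1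
  obtain ⟨p2, hp2, e2⟩ := h2
  set γ := p1 * p2 with hγ
  have hγG : γ ∈ G := G.mul_mem hp1 hp2
  have eγ : ∀ v, γ v = gm v := fun v => by
    change p1 (p2 v) = _
    rw [e1, e2, refl_r12]
  have eγ' : ∀ v, gm (γ.symm v) = v := fun v => by rw [← eγ, γ.apply_symm_apply]
  have hom : ∀ l ∈ TrG G, (-ω ^ 2) • l ∈ TrG G := by
    rintro l ⟨g, hg, c, h⟩
    refine ⟨γ * g * γ⁻¹, G.mul_mem (G.mul_mem hγG hg) (G.inv_mem hγG), c, fun v => ?_⟩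
    change γ (g (γ.symm v)) = _
    rw [eγ, h, gm_Amap, eγ']
  have hj : ∀ j, bas j ∈ TrG G := by
    intro j
    obtain ⟨c, hc, hT, hiso⟩ := memT_Amap (hz j)
    obtain ⟨q1, hq1, f1⟩ := h3 j
    obtain ⟨q2, hq2, f2⟩ := h4 j
    set l := bas j
    have hw : (-ω) • l ∈ TrG G := by
      refine ⟨q1 * q2 * γ⁻¹, G.mul_mem (G.mul_mem hq1 hq2) (G.inv_mem hγG),
        c + (θ / 9 * ip l l - c) + θ / 9 * ip l (ω ^ 2 • l), fun v => ?_⟩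
      change q1 (q2 (γ.symm v)) = _
      rw [f1, f2, hT, hT]
      conv_lhs => rw [← Amap_neg l c (γ.symm v)]
      rw [Amap_refl hiso, Amap_refl hiso, refl_r12, gm_Amap, eγ']
      rw [show (-ω ^ 2) • -l = ω ^ 2 • l by module, Amap_comp]
      congr 1
      rw [ω_sq]; module
    have := hom _ hw
    rwa [smul_smul, show -ω ^ 2 * -ω = 1 by linear_combination ω_cube, one_smul] at this
  have : Submodule.span ℤ (Set.range bas) ≤ AddSubgroup.toIntSubmodule (TrG G) := by
    rw [Submodule.span_le]
    rintro _ ⟨j, rfl⟩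
    exact hj j
  rw [← hspan] at hl
  exact this hl

theorem hasR_center {G : Subgroup (V ≃ₗ[ℂ] V)} (hG : G ≤ AutL) (h1 : HasR G r1) (h2 : HasR G r2)
    (a : ℤ) : HasR G (glue 0 1 (a - ω)) := by
  obtain ⟨p1, hp1, e1⟩ := id h1
  obtain ⟨p2, hp2, e2⟩ := id h2
  set γ := p1 * p2 with hγ
  have hγG : γ ∈ G := G.mul_mem hp1 hp2
  have eγ : ∀ v, γ v = gm v := fun v => by
    change p1 (p2 v) = _
    rw [e1, e2, refl_r12]
  have hN : Complex.normSq (-ω) = 1 := by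
    have := eis_normSq 0 (-1); simpa using this
  have hN' : Complex.normSq (-ω ^ 2) = 1 := by
    have h := eis_normSq 1 1
    rw [ω_sq]; norm_num at h
    rw [← h]; congr 1; ring
  have act : ∀ b : ℂ, γ (glue 0 1 b) = (-ω) • glue 0 1 (b - 2) := fun b => by
    rw [eγ]; apply V_ext <;> simp [gm, -neg_smul]
  have up : ∀ b : ℂ, HasR G (glue 0 1 (b - 2)) → HasR G (glue 0 1 b) := fun b hb => by
    apply HasR.of_conj hG hγG
    rw [act]; exact hb.unit hN
  have dn : ∀ b : ℂ, HasR G (glue 0 1 b) → HasR G (glue 0 1 (b - 2)) := fun b hb => by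
    have := (hb.conj hG hγG).unit hN'
    rwa [act, smul_smul, show -ω ^ 2 * -ω = 1 by linear_combination ω_cube, one_smul] at this
  have main : ∀ b : ℂ, HasR G (glue 0 1 b) → ∀ n : ℤ, HasR G (glue 0 1 (b + 2 * n)) := by
    intro b hb n
    induction n using Int.induction_on with
    | zero => simpa using hb
    | succ n ih =>
      apply up
      convert ih using 2
      push_cast; ring
    | pred n ih =>
      have := dn _ ih
      convert this using 2
      push_cast; ring
  rcases Int.even_or_odd' a with ⟨k, rfl | rfl⟩
  · have := main _ h2 k
    convert this using 2
    push_cast; ring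
  · have := main _ h1 (k + 1)
    convert this using 2
    rw [ω_sq]; push_cast; ring

/-- The subgroup contains all reflections in Leech roots. -/
theorem hasR_leech {G : Subgroup (V ≃ₗ[ℂ] V)} (hG : G ≤ AutL) (h1 : HasR G r1) (h2 : HasR G r2)
    (htr : ∀ l ∈ Leech, l ∈ TrG G) {r : V} (hr : r ∈ Lset) (hn : herm r r = -3) (h12 : r 12 = 1) :
    HasR G r := by
  obtain ⟨g, hg, c, h⟩ := htr (-lp r) (leech_neg hr.1)
  apply HasR.of_conj hG hg
  have hL : g r ∈ Lset := ((hG hg).1 r).1 hr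
  have hN : herm (g r) (g r) = -3 := by rw [(hG hg).2, hn]
  have e1 : lp (g r) = 0 := by rw [h]; simp [Amap, h12]
  have e2 : g r 12 = 1 := by rw [h]; simp [Amap, h12]
  obtain ⟨a, b, e3⟩ := hL.2.2
  rw [herm_eq, e1, e2, e3, ip_zero_left, θ_conj] at hN
  simp only [map_one, map_add, map_mul, map_intCast, ω_conj] at hN
  have hb : b = -1 := by
    have : (b : ℂ) = ((-1 : ℤ) : ℂ) := by
      rw [θ_eq] at hN
      push_cast
      linear_combination hN / 3 + 4 / 3 * b * ω_sq
    exact_mod_cast this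
  have : g r = glue 0 1 (a - ω) := by
    apply V_ext
    · rw [e1, lp_glue]
    · rw [e2, glue_12]
    · rw [e3, glue_13, hb]; push_cast; ring
  rw [this]
  exact hasR_center hG h1 h2 a

end Transl

open MeasureTheory
set_option linter.unusedSectionVars false

section Descent

theorem θ_re : θ.re = 0 := by
  rw [θ_eq]; simp [ω_re]; norm_num

theorem θ_im : θ.im = Real.sqrt 3 := by
  rw [θ_eq]; simp [ω_im]; try ring

theorem real_ineq {u v s : ℝ} (hs : s ^ 2 = 3) (hs0 : 0 < s) (hu : u < 0) (hu2 : -3 < u)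
    (hv : v ≤ 0) (hv2 : -(s / 2) ≤ v) :
    (1 + (3 / 2 * u + s / 2 * v) / 3) ^ 2 + ((3 / 2 * v - s / 2 * u) / 3) ^ 2 < 1 := by
  have e : (1 + (3 / 2 * u + s / 2 * v) / 3) ^ 2 + ((3 / 2 * v - s / 2 * u) / 3) ^ 2 =
      1 + u * (1 + u / 3) + v * (s + v) / 3 := by
    linear_combination (u ^ 2 / 36 + v ^ 2 / 36) * hs
  have h1 : u * (1 + u / 3) < 0 := mul_neg_of_neg_of_pos hu (by linarith)
  have h2 : v * (s + v) ≤ 0 := mul_nonpos_of_nonpos_of_nonneg hv (by linarith)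
  rw [e]; linarith

theorem normSq_ineq {w : ℂ} (hu : w.re < 0) (hu2 : -3 < w.re) (hv : |w.im| ≤ Real.sqrt 3 / 2) :
    ∃ μ, (μ = ω ∨ μ = conj ω) ∧ Complex.normSq (1 + (1 - μ) * w / 3) < 1 := by
  have hs : Real.sqrt 3 ^ 2 = 3 := Real.sq_sqrt (by norm_num)
  have hs0 : 0 < Real.sqrt 3 := by positivity
  have h3 : ∀ x : ℂ, x / 3 = ((1 / 3 : ℝ) : ℂ) * x := fun x => by push_cast; ring
  obtain ⟨hv1, hv2⟩ := abs_le.1 hv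
  rcases le_total w.im 0 with h | h
  · refine ⟨ω, Or.inl rfl, ?_⟩
    have := real_ineq hs hs0 hu hu2 h (by linarith)
    rw [h3, Complex.normSq_apply]
    simp only [Complex.add_re, Complex.add_im, Complex.ofReal_re, Complex.ofReal_im,
      Complex.mul_re, Complex.mul_im, Complex.sub_re, Complex.sub_im, Complex.one_re, Complex.one_im,
      ω_re, ω_im]
    refine lt_of_eq_of_lt ?_ this
    ring
  · refine ⟨conj ω, Or.inr rfl, ?_⟩
    have := real_ineq (v := -w.im) hs hs0 hu hu2 (by linarith) (by linarith)
    rw [h3, Complex.normSq_apply]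
    simp only [Complex.add_re, Complex.add_im, Complex.ofReal_re, Complex.ofReal_im,
      Complex.mul_re, Complex.mul_im, Complex.sub_re, Complex.sub_im, Complex.one_re, Complex.one_im,
      Complex.conj_re, Complex.conj_im, ω_re, ω_im]
    refine lt_of_eq_of_lt ?_ this
    ring

theorem step {r : V} (hr : r ∈ Lset) (hn : herm r r = -3) (h1 : 1 < Complex.normSq (r 12)) :
    ∃ s ∈ Lset, herm s s = -3 ∧ s 12 = 1 ∧ ∃ μ, (μ = ω ∨ μ = conj ω) ∧
      Complex.normSq (reflMap μ s r 12) < Complex.normSq (r 12) := by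
  set α := r 12 with hα
  have hα0 : α ≠ 0 := by
    intro h; rw [h] at h1; simp at h1; linarith
  obtain ⟨y, hy⟩ : ∃ y, lp r = α • y := ⟨α⁻¹ • lp r, by rw [smul_smul, mul_inv_cancel₀ hα0, one_smul]⟩
  obtain ⟨t, ht⟩ : ∃ t, r 13 = t * α := ⟨r 13 / α, by field_simp⟩
  obtain ⟨l, hl, hD⟩ := leech_cover y
  obtain ⟨n, hln, -⟩ := ip_leech_self hl
  set a := Complex.normSq α with ha
  have hac : conj α * α = (a : ℂ) := (Complex.normSq_eq_conj_mul_self (z := α)).symm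
  have ha0 : (a : ℂ) ≠ 0 := by
    have : a ≠ 0 := by linarith
    exact_mod_cast this
  let w0 : ℂ := -(1 / 3) * ip l y - θ * t + conj (((n - 1 : ℤ) : ℂ) * ω) * θ
  let k : ℤ := -round (w0.im / Real.sqrt 3)
  let b : ℂ := k + ((n - 1 : ℤ) : ℂ) * ω
  let w : ℂ := w0 + k * θ
  have hb : θ * (conj b - b) = 3 * (n - 1) := by
    simp only [b, map_add, map_mul, map_intCast, ω_conj]
    rw [θ_eq]
    push_cast
    linear_combination (-4 * (n - 1) : ℂ) * ω_sq
  have hs : herm (glue l 1 b) (glue l 1 b) = -3 := by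
    simp only [herm_eq, lp_glue, glue_12, glue_13, hln, θ_conj, map_one]
    linear_combination hb
  have hsr : herm (glue l 1 b) r = α * w := by
    simp only [herm_eq, lp_glue, glue_12, glue_13, hy, ip_smul_right, θ_conj, map_one, ht, ← hα]
    simp only [w, w0, b, map_add, map_mul, map_intCast]
    ring
  have hre : w + conj w = (((∑ i, Complex.normSq (y i - l i)) / 3 - 3 - 3 / a : ℝ) : ℂ) := by
    have hyl : ((∑ i, Complex.normSq (y i - l i) : ℝ) : ℂ) = ip y y - ip y l - ip l y + ip l l := by
      have := ip_self (y - l)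
      simp only [ip_sub_left, ip_sub_right, Pi.sub_apply] at this
      rw [← this]; ring
    have hn2 : -(1 / 3) * ip y y - θ * t + θ * conj t = -3 / (a : ℂ) := by
      rw [eq_div_iff ha0, ← hac, ← hn]
      simp only [herm_eq, hy, ip_smul_right, ip_smul_left, θ_conj, ht, ← hα, map_mul]
      ring
    have hw : w = -(1 / 3) * ip l y - θ * t + conj b * θ := by
      simp only [w, w0, b, map_add, map_mul, map_intCast]; ring
    rw [hw]
    push_cast at hyl ⊢
    rw [hyl]
    simp only [map_add, map_sub, map_mul, map_neg, map_div₀, map_one, map_ofNat, ip_conj, θ_conj,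
      Complex.conj_conj]
    linear_combination hn2 + hb - hln / 3
  have hre2 : 2 * w.re = (∑ i, Complex.normSq (y i - l i)) / 3 - 3 - 3 / a := by
    have := congrArg Complex.re hre
    rw [Complex.ofReal_re, Complex.add_re, Complex.conj_re] at this
    linarith
  have hD0 : 0 ≤ ∑ i, Complex.normSq (y i - l i) := Finset.sum_nonneg fun i _ => Complex.normSq_nonneg _
  have hq : 0 < 3 / a := by positivity
  have hq2 : 3 / a < 3 := by rw [div_lt_iff₀ (by linarith)]; linarith
  have him : |w.im| ≤ Real.sqrt 3 / 2 := by
    have hs0 : 0 < Real.sqrt 3 := by positivity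
    have h := abs_sub_round (w0.im / Real.sqrt 3)
    have e : w.im = (w0.im / Real.sqrt 3 - round (w0.im / Real.sqrt 3)) * Real.sqrt 3 := by
      simp only [w, k, Complex.add_im, Complex.mul_im, θ_re, θ_im, Complex.intCast_re,
        Complex.intCast_im]
      push_cast
      field_simp
      ring
    rw [e, abs_mul, abs_of_pos hs0]
    nlinarith
  obtain ⟨μ, hμ, hlt⟩ := normSq_ineq (w := w) (by linarith) (by linarith) him
  refine ⟨glue l 1 b, ?_, hs, glue_12 _ _ _, μ, hμ, ?_⟩
  · rw [Lset_iff]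
    simp only [lp_glue, glue_12, glue_13]
    exact ⟨hl, eisP_one, ⟨_, _, rfl⟩⟩
  · have e : reflMap μ (glue l 1 b) r 12 = α * (1 + (1 - μ) * w / 3) := by
      simp only [reflMap, Pi.sub_apply, Pi.smul_apply, smul_eq_mul, glue_12, hs, hsr, ← hα]
      ring
    rw [e, map_mul, ← ha]
    nlinarith

theorem eis_normSq_nat {x : ℂ} (hx : EisP x) : ∃ n : ℕ, Complex.normSq x = n := by
  obtain ⟨a, b, rfl⟩ := hx
  have h := eis_normSq a b
  push_cast at h
  refine ⟨(a ^ 2 - a * b + b ^ 2).toNat, ?_⟩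
  have h2 : (((a ^ 2 - a * b + b ^ 2).toNat : ℤ) : ℝ) = ((a ^ 2 - a * b + b ^ 2 : ℤ) : ℝ) := by
    rw [Int.toNat_of_nonneg (eis_nonneg a b)]
  rw [h]; push_cast at h2; linarith

theorem descent {G : Subgroup (V ≃ₗ[ℂ] V)} (hG : G ≤ AutL)
    (hl : ∀ r ∈ Lset, herm r r = -3 → r 12 = 1 → HasR G r) (n : ℕ) :
    ∀ r ∈ Lset, herm r r = -3 → Complex.normSq (r 12) = n → HasR G r := by
  induction n using Nat.strong_induction_on with
  | _ n ih =>
    intro r hr hn h12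
    rcases Nat.lt_trichotomy n 1 with h | h | h
    · exfalso
      have hn0 : n = 0 := by omega
      rw [hn0, Nat.cast_zero, Complex.normSq_eq_zero] at h12
      obtain ⟨m, hm, hm1⟩ := ip_leech_self hr.1
      change ip (lp r) (lp r) = _ at hm
      rw [herm_eq, h12, hm] at hn
      simp only [map_zero, zero_mul, mul_zero, add_zero] at hn
      apply hm1
      have : (m : ℂ) = ((1 : ℤ) : ℂ) := by push_cast; linear_combination -hn / 3
      exact_mod_cast this
    · rw [h, Nat.cast_one] at h12
      have hc : conj (r 12) * r 12 = 1 := by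
        rw [← Complex.normSq_eq_conj_mul_self, h12]; simp
      have e : r = r 12 • (conj (r 12) • r) := by
        rw [smul_smul, mul_comm, hc, one_smul]
      rw [e]
      apply HasR.unit _ h12
      apply hl
      · exact Lset_smul hr hr.2.1.conj
      · rw [herm_smul_left, herm_smul_right, hn, Complex.conj_conj]
        linear_combination -3 * hc
      · exact hc
    · obtain ⟨s, hs, hsn, hs12, μ, hμ, hlt⟩ := step hr hn (by rw [h12]; exact_mod_cast h)
      obtain ⟨g, hg, e⟩ := hl s hs hsn hs12
      have hs0 : herm s s ≠ 0 := by rw [hsn]; norm_num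
      have key : ∃ g' ∈ G, ∀ v, g' v = reflMap μ s v := by
        rcases hμ with rfl | rfl
        · exact ⟨g, hg, e⟩
        · refine ⟨g⁻¹, G.inv_mem hg, fun v => ?_⟩
          change g.symm v = _
          rw [LinearEquiv.symm_apply_eq, e, reflMap_comp ω_conj_mul hs0]
      obtain ⟨g', hg', e'⟩ := key
      apply HasR.of_conj hG hg'
      have hL : g' r ∈ Lset := ((hG hg').1 r).1 hr
      obtain ⟨m, hm⟩ := eis_normSq_nat hL.2.1
      refine ih m ?_ _ hL (by rw [(hG hg').2, hn]) hm
      rw [← e', hm, h12] at hlt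
      exact_mod_cast hlt

theorem stmt10_aux (bas : Fin 24 → Fin 12 → ℂ)
    (hspan : (Submodule.span ℤ (Set.range bas) : Set (Fin 12 → ℂ)) = Leech)
    (z : Fin 24 → ℂ) (hz : ∀ j, memT (bas j) (z j)) :
    Subgroup.closure (ReflAutos ({r1, r2} ∪
      ⋃ j : Fin 24, {Tmap (bas j) (z j) r1, Tmap (bas j) (z j) r2})) = RL := by
  set S : Set V := {r1, r2} ∪ ⋃ j : Fin 24, {Tmap (bas j) (z j) r1, Tmap (bas j) (z j) r2} with hS
  have hS1 : r1 ∈ S := Or.inl (Or.inl rfl)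
  have hS2 : r2 ∈ S := Or.inl (Or.inr rfl)
  have hS3 : ∀ j, Tmap (bas j) (z j) r1 ∈ S := fun j =>
    Or.inr (Set.mem_iUnion.2 ⟨j, Or.inl rfl⟩)
  have hS4 : ∀ j, Tmap (bas j) (z j) r2 ∈ S := fun j =>
    Or.inr (Set.mem_iUnion.2 ⟨j, Or.inr rfl⟩)
  have hroot : ∀ r ∈ S, r ∈ Lset ∧ herm r r = -3 := by
    rintro r (h | h)
    · rcases h with rfl | rfl
      · exact ⟨r1_mem, herm_r1⟩
      · exact ⟨r2_mem, herm_r2⟩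
    · obtain ⟨j, hj⟩ := Set.mem_iUnion.1 h
      obtain ⟨c, hc, hT, hiso⟩ := memT_Amap (hz j)
      rcases hj with rfl | rfl
      · rw [hT]
        exact ⟨Amap_Lset (hz j).1 hc r1_mem, by rw [Amap_herm hiso, herm_r1]⟩
      · rw [hT]
        exact ⟨Amap_Lset (hz j).1 hc r2_mem, by rw [Amap_herm hiso, herm_r2]⟩
  set G := Subgroup.closure (ReflAutos S) with hGdef
  have hG : G ≤ AutL := (Subgroup.closure_le _).2 fun g hg => hg.1
  have hR : ∀ r ∈ S, HasR G r := fun r hr => by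
    obtain ⟨h1, h2⟩ := hroot r hr
    exact ⟨phi r (by rw [h2]; norm_num), Subgroup.subset_closure ⟨phi_mem h1 h2, r, hr, fun v => rfl⟩,
      fun v => rfl⟩
  apply le_antisymm
  · apply Subgroup.closure_mono
    rintro g ⟨hg, r, hr, e⟩
    exact ⟨hg, r, isRoot_of (hroot r hr).1 (hroot r hr).2, e⟩
  · refine (Subgroup.closure_le _).2 ?_
    rintro g ⟨hg, r, hr, e⟩
    obtain ⟨n, hn⟩ := eis_normSq_nat hr.1.2.1
    have htr : ∀ l ∈ Leech, l ∈ TrG G := fun l hl =>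
      leech_trans bas hspan z hz (hR _ hS1) (hR _ hS2) (fun j => hR _ (hS3 j))
        (fun j => hR _ (hS4 j)) hl
    have := descent hG (fun r hr hn h12 => hasR_leech hG (hR _ hS1) (hR _ hS2) htr hr hn h12) n r
      hr.1 hr.2.1 hn
    exact this.mem e

end Descent

/-- For any `ℤ`-basis `λ₁,…,λ₂₄` of the complex Leech lattice `Λ` and any choices
`z_j` with `T_{λ_j,z_j} ∈ 𝕋`, the `ω`-reflections in the 50 roots
`r₁, r₂, T_{λ_j,z_j}(r₁), T_{λ_j,z_j}(r₂)` generate the reflection group `R(L)`. -/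
theorem stmt10 (bas : Fin 24 → Fin 12 → ℂ) (hbas : ∀ j, bas j ∈ Leech)
    (hind : LinearIndependent ℤ bas)
    (hspan : (Submodule.span ℤ (Set.range bas) : Set (Fin 12 → ℂ)) = Leech)
    (z : Fin 24 → ℂ) (hz : ∀ j, memT (bas j) (z j)) :
    Subgroup.closure (ReflAutos ({r1, r2} ∪
      ⋃ j : Fin 24, {Tmap (bas j) (z j) r1, Tmap (bas j) (z j) r2})) = RL := by
  exact stmt10_aux bas hspan z hz

end Bimonster
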